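/- arXiv:2212.06802 — 3 statements merged into one kernel-verified Lean document; each statement's English description precedes it below -/
import Mathlib

section
/- There exist constants C > 0 and δ > 0 such that the following holds for all integers r, s, k with r > s ≥ 1. Set ε = (r − s)/r. If s ≤ r − C·log r and k ≥ (C/ε)·log r, then R_{r,s}(k) ≥ exp(δ·k·(r−s)²/r). -/
/-- `HasSetColouringRamsey r s k n` says that every colouring assigning to each
edge of the complete graph on `n` vertices a set of `s` colours from `{1,…,r}`
contains a monochromatic clique of size `k`. -/
def HasSetColouringRamsey (r s k n : ℕ) : Prop :=
  ∀ χ : Fin n → Fin n → Finset (Fin r),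
    (∀ u v, χ u v = χ v u) →
    (∀ u v, u ≠ v → (χ u v).card = s) →
    ∃ (S : Finset (Fin n)) (i : Fin r), S.card = k ∧
      ∀ u ∈ S, ∀ v ∈ S, u ≠ v → i ∈ χ u v

/-- The set-colouring Ramsey number `R_{r,s}(k)`. -/
noncomputable def setRamsey (r s k : ℕ) : ℕ :=
  sInf {n | HasSetColouringRamsey r s k n}
theorem sc_ramsey_aux (r M : ℕ) : ∀ a : Fin r → ℕ, (∑ i, a i = M) → ∃ N : ℕ,
    ∀ (V : Type) (R : Fin r → V → V → Prop) (_ : ∀ i u v, R i u v → R i v u)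
      (_ : ∀ u v, u ≠ v → ∃ i, R i u v) (A : Finset V), N ≤ A.card →
      ∃ (S : Finset V) (i : Fin r), S ⊆ A ∧ S.card = a i ∧
        ∀ u ∈ S, ∀ v ∈ S, u ≠ v → R i u v := by
  classical
  induction M with
  | zero =>
    intro a ha
    refine ⟨2, fun V R hs hc A hA => ?_⟩
    obtain ⟨u, hu, v, hv, huv⟩ := Finset.one_lt_card.1 (by omega : 1 < A.card)
    obtain ⟨i, hi⟩ := hc u v huv
    refine ⟨∅, i, by simp, ?_, by simp⟩
    have := (Finset.sum_eq_zero_iff.1 ha) i (Finset.mem_univ i)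
    simp [this]
  | succ M ih =>
    intro a ha
    by_cases h0 : ∃ i, a i = 0
    · obtain ⟨i, hi⟩ := h0
      exact ⟨0, fun V R hs hc A hA => ⟨∅, i, by simp, by simp [hi], by simp⟩⟩
    push Not at h0
    have key : ∀ i, ∑ j, (Function.update a i (a i - 1)) j = M := by
      intro i
      rw [Finset.sum_update_of_mem (Finset.mem_univ i)]
      have := Finset.add_sum_erase Finset.univ a (Finset.mem_univ i)
      rw [← Finset.erase_eq]
      have := h0 i
      omega
    choose N hN using fun i => ih _ (key i)
    refine ⟨∑ i, N i + 2, fun V R hs hc A hA => ?_⟩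
    have hne : A.Nonempty := Finset.card_pos.1 (by omega)
    obtain ⟨v, hv⟩ := hne
    have : ∃ i, N i ≤ ((A.erase v).filter (fun u => R i u v)).card := by
      by_contra hcon
      push Not at hcon
      have h1 : A.erase v ⊆ Finset.univ.biUnion
          (fun i : Fin r => (A.erase v).filter (fun u => R i u v)) := by
        intro u hu
        obtain ⟨i, hi⟩ := hc u v (Finset.ne_of_mem_erase hu)
        simp only [Finset.mem_biUnion, Finset.mem_filter]
        exact ⟨i, Finset.mem_univ i, hu, hi⟩
      have h2 := (Finset.card_le_card h1).trans Finset.card_biUnion_le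
      have h3 := h2.trans (Finset.sum_le_sum (fun i _ => (hcon i).le))
      rw [Finset.card_erase_of_mem hv] at h3
      omega
    obtain ⟨i, hi⟩ := this
    obtain ⟨S, j, hS, hcard, hcl⟩ := hN i V R hs hc _ hi
    by_cases hij : j = i
    · subst hij
      have hvS : v ∉ S := fun h => by simpa using hS h
      refine ⟨insert v S, j, ?_, ?_, ?_⟩
      · intro u hu
        rcases Finset.mem_insert.1 hu with rfl | hu
        · exact hv
        · exact Finset.mem_of_mem_erase (Finset.mem_filter.1 (hS hu)).1
      · rw [Finset.card_insert_of_notMem hvS, hcard]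
        have := h0 j
        simp; omega
      · intro u hu w hw huw
        rcases Finset.mem_insert.1 hu with hu' | hu'
        · rcases Finset.mem_insert.1 hw with hw' | hw'
          · exact absurd (hu'.trans hw'.symm) huw
          · rw [hu']
            exact hs _ _ _ (Finset.mem_filter.1 (hS hw')).2
        · rcases Finset.mem_insert.1 hw with hw' | hw'
          · rw [hw']
            exact (Finset.mem_filter.1 (hS hu')).2
          · exact hcl u hu' w hw' huw
    · refine ⟨S, j, ?_, ?_, hcl⟩
      · exact fun u hu => Finset.mem_of_mem_erase (Finset.mem_filter.1 (hS hu)).1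
      · rw [hcard, Function.update_of_ne hij]

theorem sc_ramsey_nonempty (r s k : ℕ) (hs : 1 ≤ s) : ∃ n, HasSetColouringRamsey r s k n := by
  obtain ⟨N, hN⟩ := sc_ramsey_aux r _ (fun _ => k) rfl
  refine ⟨N, fun χ hsym hcard => ?_⟩
  obtain ⟨S, i, -, h1, h2⟩ := hN (Fin N) (fun i u v => i ∈ χ u v)
    (fun i u v h => by rw [hsym]; exact h) (fun u v huv => by
      have : (χ u v).Nonempty := Finset.card_pos.1 (by rw [hcard u v huv]; omega)
      exact this) Finset.univ (by simp)
  exact ⟨S, i, h1, h2⟩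

theorem sc_sum_update {α β : Type*} [Fintype α] [DecidableEq α] [Fintype β] (a : α)
    (H : (α → β) → ℝ) :
    (Fintype.card β : ℝ) * ∑ f, H f = ∑ f, ∑ x, H (Function.update f a x) := by
  classical
  let e : (α → β) × β ≃ (α → β) × β :=
    { toFun := fun p => (Function.update p.1 a p.2, p.1 a)
      invFun := fun p => (Function.update p.1 a p.2, p.1 a)
      left_inv := fun p => by simp
      right_inv := fun p => by simp }
  rw [← Fintype.sum_prod_type' (fun f x => H (Function.update f a x))]
  have := Equiv.sum_comp e (fun p => H p.1)
  have h2 : ∑ p : (α → β) × β, H (Function.update p.1 a p.2) = ∑ p : (α → β) × β, H p.1 := this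
  rw [h2, Fintype.sum_prod_type, Finset.mul_sum]
  simp

/-- moment generating function of the number of zeros -/
theorem sc_mgf_zeros {β : Type*} [Fintype β] [DecidableEq β] (q : ℕ) [NeZero q] (l : ℝ)
    (A : Finset β) :
    ∑ g : β → Fin q, Real.exp (l * (A.filter (fun a => g a = 0)).card)
      ≤ (q : ℝ) ^ (Fintype.card β) * Real.exp ((Real.exp l - 1) * A.card / q) := by
  have hq : (0 : ℝ) < q := by exact_mod_cast Nat.pos_of_ne_zero (NeZero.ne q)
  induction A using Finset.induction_on with
  | empty => simp
  | insert a A ha ih =>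
    have h1 := sc_sum_update a (fun g : β → Fin q =>
      Real.exp (l * ((insert a A).filter (fun a => g a = 0)).card))
    have h2 : ∀ (f : β → Fin q) (x : Fin q),
        Real.exp (l * ((insert a A).filter (fun b => Function.update f a x b = 0)).card)
        = Real.exp (l * (A.filter (fun a => f a = 0)).card) *
          (1 + if x = 0 then (Real.exp l - 1) else 0) := by
      intro f x
      have h3 : A.filter (fun b => Function.update f a x b = 0) = A.filter (fun b => f b = 0) := by
        apply Finset.filter_congr
        intro b hb
        rw [Function.update_of_ne (fun h : b = a => ha (h ▸ hb))]
      rw [Finset.filter_insert, h3]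
      by_cases hx : x = 0
      · have : a ∉ A.filter (fun b => f b = 0) := fun h => ha (Finset.mem_filter.1 h).1
        simp only [Function.update_self, hx, if_true, Finset.card_insert_of_notMem this]
        push_cast
        rw [mul_add, Real.exp_add]; ring_nf
      · simp [hx]
    simp only [h2] at h1
    have h4 : ∀ f : β → Fin q, ∑ x : Fin q, Real.exp (l * (A.filter (fun a => f a = 0)).card) *
          (1 + if x = 0 then (Real.exp l - 1) else 0) =
          Real.exp (l * (A.filter (fun a => f a = 0)).card) * (q + (Real.exp l - 1)) := by
      intro f
      rw [← Finset.mul_sum, Finset.sum_add_distrib]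
      simp
    simp only [h4] at h1
    rw [← Finset.sum_mul, Fintype.card_fin] at h1
    have h5 : (q : ℝ) + (Real.exp l - 1) ≤ q * Real.exp ((Real.exp l - 1) / q) := by
      have := Real.add_one_le_exp ((Real.exp l - 1) / q)
      calc (q : ℝ) + (Real.exp l - 1) = q * ((Real.exp l - 1) / q + 1) := by field_simp; ring
        _ ≤ _ := by gcongr
    have h6 : 0 ≤ (q : ℝ) + (Real.exp l - 1) := by
      have : (1 : ℝ) ≤ q := by exact_mod_cast Nat.pos_of_ne_zero (NeZero.ne q)
      have := Real.exp_pos l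
      linarith
    rw [Finset.card_insert_of_notMem ha]
    refine le_of_mul_le_mul_left ?_ hq
    rw [h1]
    calc _ ≤ ((q : ℝ) ^ (Fintype.card β) * Real.exp ((Real.exp l - 1) * A.card / q)) *
          (q * Real.exp ((Real.exp l - 1) / q)) := by gcongr
      _ = q * (q ^ (Fintype.card β) * (Real.exp ((Real.exp l - 1) * A.card / q) *
          Real.exp ((Real.exp l - 1) / q))) := by ring
      _ = _ := by
        rw [← Real.exp_add]; congr 3; push_cast; ring

/-- moment generating function of the number of collisions -/
theorem sc_mgf_coll {α : Type*} [Fintype α] [DecidableEq α] (m : ℕ) (hm : 0 < m) (l : ℝ)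
    (W : Finset α) :
    ∑ f : α → Fin m, Real.exp (l * ((W.card : ℝ) - (W.image f).card))
      ≤ (m : ℝ) ^ (Fintype.card α) * Real.exp (W.card * (W.card * Real.exp l / m)) := by
  have hm' : (0 : ℝ) < m := by exact_mod_cast hm
  suffices H : ∀ w : ℕ, W.card ≤ w → ∑ f : α → Fin m, Real.exp (l * ((W.card : ℝ) - (W.image f).card))
      ≤ (m : ℝ) ^ (Fintype.card α) * Real.exp (W.card * (w * Real.exp l / m)) from H _ le_rfl
  intro w
  induction W using Finset.induction_on with
  | empty => simp
  | insert a W ha ih =>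
    intro hw
    rw [Finset.card_insert_of_notMem ha] at hw
    have ih := ih (by omega)
    have h1 := sc_sum_update a (fun f : α → Fin m =>
      Real.exp (l * (((insert a W).card : ℝ) - ((insert a W).image f).card)))
    have h2 : ∀ (f : α → Fin m) (x : Fin m),
        Real.exp (l * (((insert a W).card : ℝ) - ((insert a W).image (Function.update f a x)).card))
        ≤ Real.exp (l * ((W.card : ℝ) - (W.image f).card)) *
          (1 + if x ∈ W.image f then Real.exp l else 0) := by
      intro f x
      have h3 : W.image (Function.update f a x) = W.image f := by
        apply Finset.image_congr
        intro b hb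
        exact Function.update_of_ne (fun h : b = a => ha (h ▸ hb)) _ _
      rw [Finset.image_insert, h3, Finset.card_insert_of_notMem ha]
      simp only [Function.update_self]
      by_cases hx : x ∈ W.image f
      · rw [Finset.insert_eq_of_mem hx, if_pos hx]
        push_cast
        have : l * ((W.card : ℝ) + 1 - (W.image f).card) =
          l * ((W.card : ℝ) - (W.image f).card) + l := by ring
        rw [this, Real.exp_add]
        gcongr; linarith
      · rw [Finset.card_insert_of_notMem hx, if_neg hx]
        push_cast
        rw [add_zero, mul_one]
        apply le_of_eq; congr 1; ring
    have h4 : ∀ f : α → Fin m, ∑ x : Fin m, Real.exp (l * ((W.card : ℝ) - (W.image f).card)) *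
          (1 + if x ∈ W.image f then Real.exp l else 0) ≤
          Real.exp (l * ((W.card : ℝ) - (W.image f).card)) * (m + w * Real.exp l) := by
      intro f
      rw [← Finset.mul_sum, Finset.sum_add_distrib]
      gcongr
      · simp
      · rw [← Finset.sum_filter, Finset.filter_mem_eq_inter, Finset.univ_inter, Finset.sum_const, nsmul_eq_mul]
        gcongr
        exact Finset.card_image_le.trans (by omega)
    have h5 : (m : ℝ) + w * Real.exp l ≤ m * Real.exp (w * Real.exp l / m) := by
      have := Real.add_one_le_exp (w * Real.exp l / m)
      calc (m : ℝ) + w * Real.exp l = m * (w * Real.exp l / m + 1) := by field_simp; ring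
        _ ≤ _ := by gcongr
    refine le_of_mul_le_mul_left ?_ hm'
    rw [Fintype.card_fin] at h1
    rw [h1]
    calc _ ≤ ∑ f : α → Fin m, Real.exp (l * ((W.card : ℝ) - (W.image f).card)) * (m + w * Real.exp l) :=
          Finset.sum_le_sum fun f _ => (Finset.sum_le_sum fun x _ => h2 f x).trans (h4 f)
      _ ≤ ((m : ℝ) ^ (Fintype.card α) * Real.exp (W.card * (w * Real.exp l / m))) *
          (m * Real.exp (w * Real.exp l / m)) := by
            rw [← Finset.sum_mul]; gcongr
      _ = m * (m ^ (Fintype.card α) * (Real.exp (W.card * (w * Real.exp l / m)) *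
          Real.exp (w * Real.exp l / m))) := by ring
      _ = _ := by
        rw [← Real.exp_add, Finset.card_insert_of_notMem ha]; congr 3; push_cast; ring

theorem sc_exists_lt {Ω : Type*} [Fintype Ω] (f : Ω → ℝ)
    (h : ∑ w, f w < Fintype.card Ω) : ∃ w, f w < 1 := by
  by_contra hcon
  push Not at hcon
  have := Finset.sum_le_sum (fun w (_ : w ∈ Finset.univ) => hcon w)
  simp at this
  linarith

theorem sc_code (n m r k d : ℕ) (hm : 0 < m) (l : ℝ) (hl : 0 < l)
    (h1 : (k : ℝ) * r * Real.exp l / m ≤ 1) (h2 : (n : ℝ) * Real.exp (1 - l * d / 8) ≤ 1 / 4) :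
    ∃ φ : Fin r → Fin n → Fin m, ∀ W : Finset (Fin n), W.Nonempty → W.card ≤ k →
      ∑ i, ((W.card : ℝ) - (W.image (φ i)).card) ≤ d / 8 * W.card := by
  classical
  have hm' : (0 : ℝ) < m := by exact_mod_cast hm
  set x : ℝ := Real.exp (1 - l * d / 8) with hx
  have hx0 : 0 < x := Real.exp_pos _
  let Ws : Finset (Finset (Fin n)) := Finset.univ.filter (fun W => W.Nonempty ∧ W.card ≤ k)
  obtain ⟨φ, hφ⟩ := sc_exists_lt (Ω := Fin r → Fin n → Fin m)
    (fun φ => ∑ W ∈ Ws, Real.exp (l * (∑ i, ((W.card : ℝ) - (W.image (φ i)).card) - d / 8 * W.card)))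
    (by
      rw [Finset.sum_comm]
      have hW : ∀ W ∈ Ws, ∑ φ : Fin r → Fin n → Fin m,
          Real.exp (l * (∑ i, ((W.card : ℝ) - (W.image (φ i)).card) - d / 8 * W.card))
          ≤ ((m : ℝ) ^ n) ^ r * x ^ W.card := by
        intro W hW
        have hWk : W.card ≤ k := (Finset.mem_filter.1 hW).2.2
        have e1 : ∀ φ : Fin r → Fin n → Fin m,
            Real.exp (l * (∑ i, ((W.card : ℝ) - (W.image (φ i)).card) - d / 8 * W.card))
            = Real.exp (- (l * d / 8 * W.card)) *
              ∏ i, Real.exp (l * ((W.card : ℝ) - (W.image (φ i)).card)) := by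
          intro φ
          rw [← Real.exp_sum, ← Real.exp_add, ← Finset.mul_sum]
          congr 1; ring
        simp only [e1]
        rw [← Finset.mul_sum]
        have e2 : ∑ φ : Fin r → Fin n → Fin m,
            ∏ i, Real.exp (l * ((W.card : ℝ) - (W.image (φ i)).card))
            = (∑ f : Fin n → Fin m, Real.exp (l * ((W.card : ℝ) - (W.image f).card))) ^ r := by
          have := Finset.prod_univ_sum (fun _ : Fin r => (Finset.univ : Finset (Fin n → Fin m)))
            (fun _ f => Real.exp (l * ((W.card : ℝ) - (W.image f).card)))
          rw [Fintype.piFinset_univ] at this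
          rw [← this]; simp
        rw [e2]
        have e3 := sc_mgf_coll m hm l W
        rw [Fintype.card_fin] at e3
        have e4 : (∑ f : Fin n → Fin m, Real.exp (l * ((W.card : ℝ) - (W.image f).card))) ^ r
            ≤ ((m : ℝ) ^ n * Real.exp (W.card * (W.card * Real.exp l / m))) ^ r :=
          pow_le_pow_left₀ (Finset.sum_nonneg fun _ _ => (Real.exp_pos _).le) e3 r
        calc _ ≤ Real.exp (- (l * d / 8 * W.card)) *
              ((m : ℝ) ^ n * Real.exp (W.card * (W.card * Real.exp l / m))) ^ r := by gcongr
          _ = ((m : ℝ) ^ n) ^ r * Real.exp (- (l * d / 8 * W.card) +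
                r * (W.card * (W.card * Real.exp l / m))) := by
              rw [mul_pow, ← Real.exp_nat_mul, Real.exp_add]; ring
          _ ≤ _ := by
            rw [hx, ← Real.exp_nat_mul]
            gcongr
            have : (W.card : ℝ) * r * Real.exp l / m ≤ 1 := by
              refine le_trans ?_ h1
              gcongr
            have h3 : (W.card : ℝ) * (W.card * r * Real.exp l / m) ≤ W.card * 1 := by gcongr
            have h4 : (r : ℝ) * (W.card * (W.card * Real.exp l / m)) =
              (W.card : ℝ) * (W.card * r * Real.exp l / m) := by ring
            rw [h4]; linarith
      refine lt_of_le_of_lt (Finset.sum_le_sum hW) ?_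
      rw [← Finset.mul_sum]
      have hcard : (Fintype.card (Fin r → Fin n → Fin m) : ℝ) = ((m : ℝ) ^ n) ^ r * 1 := by
        simp
      rw [hcard]
      apply mul_lt_mul_of_pos_left _ (by positivity)
      have h5 : ∑ W ∈ Ws, x ^ W.card ≤ ∑ W ∈ Finset.univ.erase (∅ : Finset (Fin n)), x ^ W.card := by
        apply Finset.sum_le_sum_of_subset_of_nonneg
        · intro W hW
          simp only [Finset.mem_erase, Finset.mem_univ, and_true]
          exact (Finset.mem_filter.1 hW).2.1.ne_empty
        · intros; positivity
      have h6 := Finset.add_sum_erase Finset.univ (fun W : Finset (Fin n) => x ^ W.card)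
        (Finset.mem_univ ∅)
      have h7 := Fin.sum_pow_mul_eq_add_pow (n := n) x 1
      simp only [one_pow, mul_one] at h7
      rw [h7] at h6
      have h8 : (x + 1) ^ n ≤ Real.exp (1 / 4) := by
        calc (x + 1) ^ n ≤ (Real.exp x) ^ n := by gcongr; exact Real.add_one_le_exp x
          _ = Real.exp (n * x) := by rw [← Real.exp_nat_mul]
          _ ≤ _ := by gcongr
      have h9 : Real.exp (1 / 4) < 2 := by
        have := Real.exp_bound_div_one_sub_of_interval (x := 1 / 4) (by norm_num) (by norm_num)
        linarith
      simp only [Finset.card_empty, pow_zero] at h6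
      linarith)
  refine ⟨φ, fun W hW hWk => ?_⟩
  have hmem : W ∈ Ws := Finset.mem_filter.2 ⟨Finset.mem_univ _, hW, hWk⟩
  have := (Finset.single_le_sum (fun W _ => (Real.exp_pos (l * (∑ i, ((W.card : ℝ) -
    (W.image (φ i)).card) - d / 8 * W.card))).le) hmem).trans_lt hφ
  rw [Real.exp_lt_one_iff] at this
  nlinarith

/-- unordered pairs of distinct elements of `S` -/
def scPairs {α : Type*} [DecidableEq α] (S : Finset α) : Finset (Sym2 α) :=
  S.offDiag.image Sym2.mk.uncurry

theorem sc_mem_pairs {α : Type*} [DecidableEq α] (S : Finset α) (u v : α) :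
    s(u, v) ∈ scPairs S ↔ u ∈ S ∧ v ∈ S ∧ u ≠ v := by
  unfold scPairs
  simp only [Finset.mem_image, Finset.mem_offDiag, Prod.exists, Function.uncurry_apply_pair]
  constructor
  · rintro ⟨a, b, ⟨ha, hb, hab⟩, h⟩
    rcases Sym2.eq_iff.1 h with ⟨rfl, rfl⟩ | ⟨rfl, rfl⟩
    · exact ⟨ha, hb, hab⟩
    · exact ⟨hb, ha, hab.symm⟩
  · rintro ⟨h1, h2, h3⟩
    exact ⟨u, v, ⟨h1, h2, h3⟩, rfl⟩

theorem sc_card_pairs {α : Type*} [DecidableEq α] (S : Finset α) :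
    (scPairs S).card = S.card.choose 2 := Sym2.card_image_offDiag S

theorem sc_mem_pairs_sub {α : Type*} [DecidableEq α] (S : Finset α) (e : Sym2 α)
    (he : e ∈ scPairs S) : ¬ e.IsDiag ∧ ∀ v ∈ e, v ∈ S := by
  induction e using Sym2.ind with
  | _ u v =>
    rw [sc_mem_pairs] at he
    refine ⟨by simpa using he.2.2, ?_⟩
    intro w hw
    rcases Sym2.mem_iff.1 hw with rfl | rfl
    · exact he.1
    · exact he.2.1

theorem sc_reps (n m r k d : ℕ) (hn : 0 < n) (φ : Fin r → Fin n → Fin m)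
    (hφ : ∀ W : Finset (Fin n), W.Nonempty → W.card ≤ k →
      ∑ i, ((W.card : ℝ) - (W.image (φ i)).card) ≤ d / 8 * W.card)
    (S : Finset (Fin n)) (hS : S.card ≤ k) (F : Finset (Sym2 (Fin n))) (hF : F ⊆ scPairs S) :
    ∃ F' : Fin r → Finset (Sym2 (Fin n)), (∀ i, F' i ⊆ F) ∧
      (∀ i, Set.InjOn (Sym2.map (φ i)) (F' i : Set (Sym2 (Fin n)))) ∧
      (∀ i, ∀ e ∈ F' i, ¬ (Sym2.map (φ i) e).IsDiag) ∧
      ∑ i, ((F.card : ℝ) - (F' i).card) ≤ d / 4 * F.card := by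
  classical
  let deg : Fin n → ℕ := fun v => (F.filter (fun e => v ∈ e)).card
  -- representatives
  have hrep : ∀ i : Fin r, ∀ v : Fin n, ∃ u : Fin n, v ∈ S →
      u ∈ S ∧ φ i u = φ i v ∧ ∀ w ∈ S, φ i w = φ i v → deg w ≤ deg u := by
    intro i v
    by_cases hv : v ∈ S
    · obtain ⟨u, hu, hmax⟩ := Finset.exists_max_image (S.filter (fun w => φ i w = φ i v)) deg
        ⟨v, by simp [hv]⟩
      rw [Finset.mem_filter] at hu
      exact ⟨u, fun _ => ⟨hu.1, hu.2, fun w hw h => hmax w (Finset.mem_filter.2 ⟨hw, h⟩)⟩⟩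
    · exact ⟨v, fun h => absurd h hv⟩
  have hrep' : ∀ i : Fin r, ∃ ρ : Fin m → Fin n, ∀ v ∈ S,
      ρ (φ i v) ∈ S ∧ φ i (ρ (φ i v)) = φ i v ∧ deg v ≤ deg (ρ (φ i v)) := by
    intro i
    have : ∀ y : Fin m, ∃ u : Fin n, ∀ v ∈ S, φ i v = y →
        u ∈ S ∧ φ i u = y ∧ deg v ≤ deg u := by
      intro y
      by_cases hy : ∃ v ∈ S, φ i v = y
      · obtain ⟨v, hv, rfl⟩ := hy
        obtain ⟨u, hu⟩ := hrep i v
        exact ⟨u, fun w hw hwv => ⟨(hu hv).1, (hu hv).2.1, (hu hv).2.2 w hw hwv⟩⟩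
      · exact ⟨⟨0, hn⟩, fun w hw h => absurd ⟨w, hw, h⟩ hy⟩
    choose ρ hρ using this
    exact ⟨ρ, fun v hv => hρ _ v hv rfl⟩
  choose ρ hρ using hrep'
  let N : Fin r → Finset (Fin n) := fun i => S.filter (fun v => ρ i (φ i v) ≠ v)
  let F' : Fin r → Finset (Sym2 (Fin n)) := fun i => F.filter (fun e => ∀ v ∈ e, ρ i (φ i v) = v)
  have hinv : ∀ i, ∀ e ∈ F' i, Sym2.map (ρ i) (Sym2.map (φ i) e) = e := by
    intro i e he
    have h := (Finset.mem_filter.1 he).2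
    rw [Sym2.map_map]
    have := Sym2.map_congr (f := ρ i ∘ φ i) (g := id) (s := e) h
    rw [this, Sym2.map_id]; rfl
  have hsum : ∀ i, (F.card : ℝ) - (F' i).card ≤ ∑ v ∈ N i, (deg v : ℝ) := by
    intro i
    have h1 : F ⊆ F' i ∪ (N i).biUnion (fun v => F.filter (fun e => v ∈ e)) := by
      intro e he
      by_cases h : ∀ v ∈ e, ρ i (φ i v) = v
      · exact Finset.mem_union_left _ (Finset.mem_filter.2 ⟨he, h⟩)
      · push Not at h
        obtain ⟨v, hv, hne⟩ := h
        refine Finset.mem_union_right _ (Finset.mem_biUnion.2 ⟨v, ?_, Finset.mem_filter.2 ⟨he, hv⟩⟩)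
        exact Finset.mem_filter.2 ⟨(sc_mem_pairs_sub S e (hF he)).2 v hv, hne⟩
    have h2 := (Finset.card_le_card h1).trans ((Finset.card_union_le _ _).trans
      (Nat.add_le_add_left Finset.card_biUnion_le _))
    have h3 : (F.card : ℝ) ≤ (F' i).card + ∑ v ∈ N i, (deg v : ℝ) := by exact_mod_cast h2
    linarith
  let W : ℕ → Finset (Fin n) := fun x => S.filter (fun v => x < deg v)
  have hdegle : ∀ v, deg v ≤ F.card := fun v => Finset.card_filter_le _ _
  have hlayer : ∀ v, (deg v : ℝ) = ∑ x ∈ Finset.range F.card, if x < deg v then (1 : ℝ) else 0 := by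
    intro v
    rw [← Finset.sum_filter]
    have : (Finset.range F.card).filter (fun x => x < deg v) = Finset.range (deg v) := by
      ext x; have := hdegle v; simp; omega
    rw [this]; simp
  have hcake : ∀ T : Finset (Fin n), ∑ v ∈ T, (deg v : ℝ) =
      ∑ x ∈ Finset.range F.card, ((T.filter (fun v => x < deg v)).card : ℝ) := by
    intro T
    simp_rw [hlayer]
    rw [Finset.sum_comm]
    apply Finset.sum_congr rfl
    intro x _
    rw [← Finset.sum_filter]
    simp
  have hNW : ∀ i x, (((N i).filter (fun v => x < deg v)).card : ℝ)
      ≤ ((W x).card : ℝ) - ((W x).image (φ i)).card := by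
    intro i x
    have h1 : (W x).image (φ i) ⊆ ((W x).filter (fun v => ρ i (φ i v) = v)).image (φ i) := by
      intro y hy
      obtain ⟨v, hv, rfl⟩ := Finset.mem_image.1 hy
      have hv' := Finset.mem_filter.1 hv
      obtain ⟨a, b, c⟩ := hρ i v hv'.1
      refine Finset.mem_image.2 ⟨ρ i (φ i v), ?_, b⟩
      refine Finset.mem_filter.2 ⟨Finset.mem_filter.2 ⟨a, by omega⟩, by rw [b]⟩
    have h2 := (Finset.card_le_card h1).trans Finset.card_image_le
    have h3 := Finset.card_filter_add_card_filter_not (s := W x) (fun v => ρ i (φ i v) = v)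
    have h4 : (N i).filter (fun v => x < deg v) = (W x).filter (fun v => ¬ ρ i (φ i v) = v) := by
      ext v; simp only [N, W, Finset.mem_filter]; tauto
    rw [h4]
    have h5 : ((W x).image (φ i)).card + ((W x).filter (fun v => ¬ ρ i (φ i v) = v)).card
      ≤ (W x).card := by omega
    have h6 : (((W x).image (φ i)).card : ℝ) + ((W x).filter (fun v => ¬ ρ i (φ i v) = v)).card
      ≤ (W x).card := by exact_mod_cast h5
    linarith
  have hdeg : ∑ v ∈ S, (deg v : ℝ) ≤ 2 * F.card := by
    have h1 : ∑ v ∈ S, deg v = ∑ e ∈ F, (S.filter (fun v => v ∈ e)).card :=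
      Finset.sum_card_bipartiteAbove_eq_sum_card_bipartiteBelow (fun v e => v ∈ e)
    have h2 : ∑ e ∈ F, (S.filter (fun v => v ∈ e)).card ≤ ∑ e ∈ F, 2 := by
      apply Finset.sum_le_sum
      intro e _
      induction e using Sym2.ind with
      | _ u v =>
        calc (S.filter (fun w => w ∈ s(u, v))).card ≤ ({u, v} : Finset (Fin n)).card := by
              apply Finset.card_le_card
              intro w hw
              simpa using (Finset.mem_filter.1 hw).2
          _ ≤ 2 := Finset.card_le_two
    have h3 : ∑ v ∈ S, deg v ≤ 2 * F.card := by
      rw [h1]; refine h2.trans ?_; simp [mul_comm]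
    exact_mod_cast h3
  refine ⟨F', fun i => Finset.filter_subset _ _, ?_, ?_, ?_⟩
  · intro i e he e' he' h
    rw [← hinv i e he, ← hinv i e' he', h]
  · intro i e he hd
    have h1 := hinv i e he
    have h2 := (sc_mem_pairs_sub S e (hF (Finset.mem_filter.1 he).1)).1
    rw [← h1] at h2
    exact h2 (by
      generalize Sym2.map (φ i) e = f at hd
      induction f using Sym2.ind with
      | _ u v => simp at hd; simp [hd])
  · calc ∑ i, ((F.card : ℝ) - (F' i).card) ≤ ∑ i, ∑ v ∈ N i, (deg v : ℝ) :=
          Finset.sum_le_sum fun i _ => hsum i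
      _ = ∑ i, ∑ x ∈ Finset.range F.card, (((N i).filter (fun v => x < deg v)).card : ℝ) := by
          simp only [hcake]
      _ ≤ ∑ i, ∑ x ∈ Finset.range F.card, (((W x).card : ℝ) - ((W x).image (φ i)).card) :=
          Finset.sum_le_sum fun i _ => Finset.sum_le_sum fun x _ => hNW i x
      _ = ∑ x ∈ Finset.range F.card, ∑ i, (((W x).card : ℝ) - ((W x).image (φ i)).card) :=
          Finset.sum_comm
      _ ≤ ∑ x ∈ Finset.range F.card, (d / 8 * (W x).card : ℝ) := by
          apply Finset.sum_le_sum
          intro x _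
          by_cases hne : (W x).Nonempty
          · exact hφ _ hne ((Finset.card_filter_le _ _).trans hS)
          · rw [Finset.not_nonempty_iff_eq_empty] at hne
            simp [hne]
      _ = d / 8 * ∑ v ∈ S, (deg v : ℝ) := by rw [hcake, Finset.mul_sum]
      _ ≤ d / 8 * (2 * F.card) := by gcongr
      _ = _ := by ring

set_option maxHeartbeats 1000000 in
theorem sc_graph (n m r k d j q : ℕ) [NeZero q] (x : ℝ)
    (AF : Finset (Sym2 (Fin n)) → Finset (Fin r × Sym2 (Fin m)))
    (hAF : ∀ S : Finset (Fin n), S.card = k → ∀ F ∈ (scPairs S).powersetCard j,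
      (AF F).card ≤ r * j)
    (hB : (n : ℝ) ^ k * ((k.choose 2).choose j : ℝ) *
      Real.exp (-(9 / 4) * d * j + 25 * (r * j) / q) ≤ 1 / 4)
    (hC : (r : ℝ) * m ^ k * Real.exp (x - (k.choose 2 : ℝ) / (2 * q)) ≤ 1 / 4) :
    ∃ G : Fin r × Sym2 (Fin m) → Fin q,
      (∀ S : Finset (Fin n), S.card = k → ∀ F ∈ (scPairs S).powersetCard j,
        (((AF F).filter (fun a => G a = 0)).card : ℝ) < 3 / 4 * d * j) ∧
      (∀ (i : Fin r) (T : Finset (Fin m)), T.card = k →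
        x < ((scPairs T).filter (fun f => G (i, f) = 0)).card) := by
  classical
  have hq : (0 : ℝ) < q := by exact_mod_cast Nat.pos_of_ne_zero (NeZero.ne q)
  let Q : ℝ := (q : ℝ) ^ (Fintype.card (Fin r × Sym2 (Fin m)))
  have hQ : 0 < Q := by positivity
  let AT : Fin r → Finset (Fin m) → Finset (Fin r × Sym2 (Fin m)) :=
    fun i T => (scPairs T).map ⟨fun f => (i, f), fun a b h => (Prod.mk.inj h).2⟩
  have hAT : ∀ (G : Fin r × Sym2 (Fin m) → Fin q) i T, ((AT i T).filter (fun a => G a = 0)).card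
      = ((scPairs T).filter (fun f => G (i, f) = 0)).card := by
    intro G i T
    simp only [AT]
    rw [Finset.filter_map, Finset.card_map]
    rfl
  obtain ⟨G, hG⟩ := sc_exists_lt (Ω := Fin r × Sym2 (Fin m) → Fin q)
    (fun G => (∑ S ∈ (Finset.univ : Finset (Fin n)).powersetCard k,
        ∑ F ∈ (scPairs S).powersetCard j,
          Real.exp (3 * (((AF F).filter (fun a => G a = 0)).card : ℝ) - 9 / 4 * d * j)) +
      ∑ i : Fin r, ∑ T ∈ (Finset.univ : Finset (Fin m)).powersetCard k,
          Real.exp (x + (-1) * (((AT i T).filter (fun a => G a = 0)).card : ℝ)))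
    (by
      rw [Finset.sum_add_distrib]
      have hcard : (Fintype.card (Fin r × Sym2 (Fin m) → Fin q) : ℝ) = Q := by
        simp [Q]
      rw [hcard]
      have he3 : Real.exp 3 - 1 ≤ 25 := by
        have h1 : Real.exp 3 = Real.exp 1 ^ 3 := by rw [← Real.exp_nat_mul]; norm_num
        have h2 := Real.exp_one_lt_d9
        have h3 : Real.exp 1 ^ 3 ≤ (2.72 : ℝ) ^ 3 := by
          gcongr; linarith
        rw [h1]; norm_num at h3 ⊢; linarith
      have hem1 : Real.exp (-1) - 1 ≤ - (1 / 2) := by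
        have h1 := Real.exp_one_gt_d9
        rw [Real.exp_neg]
        have : (Real.exp 1)⁻¹ ≤ (2 : ℝ)⁻¹ := by gcongr; linarith
        linarith
      have B1 : ∑ G : Fin r × Sym2 (Fin m) → Fin q,
          ∑ S ∈ (Finset.univ : Finset (Fin n)).powersetCard k,
          ∑ F ∈ (scPairs S).powersetCard j,
          Real.exp (3 * (((AF F).filter (fun a => G a = 0)).card : ℝ) - 9 / 4 * d * j)
          ≤ Q * (1 / 4) := by
        rw [Finset.sum_comm]
        have b1 : ∀ S ∈ (Finset.univ : Finset (Fin n)).powersetCard k,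
            ∑ G : Fin r × Sym2 (Fin m) → Fin q, ∑ F ∈ (scPairs S).powersetCard j,
            Real.exp (3 * (((AF F).filter (fun a => G a = 0)).card : ℝ) - 9 / 4 * d * j)
            ≤ ((k.choose 2).choose j : ℝ) *
              (Q * Real.exp (-(9 / 4) * d * j + 25 * (r * j) / q)) := by
          intro S hS
          have hS' := (Finset.mem_powersetCard.1 hS).2
          rw [Finset.sum_comm]
          have b2 : ∀ F ∈ (scPairs S).powersetCard j, ∑ G : Fin r × Sym2 (Fin m) → Fin q,
              Real.exp (3 * (((AF F).filter (fun a => G a = 0)).card : ℝ) - 9 / 4 * d * j)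
              ≤ Q * Real.exp (-(9 / 4) * d * j + 25 * (r * j) / q) := by
            intro F hF
            have b3 := sc_mgf_zeros q 3 (AF F)
            have b4 : ((AF F).card : ℝ) ≤ r * j := by exact_mod_cast hAF S hS' F hF
            simp only [sub_eq_add_neg, Real.exp_add]
            rw [← Finset.sum_mul]
            calc _ ≤ (Q * Real.exp ((Real.exp 3 - 1) * (AF F).card / q)) *
                  Real.exp (-(9 / 4 * d * j)) := by gcongr
              _ ≤ (Q * Real.exp (25 * (r * j) / q)) * Real.exp (-(9 / 4 * d * j)) := by
                  gcongr
              _ = _ := by rw [mul_assoc, mul_comm (Real.exp _) (Real.exp _)]; ring_nf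
          refine (Finset.sum_le_sum b2).trans ?_
          rw [Finset.sum_const, nsmul_eq_mul, Finset.card_powersetCard, sc_card_pairs, hS']
        refine (Finset.sum_le_sum b1).trans ?_
        rw [Finset.sum_const, nsmul_eq_mul, Finset.card_powersetCard, Finset.card_univ,
          Fintype.card_fin]
        have b5 : (n.choose k : ℝ) ≤ (n : ℝ) ^ k := by exact_mod_cast Nat.choose_le_pow n k
        calc _ ≤ (n : ℝ) ^ k * (((k.choose 2).choose j : ℝ) *
              (Q * Real.exp (-(9 / 4) * d * j + 25 * (r * j) / q))) := by gcongr
          _ = Q * ((n : ℝ) ^ k * ((k.choose 2).choose j : ℝ) *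
              Real.exp (-(9 / 4) * d * j + 25 * (r * j) / q)) := by ring
          _ ≤ _ := by gcongr
      have C1 : ∑ G : Fin r × Sym2 (Fin m) → Fin q,
          ∑ i : Fin r, ∑ T ∈ (Finset.univ : Finset (Fin m)).powersetCard k,
          Real.exp (x + (-1) * (((AT i T).filter (fun a => G a = 0)).card : ℝ))
          ≤ Q * (1 / 4) := by
        rw [Finset.sum_comm]
        have c1 : ∀ i ∈ (Finset.univ : Finset (Fin r)),
            ∑ G : Fin r × Sym2 (Fin m) → Fin q,
            ∑ T ∈ (Finset.univ : Finset (Fin m)).powersetCard k,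
            Real.exp (x + (-1) * (((AT i T).filter (fun a => G a = 0)).card : ℝ))
            ≤ (m : ℝ) ^ k * (Q * Real.exp (x - (k.choose 2 : ℝ) / (2 * q))) := by
          intro i _
          rw [Finset.sum_comm]
          have c2 : ∀ T ∈ (Finset.univ : Finset (Fin m)).powersetCard k,
              ∑ G : Fin r × Sym2 (Fin m) → Fin q,
              Real.exp (x + (-1) * (((AT i T).filter (fun a => G a = 0)).card : ℝ))
              ≤ Q * Real.exp (x - (k.choose 2 : ℝ) / (2 * q)) := by
            intro T hT
            have hT' := (Finset.mem_powersetCard.1 hT).2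
            have c3 := sc_mgf_zeros q (-1) (AT i T)
            have c4 : ((AT i T).card : ℝ) = (k.choose 2 : ℝ) := by
              simp only [AT]
              rw [Finset.card_map, sc_card_pairs, hT']
            rw [c4] at c3
            simp only [Real.exp_add]
            rw [← Finset.mul_sum]
            calc _ ≤ Real.exp x * (Q * Real.exp ((Real.exp (-1) - 1) * (k.choose 2 : ℝ) / q)) := by
                  gcongr
              _ ≤ Real.exp x * (Q * Real.exp ((-(1 / 2)) * (k.choose 2 : ℝ) / q)) := by gcongr
              _ = Q * (Real.exp x * Real.exp ((-(1 / 2)) * (k.choose 2 : ℝ) / q)) := by ring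
              _ = _ := by
                rw [← Real.exp_add]; congr 2; field_simp; ring
          refine (Finset.sum_le_sum c2).trans ?_
          rw [Finset.sum_const, nsmul_eq_mul, Finset.card_powersetCard, Finset.card_univ,
            Fintype.card_fin]
          have c5 : (m.choose k : ℝ) ≤ (m : ℝ) ^ k := by exact_mod_cast Nat.choose_le_pow m k
          gcongr
        refine (Finset.sum_le_sum c1).trans ?_
        rw [Finset.sum_const, nsmul_eq_mul, Finset.card_univ, Fintype.card_fin]
        calc _ = Q * ((r : ℝ) * m ^ k * Real.exp (x - (k.choose 2 : ℝ) / (2 * q))) := by ring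
          _ ≤ _ := by gcongr
      linarith)
  have hp1 : 0 ≤ ∑ S ∈ (Finset.univ : Finset (Fin n)).powersetCard k,
        ∑ F ∈ (scPairs S).powersetCard j,
          Real.exp (3 * (((AF F).filter (fun a => G a = 0)).card : ℝ) - 9 / 4 * d * j) :=
    Finset.sum_nonneg fun _ _ => Finset.sum_nonneg fun _ _ => (Real.exp_pos _).le
  have hp2 : 0 ≤ ∑ i : Fin r, ∑ T ∈ (Finset.univ : Finset (Fin m)).powersetCard k,
          Real.exp (x + (-1) * (((AT i T).filter (fun a => G a = 0)).card : ℝ)) :=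
    Finset.sum_nonneg fun _ _ => Finset.sum_nonneg fun _ _ => (Real.exp_pos _).le
  refine ⟨G, fun S hS F hF => ?_, fun i T hT => ?_⟩
  · have hSm : S ∈ (Finset.univ : Finset (Fin n)).powersetCard k :=
      Finset.mem_powersetCard.2 ⟨Finset.subset_univ _, hS⟩
    have h1 := Finset.single_le_sum (f := fun S => ∑ F ∈ (scPairs S).powersetCard j,
          Real.exp (3 * (((AF F).filter (fun a => G a = 0)).card : ℝ) - 9 / 4 * d * j))
          (fun S _ => Finset.sum_nonneg fun _ _ => (Real.exp_pos _).le) hSm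
    have h2 := Finset.single_le_sum (f := fun F =>
          Real.exp (3 * (((AF F).filter (fun a => G a = 0)).card : ℝ) - 9 / 4 * d * j))
          (fun S _ => (Real.exp_pos _).le) hF
    have h3 : Real.exp (3 * (((AF F).filter (fun a => G a = 0)).card : ℝ) - 9 / 4 * d * j) < 1 := by
      linarith
    rw [Real.exp_lt_one_iff] at h3
    linarith
  · have hTm : T ∈ (Finset.univ : Finset (Fin m)).powersetCard k :=
      Finset.mem_powersetCard.2 ⟨Finset.subset_univ _, hT⟩
    have h1 := Finset.single_le_sum (f := fun i : Fin r =>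
          ∑ T ∈ (Finset.univ : Finset (Fin m)).powersetCard k,
          Real.exp (x + (-1) * (((AT i T).filter (fun a => G a = 0)).card : ℝ)))
          (fun S _ => Finset.sum_nonneg fun _ _ => (Real.exp_pos _).le) (Finset.mem_univ i)
    have h2 := Finset.single_le_sum (f := fun T =>
          Real.exp (x + (-1) * (((AT i T).filter (fun a => G a = 0)).card : ℝ)))
          (fun S _ => (Real.exp_pos _).le) hTm
    have h3 : Real.exp (x + (-1) * (((AT i T).filter (fun a => G a = 0)).card : ℝ)) < 1 := by
      linarith
    rw [Real.exp_lt_one_iff, hAT] at h3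
    linarith

set_option maxHeartbeats 1000000 in
theorem sc_main (n m r s k d q : ℕ) [NeZero q] (x l : ℝ) (hn : 0 < n) (hm : 0 < m) (hl : 0 < l)
    (hk : 2 ≤ k) (hd : s + d = r)
    (h1 : (k : ℝ) * r * Real.exp l / m ≤ 1) (h2 : (n : ℝ) * Real.exp (1 - l * d / 8) ≤ 1 / 4)
    (hB : (n : ℝ) ^ k * ((k.choose 2).choose ⌈x⌉₊ : ℝ) *
      Real.exp (-(9 / 4) * d * ⌈x⌉₊ + 25 * (r * ⌈x⌉₊) / q) ≤ 1 / 4)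
    (hC : (r : ℝ) * m ^ k * Real.exp (x - (k.choose 2 : ℝ) / (2 * q)) ≤ 1 / 4) :
    ¬ HasSetColouringRamsey r s k n := by
  classical
  obtain ⟨φ, hφ⟩ := sc_code n m r k d hm l hl h1 h2
  set j := ⌈x⌉₊ with hj
  have hF' : ∀ F : Finset (Sym2 (Fin n)), ∃ F' : Fin r → Finset (Sym2 (Fin n)),
      (∃ S : Finset (Fin n), S.card ≤ k ∧ F ⊆ scPairs S) → (∀ i, F' i ⊆ F) ∧
      (∀ i, Set.InjOn (Sym2.map (φ i)) (F' i : Set (Sym2 (Fin n)))) ∧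
      (∀ i, ∀ e ∈ F' i, ¬ (Sym2.map (φ i) e).IsDiag) ∧
      ∑ i, ((F.card : ℝ) - (F' i).card) ≤ d / 4 * F.card := by
    intro F
    by_cases h : ∃ S : Finset (Fin n), S.card ≤ k ∧ F ⊆ scPairs S
    · obtain ⟨S, hS, hFS⟩ := h
      obtain ⟨F', hF'⟩ := sc_reps n m r k d hn φ hφ S hS F hFS
      exact ⟨F', fun _ => hF'⟩
    · exact ⟨fun _ => ∅, fun h' => absurd h' h⟩
  choose F' hF' using hF'
  let AF : Finset (Sym2 (Fin n)) → Finset (Fin r × Sym2 (Fin m)) := fun F =>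
    (Finset.univ.sigma (fun i => F' F i)).image (fun p => (p.1, Sym2.map (φ p.1) p.2))
  obtain ⟨G, hGB, hGC⟩ := sc_graph n m r k d j q x AF (by
    intro S hS F hF
    obtain ⟨hFS, hFj⟩ := Finset.mem_powersetCard.1 hF
    refine Finset.card_image_le.trans ?_
    rw [Finset.card_sigma]
    calc ∑ i, (F' F i).card ≤ ∑ i : Fin r, j := Finset.sum_le_sum fun i _ => by
          rw [← hFj]; exact Finset.card_le_card ((hF' F ⟨S, hS.le, hFS⟩).1 i)
      _ = r * j := by simp) hB hC
  -- allowed colours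
  let D : Sym2 (Fin n) → Finset (Fin r) := fun e =>
    Finset.univ.filter (fun i => ¬ (Sym2.map (φ i) e).IsDiag)
  let L : Sym2 (Fin n) → Finset (Fin r) := fun e =>
    (D e).filter (fun i => G (i, Sym2.map (φ i) e) ≠ 0)
  have hDcard : ∀ e : Sym2 (Fin n), ¬ e.IsDiag → s ≤ (D e).card := by
    intro e he
    induction e using Sym2.ind with
    | _ u v =>
      have huv : u ≠ v := by simpa using he
      have h := hφ {u, v} ⟨u, by simp⟩ (by rw [Finset.card_pair huv]; exact hk)
      rw [Finset.card_pair huv] at h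
      have h3 : ∀ i, (if φ i u = φ i v then (1 : ℝ) else 0) ≤
          ((2 : ℕ) : ℝ) - (({u, v} : Finset (Fin n)).image (φ i)).card := by
        intro i
        by_cases hi : φ i u = φ i v
        · simp [Finset.image_insert, hi]
          norm_num
        · simp [Finset.image_insert, hi, Finset.card_pair hi]
      have h4 := (Finset.sum_le_sum fun i (_ : i ∈ Finset.univ) => h3 i).trans h
      rw [← Finset.sum_filter] at h4
      simp only [Finset.sum_const, nsmul_eq_mul, mul_one] at h4
      have h5 := Finset.card_filter_add_card_filter_not (s := (Finset.univ : Finset (Fin r)))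
        (fun i => φ i u = φ i v)
      have h6 : D s(u, v) = Finset.univ.filter (fun i => ¬ φ i u = φ i v) := by
        ext i; simp [D]
      rw [h6]
      simp only [Finset.card_univ, Fintype.card_fin] at h5
      have h7 : ((Finset.univ.filter (fun i => φ i u = φ i v)).card : ℝ) ≤ d := by
        have : (0 : ℝ) ≤ d := by positivity
        push_cast at h4
        linarith
      have h8 : (Finset.univ.filter (fun i => φ i u = φ i v)).card ≤ d := by exact_mod_cast h7
      omega
  have hχ : ∀ e : Sym2 (Fin n), ∃ c : Finset (Fin r), ¬ e.IsDiag →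
      c.card = s ∧ c ⊆ D e ∧ (s ≤ (L e).card → c ⊆ L e) := by
    intro e
    by_cases he : e.IsDiag
    · exact ⟨∅, fun h => absurd he h⟩
    by_cases hL : s ≤ (L e).card
    · obtain ⟨c, hc, hcs⟩ := Finset.exists_subset_card_eq hL
      exact ⟨c, fun _ => ⟨hcs, hc.trans (Finset.filter_subset _ _), fun _ => hc⟩⟩
    · obtain ⟨c, hc, hcs⟩ := Finset.exists_subset_card_eq (hDcard e he)
      exact ⟨c, fun _ => ⟨hcs, hc, fun h => absurd h hL⟩⟩
  choose χ hχ using hχ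
  intro hR
  obtain ⟨S, i, hS, hcl⟩ := hR (fun u v => χ s(u, v)) (fun u v => by rw [Sym2.eq_swap])
    (fun u v huv => (hχ s(u, v) (by simpa using huv)).1)
  have hinj : Set.InjOn (φ i) (S : Set (Fin n)) := by
    intro u hu v hv huv
    by_contra hne
    have := (hχ s(u, v) (by simpa using hne)).2.1 (hcl u hu v hv hne)
    simp [D, huv] at this
  have hC' := hGC i (S.image (φ i)) (by rw [Finset.card_image_of_injOn hinj, hS])
  let bad := (scPairs S).filter (fun e => (L e).card < s)
  have hsub : (scPairs (S.image (φ i))).filter (fun f => G (i, f) = 0) ⊆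
      bad.image (Sym2.map (φ i)) := by
    intro f hf
    induction f using Sym2.ind with
    | _ a b =>
      obtain ⟨hf1, hf2⟩ := Finset.mem_filter.1 hf
      rw [sc_mem_pairs] at hf1
      obtain ⟨ha, hb, hab⟩ := hf1
      obtain ⟨u, hu, rfl⟩ := Finset.mem_image.1 ha
      obtain ⟨v, hv, rfl⟩ := Finset.mem_image.1 hb
      have huv : u ≠ v := fun h => hab (by rw [h])
      refine Finset.mem_image.2 ⟨s(u, v), Finset.mem_filter.2 ⟨?_, ?_⟩, rfl⟩
      · rw [sc_mem_pairs]; exact ⟨hu, hv, huv⟩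
      · by_contra hlt
        push Not at hlt
        have := (hχ s(u, v) (by simpa using huv)).2.2 hlt (hcl u hu v hv huv)
        have h3 := (Finset.mem_filter.1 this).2
        exact h3 hf2
  have hbadj : j ≤ bad.card := by
    rw [hj]
    apply Nat.ceil_le.2
    have : (((scPairs (S.image (φ i))).filter (fun f => G (i, f) = 0)).card : ℝ) ≤ bad.card := by
      exact_mod_cast (Finset.card_le_card hsub).trans Finset.card_image_le
    linarith
  obtain ⟨F, hFbad, hFj⟩ := Finset.exists_subset_card_eq hbadj
  have hFS : F ⊆ scPairs S := hFbad.trans (Finset.filter_subset _ _)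
  have hlt := hGB S hS F (Finset.mem_powersetCard.2 ⟨hFS, hFj⟩)
  obtain ⟨g1, g2, g3, g4⟩ := hF' F ⟨S, hS.le, hFS⟩
  -- lower bound on zeros
  have hz : ∑ i, ((F' F i).filter (fun e => G (i, Sym2.map (φ i) e) = 0)).card
      ≤ ((AF F).filter (fun a => G a = 0)).card := by
    rw [← Finset.card_sigma]
    apply Finset.card_le_card_of_injOn (fun p => (p.1, Sym2.map (φ p.1) p.2))
    · rintro ⟨i, e⟩ hp
      simp only [Finset.coe_sigma, Set.mem_sigma_iff, Finset.mem_coe, Finset.mem_filter] at hp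
      simp only [AF, Finset.coe_filter, Set.mem_ofPred_eq, Finset.mem_image, Finset.mem_sigma]
      exact ⟨⟨⟨i, e⟩, ⟨Finset.mem_univ _, hp.2.1⟩, rfl⟩, hp.2.2⟩
    · rintro ⟨i, e⟩ hp ⟨i', e'⟩ hp' h
      simp only [Finset.coe_sigma, Set.mem_sigma_iff, Finset.mem_coe, Finset.mem_filter] at hp hp'
      obtain ⟨ha, hb⟩ := Prod.mk.inj h
      simp only at ha hb
      subst ha
      rw [g2 i hp.2.1 hp'.2.1 hb]
  have hfail : ∀ e ∈ F, (d : ℝ) ≤ ((L e)ᶜ.card : ℝ) := by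
    intro e he
    have h3 := (Finset.mem_filter.1 (hFbad he)).2
    have h4 := Finset.card_compl (L e)
    rw [Fintype.card_fin] at h4
    have : d ≤ (L e)ᶜ.card := by omega
    exact_mod_cast this
  have hsw : ∑ e ∈ F, (L e)ᶜ.card = ∑ i, (F.filter (fun e => i ∉ L e)).card := by
    have := Finset.sum_card_bipartiteAbove_eq_sum_card_bipartiteBelow
      (s := F) (t := (Finset.univ : Finset (Fin r))) (fun e i => i ∉ L e)
    rw [← Finset.sum_congr rfl (fun i _ => rfl)] at this
    refine Eq.trans ?_ this
    apply Finset.sum_congr rfl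
    intro e _
    congr 1
    ext i; simp [Finset.bipartiteAbove]
  have hone : ∀ i, ((F.filter (fun e => i ∉ L e)).card : ℝ) ≤
      ((F' F i).filter (fun e => G (i, Sym2.map (φ i) e) = 0)).card +
        ((F.card : ℝ) - (F' F i).card) := by
    intro i
    have h3 : F.filter (fun e => i ∉ L e) ⊆
        (F' F i).filter (fun e => G (i, Sym2.map (φ i) e) = 0) ∪ (F \ F' F i) := by
      intro e he
      obtain ⟨he1, he2⟩ := Finset.mem_filter.1 he
      by_cases h : e ∈ F' F i
      · refine Finset.mem_union_left _ (Finset.mem_filter.2 ⟨h, ?_⟩)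
        by_contra hne
        exact he2 (Finset.mem_filter.2 ⟨Finset.mem_filter.2 ⟨Finset.mem_univ _, g3 i e h⟩, hne⟩)
      · exact Finset.mem_union_right _ (Finset.mem_sdiff.2 ⟨he1, h⟩)
    have h4 := (Finset.card_le_card h3).trans (Finset.card_union_le _ _)
    have h5 := Finset.card_sdiff_add_card_eq_card (g1 i)
    have h4' : ((F.filter (fun e => i ∉ L e)).card : ℝ) ≤
      ((F' F i).filter (fun e => G (i, Sym2.map (φ i) e) = 0)).card + (F \ F' F i).card := by
      exact_mod_cast h4
    have h5' : ((F \ F' F i).card : ℝ) + (F' F i).card = F.card := by exact_mod_cast h5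
    linarith
  have hz' : ∑ i, (((F' F i).filter (fun e => G (i, Sym2.map (φ i) e) = 0)).card : ℝ)
      ≤ ((AF F).filter (fun a => G a = 0)).card := by exact_mod_cast hz
  have hA : (d : ℝ) * j ≤ ∑ e ∈ F, ((L e)ᶜ.card : ℝ) := by
    have := Finset.sum_le_sum hfail
    rw [Finset.sum_const, nsmul_eq_mul, hFj] at this
    linarith
  have hsw' : ∑ e ∈ F, ((L e)ᶜ.card : ℝ) = ∑ i, ((F.filter (fun e => i ∉ L e)).card : ℝ) := by
    exact_mod_cast hsw
  have hB' := Finset.sum_le_sum (fun i (_ : i ∈ Finset.univ) => hone i)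
  rw [Finset.sum_add_distrib] at hB'
  rw [hFj] at g4 hB'
  linarith

theorem sc_choose_le (N j : ℕ) (hj : 0 < j) :
    (N.choose j : ℝ) ≤ (N / j * Real.exp 1) ^ j := by
  have h1 : (N.choose j : ℝ) ≤ (N : ℝ) ^ j / j.factorial := Nat.choose_le_pow_div j N
  have h2 := Real.pow_div_factorial_le_exp (j : ℝ) (by positivity) j
  have hj' : (0 : ℝ) < j := by exact_mod_cast hj
  have hf : (0 : ℝ) < j.factorial := by exact_mod_cast j.factorial_pos
  calc (N.choose j : ℝ) ≤ (N : ℝ) ^ j / j.factorial := h1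
    _ = (N / j : ℝ) ^ j * ((j : ℝ) ^ j / j.factorial) := by
        rw [div_pow]; field_simp
    _ ≤ (N / j : ℝ) ^ j * Real.exp j := by gcongr
    _ = _ := by rw [mul_pow, ← Real.exp_nat_mul]; simp

theorem sc_exp_quarter : Real.exp (-2) ≤ 1 / 4 := by
  have h := Real.exp_one_gt_d9
  have : Real.exp (-2) = (Real.exp 1 ^ 2)⁻¹ := by
    rw [← Real.exp_nat_mul, ← Real.exp_neg]; norm_num
  rw [this]
  have h2 : (2 : ℝ) ^ 2 ≤ Real.exp 1 ^ 2 := by gcongr; linarith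
  calc (Real.exp 1 ^ 2)⁻¹ ≤ ((2 : ℝ) ^ 2)⁻¹ := by gcongr
    _ = _ := by norm_num

set_option maxHeartbeats 1000000 in
theorem sc_numeric (n r s k d : ℕ) (hn : 0 < n) (hr : 2 ≤ r) (hd0 : 0 < d) (hd : s + d = r)
    (h1 : 10 ^ 10 * Real.log r ≤ (d : ℝ)) (E : ℝ) (hE : E = d * k / r)
    (h2 : 10 ^ 10 * Real.log r ≤ E)
    (hnE : (n : ℝ) ≤ Real.exp (1 / 320000 * (d * E))) :
    ¬ HasSetColouringRamsey r s k n := by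
  have hr' : (2 : ℝ) ≤ r := by exact_mod_cast hr
  have hr0 : (0 : ℝ) < r := by linarith
  have hd' : (1 : ℝ) ≤ d := by exact_mod_cast hd0
  have hdr : (d : ℝ) ≤ r := by exact_mod_cast (by omega : d ≤ r)
  have hn' : (0 : ℝ) < n := by exact_mod_cast hn
  have hlog : (0.69 : ℝ) ≤ Real.log r := by
    have := Real.log_two_gt_d9
    have h := Real.log_le_log (by norm_num) hr'
    linarith
  have hEbig : (6.9 * 10 ^ 9 : ℝ) ≤ E := by linarith
  have hdbig : (6.9 * 10 ^ 9 : ℝ) ≤ d := by linarith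
  have hkE : (k : ℝ) = E * r / d := by rw [hE]; field_simp
  have hEk : E ≤ k := by
    rw [hE, div_le_iff₀ hr0, mul_comm]; gcongr
  have hkbig : (6.9 * 10 ^ 9 : ℝ) ≤ k := by linarith
  have hk2 : 2 ≤ k := by
    have : (2 : ℝ) ≤ k := by linarith
    exact_mod_cast this
  have hrE : (r : ℝ) ≤ Real.exp (E / 10 ^ 10) := by
    rw [← Real.log_le_iff_le_exp hr0]; linarith
  -- choice of m
  set m : ℕ := ⌈Real.exp (E / 10000)⌉₊ with hm
  have hm1 : Real.exp (E / 10000) ≤ m := Nat.le_ceil _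
  have hm0' : (0 : ℝ) < m := lt_of_lt_of_le (Real.exp_pos _) hm1
  have hm0 : 0 < m := by exact_mod_cast hm0'
  have hm2 : (m : ℝ) ≤ Real.exp (E / 10000 + 1) := by
    have h := (Nat.ceil_lt_add_one (Real.exp_pos (E / 10000)).le).le
    have h3 : (1 : ℝ) ≤ Real.exp (E / 10000) := Real.one_le_exp (by linarith)
    have h4 := Real.exp_one_gt_d9
    rw [Real.exp_add]
    calc (m : ℝ) ≤ Real.exp (E / 10000) + 1 := h
      _ ≤ Real.exp (E / 10000) * 2 := by linarith
      _ ≤ _ := by gcongr; linarith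
  set l : ℝ := Real.log m / 2 with hl
  have hlE : E / 20000 ≤ l := by
    have : E / 10000 ≤ Real.log m := by rw [Real.le_log_iff_exp_le hm0']; exact hm1
    linarith
  have hl0 : 0 < l := by linarith
  have hexpl : Real.exp l * Real.exp l = m := by
    rw [← Real.exp_add, hl, add_halves, Real.exp_log hm0']
  -- choice of q
  set q : ℕ := ⌈100 * (r : ℝ) / d⌉₊ with hq
  have hrd : (1 : ℝ) ≤ r / d := by rw [le_div_iff₀ (by linarith)]; linarith
  have hq1 : 100 * (r : ℝ) / d ≤ q := Nat.le_ceil _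
  have hq1' : 100 * ((r : ℝ) / d) ≤ q := by rw [← mul_div_assoc]; exact hq1
  have hq2 : (q : ℝ) ≤ 200 * (r / d) := by
    have h := (Nat.ceil_lt_add_one (a := 100 * (r : ℝ) / d) (by positivity)).le
    rw [mul_div_assoc] at h
    have h' : (q : ℝ) ≤ 100 * (r / d) + 1 := by rw [hq, mul_div_assoc]; exact h
    linarith
  have hq0' : (0 : ℝ) < q := by linarith
  have hq0 : 0 < q := by exact_mod_cast hq0'
  have : NeZero q := ⟨hq0.ne'⟩
  set x : ℝ := k * E / 3200 with hx
  have hx1 : 1 ≤ x := by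
    rw [hx]; nlinarith
  set j : ℕ := ⌈x⌉₊ with hj
  have hjx : x ≤ j := Nat.le_ceil _
  have hj1 : (1 : ℝ) ≤ j := hx1.trans hjx
  have hj0 : 0 < j := by
    have : (0 : ℝ) < j := by linarith
    exact_mod_cast this
  refine sc_main n m r s k d q x l hn hm0 hl0 hk2 hd ?_ ?_ ?_ ?_
  · -- collisions
    rw [div_le_one hm0', ← hexpl]
    gcongr
    refine le_trans ?_ (Real.exp_le_exp.2 hlE)
    have e1 : (k : ℝ) ≤ E * r := by
      rw [hkE]; apply div_le_self (by positivity) hd'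
    have e2 : E ≤ Real.exp (E / 40000) := by
      have := Real.quadratic_le_exp_of_nonneg (x := E / 40000) (by linarith)
      nlinarith
    calc (k : ℝ) * r ≤ (E * r) * r := by gcongr
      _ ≤ (Real.exp (E / 40000) * Real.exp (E / 10 ^ 10)) * Real.exp (E / 10 ^ 10) := by gcongr
      _ = Real.exp (E / 40000 + E / 10 ^ 10 + E / 10 ^ 10) := by
        rw [Real.exp_add, Real.exp_add]
      _ ≤ _ := by
        gcongr
        linarith
  · calc (n : ℝ) * Real.exp (1 - l * d / 8)
        ≤ Real.exp (1 / 320000 * (d * E)) * Real.exp (1 - (E / 20000) * d / 8) := by gcongr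
      _ = Real.exp (1 - 1 / 320000 * (d * E)) := by rw [← Real.exp_add]; ring_nf
      _ ≤ Real.exp (-2) := by
        gcongr
        nlinarith
      _ ≤ _ := sc_exp_quarter
  · have b1 : (n : ℝ) ^ k ≤ Real.exp (1 / 100 * (d * j)) := by
      calc (n : ℝ) ^ k ≤ (Real.exp (1 / 320000 * (d * E))) ^ k := by gcongr
        _ = Real.exp (1 / 100 * (d * x)) := by
          rw [← Real.exp_nat_mul, hx]; ring_nf
        _ ≤ _ := by gcongr
    have hchoose : (k.choose 2 : ℝ) ≤ k ^ 2 / 2 := by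
      rw [Nat.cast_choose_two]; nlinarith
    have b2 : (k.choose 2 : ℝ) / j ≤ 1600 * r := by
      rw [div_le_iff₀ (by linarith)]
      refine hchoose.trans ?_
      have : (k : ℝ) ^ 2 / 2 ≤ 1600 * r * x := by
        rw [hx]
        have : (k : ℝ) ≤ r * E := by
          rw [hkE, mul_comm (r : ℝ)]; apply div_le_self (by positivity) hd'
        nlinarith
      refine this.trans ?_
      gcongr
    have b3 : (k.choose 2 : ℝ) / j * Real.exp 1 ≤ Real.exp (9 + Real.log r) := by
      have e8 : (1600 : ℝ) ≤ Real.exp 8 := by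
        have h1 : Real.exp 8 = Real.exp 1 ^ 8 := by rw [← Real.exp_nat_mul]; norm_num
        have h2 := Real.exp_one_gt_d9
        have h3 : (2.7 : ℝ) ^ 8 ≤ Real.exp 1 ^ 8 := by gcongr; linarith
        rw [h1]; norm_num at h3 ⊢; linarith
      calc (k.choose 2 : ℝ) / j * Real.exp 1 ≤ (1600 * r) * Real.exp 1 := by gcongr
        _ ≤ (Real.exp 8 * r) * Real.exp 1 := by gcongr
        _ = Real.exp 8 * Real.exp 1 * r := by ring
        _ = _ := by rw [← Real.exp_add, Real.exp_add 9, Real.exp_log hr0]; norm_num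
    have b4 : ((k.choose 2).choose j : ℝ) ≤ Real.exp (j * (9 + Real.log r)) := by
      refine (sc_choose_le _ j hj0).trans ?_
      rw [Real.exp_nat_mul]
      gcongr
    have b5 : 25 * ((r : ℝ) * j) / q ≤ 1 / 4 * (d * j) := by
      rw [div_le_iff₀ hq0']
      have : (r : ℝ) * 100 ≤ d * q := by
        have := mul_le_mul_of_nonneg_left hq1' (by linarith : (0 : ℝ) ≤ d)
        calc (r : ℝ) * 100 = d * (100 * (r / d)) := by field_simp
          _ ≤ _ := this
      nlinarith
    calc _ ≤ Real.exp (1 / 100 * (d * j)) * Real.exp (j * (9 + Real.log r)) *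
          Real.exp (-(9 / 4) * d * j + 1 / 4 * (d * j)) := by gcongr
      _ = Real.exp (1 / 100 * (d * j) + j * (9 + Real.log r) +
          (-(9 / 4) * d * j + 1 / 4 * (d * j))) := by rw [← Real.exp_add, ← Real.exp_add]
      _ ≤ Real.exp (-2) := by
        gcongr
        have : 9 + Real.log r ≤ 0.9 * d := by linarith
        have h3 : (j : ℝ) * (9 + Real.log r) ≤ j * (0.9 * d) := by gcongr
        have h4 : (6.9 * 10 ^ 9 : ℝ) * 1 ≤ d * j := by gcongr
        nlinarith
      _ ≤ _ := sc_exp_quarter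
  · have c1 : x * 2 ≤ (k.choose 2 : ℝ) / (2 * q) := by
      rw [le_div_iff₀ (by linarith), Nat.cast_choose_two, hx]
      have : E * q ≤ 200 * k := by
        calc E * q ≤ E * (200 * (r / d)) := by gcongr
          _ = 200 * k := by rw [hkE]; ring
      have h4 : (k : ℝ) * (E * q) ≤ k * (200 * k) := by gcongr
      nlinarith
    have c2 : (m : ℝ) ^ k ≤ Real.exp (k * (E / 10000 + 1)) := by
      rw [Real.exp_nat_mul]; gcongr
    calc _ ≤ Real.exp (E / 10 ^ 10) * Real.exp (k * (E / 10000 + 1)) * Real.exp (x - x * 2) := by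
          gcongr
      _ = Real.exp (E / 10 ^ 10 + k * (E / 10000 + 1) + (x - x * 2)) := by
          rw [Real.exp_add, Real.exp_add]
      _ ≤ Real.exp (-2) := by
        gcongr
        rw [hx]
        have : (k : ℝ) * (6.9 * 10 ^ 9) ≤ k * E := by gcongr
        nlinarith
      _ ≤ _ := sc_exp_quarter

theorem setRamsey_lower_bound :
    ∃ C > (0 : ℝ), ∃ δ > (0 : ℝ), ∀ r s k : ℕ, s < r → 1 ≤ s →
      (s : ℝ) ≤ (r : ℝ) - C * Real.log r →
      (k : ℝ) ≥ (C / (((r : ℝ) - s) / r)) * Real.log r →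
      (setRamsey r s k : ℝ) ≥ Real.exp (δ * k * ((r : ℝ) - s) ^ 2 / r) := by
  refine ⟨10 ^ 10, by norm_num, 1 / 320000, by norm_num, ?_⟩
  intro r s k hsr hs h1 h2
  obtain ⟨d, rfl⟩ : ∃ d, r = s + d := ⟨r - s, by omega⟩
  have hd0 : 0 < d := by omega
  have hdr : (((s + d : ℕ) : ℝ) - s) = d := by push_cast; ring
  rw [hdr] at h2 ⊢
  have hd' : (0 : ℝ) < d := by exact_mod_cast hd0
  have hr0 : (0 : ℝ) < ((s + d : ℕ) : ℝ) := by exact_mod_cast (by omega : 0 < s + d)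
  have hlog : 0 < Real.log ((s + d : ℕ) : ℝ) := Real.log_pos (by exact_mod_cast (by omega : 1 < s + d))
  have hk : 0 < k := by
    have : (0 : ℝ) < k := lt_of_lt_of_le (by positivity) h2
    exact_mod_cast this
  have hR : HasSetColouringRamsey (s + d) s k (setRamsey (s + d) s k) :=
    Nat.sInf_mem (s := {n | HasSetColouringRamsey (s + d) s k n}) (sc_ramsey_nonempty _ _ _ hs)
  by_contra hlt
  push Not at hlt
  rcases Nat.eq_zero_or_pos (setRamsey (s + d) s k) with h0 | hpos
  · rw [h0] at hR
    obtain ⟨S, i, hS, -⟩ := hR (fun u _ => u.elim0) (fun u => u.elim0) (fun u => u.elim0)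
    have : S = ∅ := Finset.eq_empty_of_isEmpty S
    rw [this] at hS
    simp at hS
    omega
  · refine sc_numeric (setRamsey (s + d) s k) (s + d) s k d hpos (by omega) hd0 rfl (by linarith)
      _ rfl ?_ ?_ hR
    · rw [le_div_iff₀ hr0]
      have h3 := mul_le_mul_of_nonneg_left h2 hd'.le
      calc _ = (d : ℝ) * (10 ^ 10 / (d / ((s + d : ℕ) : ℝ)) * Real.log ((s + d : ℕ) : ℝ)) := by
            field_simp
        _ ≤ _ := h3
    · refine hlt.le.trans (le_of_eq ?_)
      congr 1
      field_simp
end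

section
/- For every real δ > 0 there exist constants a > 0 and A > 0 such that for all integers r > s ≥ 1 with r ≥ 3, setting ε = (r − s)/r, and for every integer k ≥ (1 + δ)/ε + 1, one has exp(a·ε²·r·k / log r) ≤ R_{r,s}(k) ≤ exp(A·ε²·r·k·log r). -/
theorem has_mono {r s k m n : ℕ} (h : m ≤ n) (H : HasSetColouringRamsey r s k m) :
    HasSetColouringRamsey r s k n := by
  intro χ hs hc
  obtain ⟨S, i, hS, hm⟩ := H (fun u v => χ (Fin.castLE h u) (Fin.castLE h v))
    (fun u v => hs _ _) (fun u v huv => hc _ _ (by simpa using huv))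
  refine ⟨S.map (Fin.castLEEmb h), i, by simpa using hS, ?_⟩
  intro u hu v hv huv
  simp only [Finset.mem_map] at hu hv
  obtain ⟨a, ha, rfl⟩ := hu
  obtain ⟨b, hb, rfl⟩ := hv
  exact hm a ha b hb (fun e => huv (by rw [e]))

theorem ramsey_std {α ι : Type*} [DecidableEq α] [DecidableEq ι] (χ : α → α → Finset ι)
    (D : Finset ι) (hD : D.Nonempty) (c : ℕ) (hc : 1 ≤ c) (hs : ∀ u v, χ u v = χ v u) :
    ∀ (t : ℕ) (f : ι → ℕ) (W : Finset α),
      (∀ x ∈ W, ∀ y ∈ W, x ≠ y → D.card ≤ c * (D ∩ χ x y).card) →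
      ∑ i ∈ D, f i = t → (2 * c) ^ t ≤ W.card →
      ∃ i ∈ D, ∃ S ⊆ W, S.card = f i + 1 ∧ ∀ u ∈ S, ∀ v ∈ S, u ≠ v → i ∈ χ u v := by
  intro t
  induction t with
  | zero =>
    intro f W _ hf hW
    obtain ⟨i, hi⟩ := hD
    have : f i = 0 := by
      have := Finset.sum_eq_zero_iff.1 hf i hi
      exact this
    have hW' : 0 < W.card := by simpa using hW
    obtain ⟨v, hv⟩ := Finset.card_pos.1 hW'
    refine ⟨i, hi, {v}, by simpa using hv, by simp [this], ?_⟩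
    intro a ha b hb hab
    simp at ha hb
    exact absurd (ha.trans hb.symm) hab
  | succ t ih =>
    intro f W hcol hf hW
    have hWpos : 2 ≤ W.card := by
      refine le_trans ?_ hW
      calc 2 ≤ 2 * c := by omega
        _ = (2 * c) ^ 1 := by simp
        _ ≤ (2 * c) ^ (t + 1) := Nat.pow_le_pow_right (by omega) (by omega)
    obtain ⟨v, hv⟩ := Finset.card_pos.1 (show 0 < W.card by omega)
    by_cases h0 : ∃ i ∈ D, f i = 0
    · obtain ⟨i, hi, h⟩ := h0
      refine ⟨i, hi, {v}, by simpa using hv, by simp [h], ?_⟩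
      intro a ha b hb hab
      simp at ha hb
      exact absurd (ha.trans hb.symm) hab
    push Not at h0
    have hsum : (W.card - 1) * D.card ≤
        c * ∑ i ∈ D, ((W.erase v).filter (fun w => i ∈ χ v w)).card := by
      have h1 : ∑ i ∈ D, ((W.erase v).filter (fun w => i ∈ χ v w)).card
          = ∑ w ∈ W.erase v, (D ∩ χ v w).card := by
        have := Finset.sum_card_bipartiteAbove_eq_sum_card_bipartiteBelow
          (s := D) (t := W.erase v) (fun i w => i ∈ χ v w)
        simp only [Finset.bipartiteAbove, Finset.bipartiteBelow] at this
        rw [this]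
        refine Finset.sum_congr rfl fun w _ => ?_
        congr 1
      rw [h1, Finset.mul_sum, ← Finset.card_erase_of_mem hv, ← smul_eq_mul]
      refine Finset.card_nsmul_le_sum _ _ _ ?_
      intro w hw
      have := Finset.mem_erase.1 hw
      exact hcol v hv w this.2 (Ne.symm this.1)
    have hex : ∃ i ∈ D, W.card - 1 ≤ c * ((W.erase v).filter (fun w => i ∈ χ v w)).card := by
      by_contra hcon
      push Not at hcon
      have : ∑ i ∈ D, c * ((W.erase v).filter (fun w => i ∈ χ v w)).card
          < ∑ i ∈ D, (W.card - 1) := Finset.sum_lt_sum_of_nonempty hD hcon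
      rw [← Finset.mul_sum] at this
      simp only [Finset.sum_const, smul_eq_mul] at this
      rw [mul_comm D.card] at this
      omega
    obtain ⟨i, hi, hiW⟩ := hex
    set N := (W.erase v).filter (fun w => i ∈ χ v w) with hN
    have hNW : N ⊆ W := (Finset.filter_subset _ _).trans (Finset.erase_subset _ _)
    have hNc : (2 * c) ^ t ≤ N.card := by
      have : (2 * c) * (2 * c) ^ t ≤ (2 * c) * N.card := by
        calc (2 * c) * (2 * c) ^ t = (2 * c) ^ (t + 1) := by ring
          _ ≤ W.card := hW
          _ ≤ 2 * (c * N.card) := by omega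
          _ = _ := by ring
      exact Nat.le_of_mul_le_mul_left this (by omega)
    have hfi : 1 ≤ f i := Nat.one_le_iff_ne_zero.2 (h0 i hi)
    have hsum' : ∑ j ∈ D, (Function.update f i (f i - 1)) j = t := by
      rw [Finset.sum_update_of_mem hi]
      have := Finset.sum_eq_add_sum_sdiff_singleton_of_mem hi f
      omega
    obtain ⟨j, hj, S, hSN, hSc, hm⟩ := ih (Function.update f i (f i - 1)) N
      (fun x hx y hy hxy => hcol x (hNW hx) y (hNW hy) hxy) hsum' hNc
    by_cases hji : j = i
    · subst hji
      have hvS : v ∉ S := fun h => by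
        have := hSN h
        simp [hN] at this
      refine ⟨j, hj, insert v S, Finset.insert_subset hv (hSN.trans hNW), ?_, ?_⟩
      · rw [Finset.card_insert_of_notMem hvS, hSc]
        simp; omega
      · have hvw : ∀ w ∈ S, j ∈ χ v w := fun w hw => by
          have := hSN hw
          simp [hN] at this
          exact this.2
        intro a ha b hb hab
        rcases Finset.mem_insert.1 ha with ha1 | ha1
        · rcases Finset.mem_insert.1 hb with hb1 | hb1
          · exact absurd (ha1.trans hb1.symm) hab
          · rw [ha1]; exact hvw b hb1
        · rcases Finset.mem_insert.1 hb with hb1 | hb1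
          · rw [hs, hb1]; exact hvw a ha1
          · exact hm a ha1 b hb1 hab
    · refine ⟨j, hj, S, hSN.trans hNW, ?_, hm⟩
      rw [hSc, Function.update_of_ne hji]

theorem es_step {α ι : Type*} [DecidableEq α] [DecidableEq ι] (χ : α → α → Finset ι)
    (hs : ∀ u v, χ u v = χ v u) (i : ι) (W : Finset α) (k p r : ℕ) (η : ℝ)
    (hno : ∀ S ⊆ W, S.card = k → ¬ ∀ u ∈ S, ∀ v ∈ S, u ≠ v → i ∈ χ u v)
    (hη : 0 < η)
    (hdens : (∑ x ∈ W, ((W.filter (fun y => x ≠ y ∧ i ∉ χ x y)).card : ℝ)) ≤ η * (W.card : ℝ) ^ 2)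
    (hp : 8 * η * k < p + 1) (hW : 8 * k ≤ W.card) (hk : 1 ≤ k) (hr : 1 ≤ r) :
    ∃ W' ⊆ W, (W.card : ℝ) ≤ 8 * ((r : ℝ) ^ p * (1 + 1 / r) ^ k) * W'.card ∧
      ∀ S ⊆ W', S.card = p + 1 → ¬ ∀ u ∈ S, ∀ v ∈ S, u ≠ v → i ∈ χ u v := by
  classical
  have hWpos : (0 : ℝ) < W.card := by
    have : 0 < W.card := by omega
    exact_mod_cast this
  have hk0 : (0 : ℝ) < k := by exact_mod_cast hk
  have hr0 : (0 : ℝ) < r := by exact_mod_cast hr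
  set deg : α → ℝ := fun x => ((W.filter (fun y => x ≠ y ∧ i ∉ χ x y)).card : ℝ) with hdeg
  have hdeg0 : ∀ x, 0 ≤ deg x := fun x => Nat.cast_nonneg _
  set W0 := W.filter (fun x => deg x ≤ 2 * η * W.card) with hW0
  have hW0c : (W.card : ℝ) / 2 ≤ W0.card := by
    have h1 := Finset.card_filter_add_card_filter_not (s := W) (fun x => deg x ≤ 2 * η * W.card)
    have h2 : ((W.filter (fun x => ¬ deg x ≤ 2 * η * W.card)).card : ℝ) * (2 * η * W.card)
        ≤ η * (W.card : ℝ) ^ 2 := by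
      refine le_trans ?_ hdens
      refine le_trans ?_ (Finset.sum_le_sum_of_subset_of_nonneg (Finset.filter_subset
        (fun x => ¬ deg x ≤ 2 * η * W.card) W) (fun x _ _ => hdeg0 x))
      rw [← nsmul_eq_mul]
      refine Finset.card_nsmul_le_sum _ _ _ ?_
      intro x hx
      exact le_of_lt (not_le.1 (Finset.mem_filter.1 hx).2)
    have h3 : ((W.filter (fun x => ¬ deg x ≤ 2 * η * W.card)).card : ℝ) ≤ W.card / 2 := by
      have : 0 < 2 * η * (W.card : ℝ) := by positivity
      rw [← mul_le_mul_iff_left₀ this]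
      nlinarith
    have h4 : (W0.card : ℝ) + ((W.filter (fun x => ¬ deg x ≤ 2 * η * W.card)).card : ℝ) = W.card := by
      exact_mod_cast h1
    linarith
  -- maximum monochromatic set in W0
  let mono : Finset α → Prop := fun S => ∀ u ∈ S, ∀ v ∈ S, u ≠ v → i ∈ χ u v
  obtain ⟨I, hI, hImax⟩ := Finset.exists_max_image (W0.powerset.filter mono) Finset.card
    ⟨∅, by simp [mono]⟩
  simp only [Finset.mem_filter, Finset.mem_powerset] at hI hImax
  obtain ⟨hIW0, hImono⟩ := hI
  have hW0W : W0 ⊆ W := Finset.filter_subset _ _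
  have hIk : I.card < k := by
    by_contra hcon
    push Not at hcon
    obtain ⟨S, hSI, hSk⟩ := Finset.exists_subset_card_eq hcon
    exact hno S (hSI.trans (hIW0.trans hW0W)) hSk
      (fun u hu v hv => hImono u (hSI hu) v (hSI hv))
  have hIk' : (I.card : ℝ) ≤ k := by exact_mod_cast hIk.le
  let P : α → Finset α := fun v => I.filter (fun x => x ≠ v ∧ i ∉ χ x v)
  have hsumP : ∑ v ∈ W, ((P v).card : ℝ) ≤ k * (2 * η * W.card) := by
    have h1 := Finset.sum_card_bipartiteAbove_eq_sum_card_bipartiteBelow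
          (s := I) (t := W) (fun x v => x ≠ v ∧ i ∉ χ x v)
    simp only [Finset.bipartiteAbove, Finset.bipartiteBelow] at h1
    have h2 : ∑ v ∈ W, ((P v).card : ℝ) = ∑ x ∈ I, deg x := by
      simp only [P, hdeg]
      exact_mod_cast h1.symm
    rw [h2]
    calc ∑ x ∈ I, deg x ≤ ∑ x ∈ I, (2 * η * W.card) :=
          Finset.sum_le_sum fun x hx => (Finset.mem_filter.1 (hIW0 hx)).2
      _ = I.card * (2 * η * W.card) := by simp
      _ ≤ _ := by gcongr
  set W1 := (W0 \ I).filter (fun v => (P v).card ≤ p) with hW1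
  have hW1c : (W.card : ℝ) / 8 ≤ W1.card := by
    set B := W.filter (fun v => ¬ (P v).card ≤ p) with hB
    have h2 : (B.card : ℝ) * (8 * η * k) ≤ k * (2 * η * W.card) := by
      refine le_trans ?_ hsumP
      refine le_trans ?_ (Finset.sum_le_sum_of_subset_of_nonneg (Finset.filter_subset
        (fun v => ¬ (P v).card ≤ p) W) (fun x _ _ => Nat.cast_nonneg _))
      rw [← nsmul_eq_mul]
      refine Finset.card_nsmul_le_sum _ _ _ ?_
      intro x hx
      have : p + 1 ≤ (P x).card := not_le.1 (Finset.mem_filter.1 hx).2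
      have : (p : ℝ) + 1 ≤ (P x).card := by exact_mod_cast this
      linarith
    have h3 : (B.card : ℝ) ≤ W.card / 4 := by
      have : 0 < 8 * η * (k : ℝ) := by positivity
      rw [← mul_le_mul_iff_left₀ this]
      nlinarith
    have h4 : W0 ⊆ W1 ∪ (I ∪ B) := by
      intro x hx
      by_cases h1 : x ∈ I
      · simp [h1]
      by_cases h2 : (P x).card ≤ p
      · simp [hW1, hx, h1, h2]
      · simp only [Finset.mem_union]
        right; right
        exact Finset.mem_filter.2 ⟨hW0W hx, h2⟩
    have h5 : W0.card ≤ W1.card + (I.card + B.card) :=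
      (Finset.card_le_card h4).trans ((Finset.card_union_le _ _).trans
        (Nat.add_le_add_left (Finset.card_union_le _ _) _))
    have h5' : (W0.card : ℝ) ≤ W1.card + (I.card + B.card) := by exact_mod_cast h5
    have h6 : (8 : ℝ) * k ≤ W.card := by exact_mod_cast hW
    linarith
  set T := I.powerset.filter (fun Q => Q.card ≤ p) with hT
  have hTc : (T.card : ℝ) ≤ (r : ℝ) ^ p * (1 + 1 / r) ^ k := by
    have h1 : (1 / (r : ℝ)) ^ p * T.card ≤ (1 / r + 1) ^ I.card := by
      rw [← Finset.sum_pow_mul_eq_add_pow]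
      refine le_trans ?_ (Finset.sum_le_sum_of_subset_of_nonneg (Finset.filter_subset
        (fun Q => Q.card ≤ p) I.powerset) (fun x _ _ => by positivity))
      rw [mul_comm, ← nsmul_eq_mul]
      refine Finset.card_nsmul_le_sum _ _ _ ?_
      intro Q hQ
      simp only [one_pow, mul_one]
      apply pow_le_pow_of_le_one (by positivity) _ (Finset.mem_filter.1 hQ).2
      rw [div_le_one hr0]; exact_mod_cast hr
    have h2 : (1 / (r : ℝ) + 1) ^ I.card ≤ (1 + 1 / r) ^ k := by
      rw [add_comm]
      apply pow_le_pow_right₀ _ hIk.le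
      have : 0 ≤ 1 / (r : ℝ) := by positivity
      linarith
    calc (T.card : ℝ) = (r : ℝ) ^ p * ((1 / (r : ℝ)) ^ p * T.card) := by
          rw [← mul_assoc, ← mul_pow]; field_simp; simp
      _ ≤ _ := by
          gcongr
          exact h1.trans h2
  have hTne : T.Nonempty := ⟨∅, by simp [hT]⟩
  have hTpos : (0 : ℝ) < T.card := by exact_mod_cast hTne.card_pos
  obtain ⟨Q, hQ, hQc⟩ := Finset.exists_le_card_fiber_of_nsmul_le_card_of_maps_to
    (s := W1) (t := T) (f := P) (b := (W1.card : ℝ) / T.card)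
    (by
      intro v hv
      simp only [hT, Finset.mem_filter, Finset.mem_powerset]
      exact ⟨Finset.filter_subset _ _, (Finset.mem_filter.1 hv).2⟩) hTne
    (by rw [nsmul_eq_mul]; field_simp; exact le_rfl)
  have hW1W : W1 ⊆ W := (Finset.filter_subset _ _).trans (Finset.sdiff_subset.trans hW0W)
  refine ⟨W1.filter (fun v => P v = Q), (Finset.filter_subset _ _).trans hW1W, ?_, ?_⟩
  · rw [div_le_iff₀ hTpos] at hQc
    have : ((W1.filter (fun v => P v = Q)).card : ℝ) * T.card ≤
      ((W1.filter (fun v => P v = Q)).card : ℝ) * ((r : ℝ) ^ p * (1 + 1 / r) ^ k) := by gcongr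
    linarith
  · intro S hS hSc hSm
    have hSI : ∀ v ∈ S, v ∉ I ∧ v ∈ W0 ∧ P v = Q := by
      intro v hv
      have := hS hv
      simp only [hW1, Finset.mem_filter, Finset.mem_sdiff] at this
      exact ⟨this.1.1.2, this.1.1.1, this.2⟩
    have hx : ∀ x ∈ I \ Q, ∀ v ∈ S, i ∈ χ x v := by
      intro x hx v hv
      rw [Finset.mem_sdiff, ← (hSI v hv).2.2] at hx
      by_contra hcon
      apply hx.2
      simp only [P, Finset.mem_filter]
      refine ⟨hx.1, ?_, hcon⟩
      rintro rfl
      exact (hSI _ hv).1 hx.1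
    have hdis : Disjoint (I \ Q) S := by
      rw [Finset.disjoint_left]
      intro a ha haS
      exact (hSI a haS).1 (Finset.mem_sdiff.1 ha).1
    have hbig := hImax ((I \ Q) ∪ S) ⟨by
        apply Finset.union_subset (Finset.sdiff_subset.trans hIW0)
        intro v hv; exact (hSI v hv).2.1, by
        intro a ha b hb hab
        rcases Finset.mem_union.1 ha with ha | ha
        · rcases Finset.mem_union.1 hb with hb | hb
          · exact hImono a (Finset.mem_sdiff.1 ha).1 b (Finset.mem_sdiff.1 hb).1 hab
          · exact hx a ha b hb
        · rcases Finset.mem_union.1 hb with hb | hb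
          · rw [hs]; exact hx b hb a ha
          · exact hSm a ha b hb hab⟩
    rw [Finset.card_union_of_disjoint hdis] at hbig
    have h1 := Finset.le_card_sdiff Q I
    simp only [hT, Finset.mem_filter, Finset.mem_powerset] at hQ
    have h2 := Finset.card_le_card hQ.1
    omega

theorem dens_exists {α : Type*} [DecidableEq α] (r d : ℕ) (χ : α → α → Finset (Fin r))
    (hc : ∀ u v, u ≠ v → (χ u v).card + d = r) (D : Finset (Fin r)) (W : Finset α)
    (hD : 2 * D.card < r) (hd : 1 ≤ d) :
    ∃ i ∉ D, (∑ x ∈ W, ((W.filter (fun y => x ≠ y ∧ i ∉ χ x y)).card : ℝ))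
      ≤ (2 * ((d : ℝ) / r)) * (W.card : ℝ) ^ 2 := by
  by_contra hcon
  push Not at hcon
  have hr0 : (0 : ℝ) < r := by exact_mod_cast (show 0 < r by omega)
  have hDc : Dᶜ.card + D.card = r := by
    have := Finset.card_compl_add_card D
    simpa using this
  have hne : Dᶜ.Nonempty := by
    rw [← Finset.card_pos]; omega
  have h1 : ∑ i ∈ Dᶜ, (2 * ((d : ℝ) / r)) * (W.card : ℝ) ^ 2 <
      ∑ i ∈ Dᶜ, (∑ x ∈ W, ((W.filter (fun y => x ≠ y ∧ i ∉ χ x y)).card : ℝ)) :=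
    Finset.sum_lt_sum_of_nonempty hne (fun i hi => hcon i (Finset.mem_compl.1 hi))
  rw [Finset.sum_comm] at h1
  have h2 : ∀ x ∈ W, ∑ i ∈ Dᶜ, ((W.filter (fun y => x ≠ y ∧ i ∉ χ x y)).card : ℝ)
      ≤ W.card * d := by
    intro x hx
    have e : ∑ i ∈ Dᶜ, (W.filter (fun y => x ≠ y ∧ i ∉ χ x y)).card
        = ∑ y ∈ W, (Dᶜ.filter (fun i => x ≠ y ∧ i ∉ χ x y)).card := by
      have := Finset.sum_card_bipartiteAbove_eq_sum_card_bipartiteBelow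
          (s := Dᶜ) (t := W) (fun i y => x ≠ y ∧ i ∉ χ x y)
      simpa only [Finset.bipartiteAbove, Finset.bipartiteBelow] using this
    have e2 : ∑ y ∈ W, (Dᶜ.filter (fun i => x ≠ y ∧ i ∉ χ x y)).card ≤ W.card * d := by
      rw [← smul_eq_mul]
      refine Finset.sum_le_card_nsmul _ _ _ ?_
      intro y _
      by_cases hxy : x = y
      · simp [hxy]
      · have : (Dᶜ.filter (fun i => x ≠ y ∧ i ∉ χ x y)) ⊆ (χ x y)ᶜ := by
          intro i hi
          simp at hi ⊢
          exact hi.2.2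
        have h3 := Finset.card_le_card this
        have h4 := Finset.card_compl_add_card (χ x y)
        have h5 := hc x y hxy
        rw [Fintype.card_fin] at h4
        omega
    exact_mod_cast (e ▸ e2)
  have h3 := Finset.sum_le_sum h2
  simp only [Finset.sum_const, nsmul_eq_mul] at h3 h1
  have h5 : (r : ℝ) ≤ 2 * (Dᶜ.card : ℝ) := by
    exact_mod_cast (show r ≤ 2 * Dᶜ.card by omega)
  have h6 : (W.card : ℝ) * (W.card * d) ≤ (Dᶜ.card : ℝ) * (2 * ((d : ℝ) / r) * (W.card : ℝ) ^ 2) := by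
    have : (d : ℝ) ≤ (Dᶜ.card : ℝ) * (2 * ((d : ℝ) / r)) := by
      have : (Dᶜ.card : ℝ) * (2 * ((d : ℝ) / r)) = (2 * (Dᶜ.card : ℝ)) * d / r := by ring
      rw [this, le_div_iff₀ hr0]
      have : (0 : ℝ) ≤ d := Nat.cast_nonneg _
      nlinarith
    nlinarith [sq_nonneg (W.card : ℝ)]
  linarith

theorem up_iter {α : Type*} [DecidableEq α] (r d k p : ℕ) (χ : α → α → Finset (Fin r))
    (hs : ∀ u v, χ u v = χ v u)
    (hc : ∀ u v, u ≠ v → (χ u v).card + d = r) (W0 : Finset α) (hd : 1 ≤ d) (h4 : 4 * d ≤ r)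
    (hk : 1 ≤ k) (hp : 16 * ((d : ℝ) / r) * k < p + 1)
    (hno : ∀ i, ∀ S ⊆ W0, S.card = k → ¬ ∀ u ∈ S, ∀ v ∈ S, u ≠ v → i ∈ χ u v)
    (X : ℝ) (hX : X = 8 * ((r : ℝ) ^ p * (1 + 1 / r) ^ k)) (hX1 : 1 ≤ X)
    (hW : X ^ (2 * d) * (8 * k) ≤ W0.card) :
    ∀ j ≤ 2 * d, ∃ D : Finset (Fin r), ∃ W ⊆ W0, D.card = j ∧ (W0.card : ℝ) ≤ X ^ j * W.card ∧
      ∀ i ∈ D, ∀ S ⊆ W, S.card = p + 1 → ¬ ∀ u ∈ S, ∀ v ∈ S, u ≠ v → i ∈ χ u v := by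
  intro j
  have hr0 : (0 : ℝ) < r := by exact_mod_cast (show 0 < r by omega)
  have hd0 : (0 : ℝ) < d := by exact_mod_cast hd
  induction j with
  | zero => intro _; exact ⟨∅, W0, subset_rfl, rfl, by simp, by simp⟩
  | succ j ih =>
    intro hj
    obtain ⟨D, W, hWW, hDc, hcard, hD⟩ := ih (by omega)
    obtain ⟨i, hiD, hdens⟩ := dens_exists r d χ hc D W (by omega) hd
    have hXp : 0 < X ^ j := by positivity
    have hWbig : (8 * k : ℝ) ≤ W.card := by
      have h1 : X ^ j * (8 * k) ≤ X ^ j * W.card := by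
        refine le_trans ?_ hcard
        refine le_trans ?_ hW
        gcongr
        omega
      exact le_of_mul_le_mul_left h1 hXp
    obtain ⟨W', hW', hW'c, hW'm⟩ := es_step χ hs i W k p r (2 * ((d : ℝ) / r))
      (fun S hS => hno i S (hS.trans hWW)) (by positivity) hdens (by linarith)
      (by exact_mod_cast hWbig) hk (by omega)
    refine ⟨insert i D, W', hW'.trans hWW, by rw [Finset.card_insert_of_notMem hiD, hDc], ?_, ?_⟩
    · rw [← hX] at hW'c
      calc (W0.card : ℝ) ≤ X ^ j * W.card := hcard
        _ ≤ X ^ j * (X * W'.card) := by gcongr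
        _ = _ := by ring
    · intro c hcD S hS
      rcases Finset.mem_insert.1 hcD with rfl | h
      · exact hW'm S hS
      · exact hD c h S (hS.trans hW')

theorem up_small (r d k p n : ℕ) (hd : 1 ≤ d) (h4 : 4 * d ≤ r)
    (hk : 1 ≤ k) (hp : 16 * ((d : ℝ) / r) * k < p + 1)
    (hn : (8 * ((r : ℝ) ^ p * (1 + 1 / r) ^ k)) ^ (2 * d) * (8 * k) * 4 ^ (2 * d * p) ≤ n) :
    HasSetColouringRamsey r (r - d) k n := by
  intro χ hs hc
  by_contra hcon
  push Not at hcon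
  have hr1 : (1 : ℝ) ≤ r := by exact_mod_cast (show 1 ≤ r by omega)
  have hk1 : (1 : ℝ) ≤ k := by exact_mod_cast hk
  set X := (8 * ((r : ℝ) ^ p * (1 + 1 / r) ^ k)) with hX
  have hX1 : 1 ≤ X := by
    have h1 : (1 : ℝ) ≤ (r : ℝ) ^ p := one_le_pow₀ hr1
    have h2 : (1 : ℝ) ≤ (1 + 1 / r) ^ k := one_le_pow₀ (by
      have : (0 : ℝ) ≤ 1 / r := by positivity
      linarith)
    have : 1 ≤ (r : ℝ) ^ p * (1 + 1 / r) ^ k := one_le_mul_of_one_le_of_one_le h1 h2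
    linarith
  have hc' : ∀ u v, u ≠ v → (χ u v).card + d = r := fun u v h => by
    rw [hc u v h]; omega
  have h4p : (1 : ℝ) ≤ 4 ^ (2 * d * p) := one_le_pow₀ (by norm_num)
  have hA : 0 < X ^ (2 * d) := by positivity
  obtain ⟨D, W, hWs, hDc, hcard, hD⟩ := up_iter r d k p χ hs hc' Finset.univ hd h4 hk hp
    (fun i S _ hS hm => by
      obtain ⟨u, hu, v, hv, huv, h⟩ := hcon S i hS
      exact h (hm u hu v hv huv)) X hX hX1 (by
      simp only [Finset.card_univ, Fintype.card_fin]
      refine le_trans ?_ hn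
      have : 0 ≤ X ^ (2 * d) * (8 * k) := by positivity
      nlinarith) (2 * d) le_rfl
  simp only [Finset.card_univ, Fintype.card_fin] at hcard
  have hWc : (4 : ℝ) ^ (2 * d * p) ≤ W.card := by
    have h1 : X ^ (2 * d) * (4 : ℝ) ^ (2 * d * p) ≤ X ^ (2 * d) * W.card := by
      refine le_trans ?_ hcard
      refine le_trans ?_ hn
      have h1 : 0 ≤ X ^ (2 * d) * 4 ^ (2 * d * p) := by positivity
      nlinarith
    exact le_of_mul_le_mul_left h1 hA
  have hWc' : (2 * 2) ^ (2 * d * p) ≤ W.card := by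
    have : (4 : ℕ) ^ (2 * d * p) ≤ W.card := by exact_mod_cast hWc
    simpa using this
  obtain ⟨i, hi, S, hSW, hSc, hm⟩ := ramsey_std χ D (by rw [← Finset.card_pos]; omega) 2 (by norm_num) hs
    (2 * d * p) (fun _ => p) W (by
      intro x _ y _ hxy
      have h1 := Finset.card_union_add_card_inter D (χ x y)
      have h2 : (D ∪ χ x y).card ≤ r := by simpa using Finset.card_le_univ (D ∪ χ x y)
      have h3 := hc' x y hxy
      omega) (by simp [hDc]) hWc'
  exact hD i hi S hSW hSc hm

theorem up_large (r s k n : ℕ) (hs1 : 1 ≤ s) (hr : 1 ≤ r) (hk : 1 ≤ k)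
    (hn : (2 * r) ^ (r * k) ≤ n) :
    HasSetColouringRamsey r s k n := by
  intro χ hs hc
  haveI : NeZero r := ⟨by omega⟩
  obtain ⟨i, hi, S, hSW, hSc, hm⟩ := ramsey_std χ Finset.univ Finset.univ_nonempty r hr hs
    (r * (k - 1)) (fun _ => k - 1) Finset.univ (by
      intro x _ y _ hxy
      simp only [Finset.univ_inter, Finset.card_univ, Fintype.card_fin, hc x y hxy]
      nlinarith) (by simp) (by
      simp only [Finset.card_univ, Fintype.card_fin]
      refine le_trans (Nat.pow_le_pow_right (by omega) ?_) hn
      exact Nat.mul_le_mul_left _ (by omega))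
  exact ⟨S, i, by omega, hm⟩

theorem one_le_log_nat (r : ℕ) (hr : 3 ≤ r) : 1 ≤ Real.log r := by
  have h3 : (3 : ℝ) ≤ r := by exact_mod_cast hr
  rw [Real.le_log_iff_exp_le (by linarith)]
  linarith [Real.exp_one_lt_d9]

theorem upper_exists (r d k : ℕ) (hd : 1 ≤ d) (hdr : d < r) (hr : 3 ≤ r) (hk : 1 ≤ k)
    (E : ℝ) (hE : E = (d : ℝ) / r * k) (hE1 : 1 ≤ E) :
    ∃ n : ℕ, HasSetColouringRamsey r (r - d) k n ∧
      (n : ℝ) ≤ Real.exp (110 * (E * d * Real.log r)) := by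
  have hl := one_le_log_nat r hr
  set l := Real.log r with hldef
  have hr3 : (3 : ℝ) ≤ r := by exact_mod_cast hr
  have hr0 : (0 : ℝ) < r := by linarith
  have hd1 : (1 : ℝ) ≤ d := by exact_mod_cast hd
  have hk1 : (1 : ℝ) ≤ k := by exact_mod_cast hk
  have hrexp : (r : ℝ) = Real.exp l := (Real.exp_log hr0).symm
  have hrk : (r : ℝ) * E = d * k := by rw [hE]; field_simp
  have hEl : 1 ≤ E * l := one_le_mul_of_one_le_of_one_le hE1 hl
  have hEE : E ≤ E * l := le_mul_of_one_le_right (by linarith) hl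
  have hlE : l ≤ E * l := le_mul_of_one_le_left (by linarith) hE1
  have hkr : (k : ℝ) ≤ r * E := by rw [hrk]; nlinarith
  have he3 : (16 : ℝ) ≤ Real.exp 3 := by
    have h1 : (2.71 : ℝ) ≤ Real.exp 1 := by linarith [Real.exp_one_gt_d9]
    have : Real.exp 3 = Real.exp 1 ^ 3 := by rw [← Real.exp_nat_mul]; norm_num
    rw [this]
    calc (16 : ℝ) ≤ 2.71 ^ 3 := by norm_num
      _ ≤ _ := by gcongr
  by_cases h4 : 4 * d ≤ r
  · set p := ⌊16 * E⌋₊ with hp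
    have hple : (p : ℝ) ≤ 16 * E := Nat.floor_le (by linarith)
    set Q := (8 * ((r : ℝ) ^ p * (1 + 1 / r) ^ k)) ^ (2 * d) * (8 * k) * 4 ^ (2 * d * p) with hQ
    refine ⟨⌈Q⌉₊, up_small r d k p _ hd h4 hk ?_ (Nat.le_ceil _), ?_⟩
    · have := Nat.lt_floor_add_one (16 * E)
      calc 16 * ((d : ℝ) / r) * k = 16 * E := by rw [hE]; ring
        _ < _ := this
    have hX1 : 1 ≤ 8 * ((r : ℝ) ^ p * (1 + 1 / r) ^ k) := by
      have h1 : (1 : ℝ) ≤ (r : ℝ) ^ p := one_le_pow₀ (by linarith)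
      have h2 : (1 : ℝ) ≤ (1 + 1 / r) ^ k := one_le_pow₀ (by
        have : (0 : ℝ) ≤ 1 / r := by positivity
        linarith)
      have : 1 ≤ (r : ℝ) ^ p * (1 + 1 / r) ^ k := one_le_mul_of_one_le_of_one_le h1 h2
      linarith
    have hQ1 : 1 ≤ Q := by
      refine one_le_mul_of_one_le_of_one_le (one_le_mul_of_one_le_of_one_le (one_le_pow₀ hX1) (by linarith)) (one_le_pow₀ (by norm_num))
    have hceil : (⌈Q⌉₊ : ℝ) ≤ 2 * Q := by
      have := Nat.ceil_lt_add_one (show 0 ≤ Q by linarith)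
      linarith
    refine hceil.trans ?_
    have hXle : 8 * ((r : ℝ) ^ p * (1 + 1 / r) ^ k) ≤ Real.exp (20 * (E * l)) := by
      have h1 : (8 : ℝ) ≤ Real.exp (3 * (E * l)) := by
        refine le_trans (by linarith : (8 : ℝ) ≤ Real.exp 3) (Real.exp_le_exp.2 (by linarith))
      have h2 : (r : ℝ) ^ p ≤ Real.exp (16 * (E * l)) := by
        rw [hrexp, ← Real.exp_nat_mul]
        refine Real.exp_le_exp.2 ?_
        nlinarith
      have h3 : (1 + 1 / (r : ℝ)) ^ k ≤ Real.exp (E * l) := by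
        have h31 : 1 + 1 / (r : ℝ) ≤ Real.exp (1 / r) := by
          linarith [Real.add_one_le_exp (1 / (r : ℝ))]
        calc (1 + 1 / (r : ℝ)) ^ k ≤ (Real.exp (1 / r)) ^ k := by gcongr
          _ = Real.exp (k * (1 / r)) := by rw [← Real.exp_nat_mul]
          _ ≤ _ := by
            refine Real.exp_le_exp.2 (le_trans ?_ hEE)
            rw [mul_one_div, div_le_iff₀ hr0]
            linarith
      calc 8 * ((r : ℝ) ^ p * (1 + 1 / r) ^ k) ≤ Real.exp (3 * (E * l)) * (Real.exp (16 * (E * l)) * Real.exp (E * l)) := by gcongr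
        _ = _ := by rw [← Real.exp_add, ← Real.exp_add]; ring_nf
    have h1 : (8 * ((r : ℝ) ^ p * (1 + 1 / r) ^ k)) ^ (2 * d) ≤ Real.exp (40 * (E * d * l)) := by
      calc _ ≤ (Real.exp (20 * (E * l))) ^ (2 * d) := by gcongr
        _ = _ := by rw [← Real.exp_nat_mul]; push_cast; ring_nf
    have hEdl : E * l ≤ E * d * l := by nlinarith
    have h2 : (2 * (8 * k) : ℝ) ≤ Real.exp (5 * (E * d * l)) := by
      have hEe : E ≤ Real.exp E := by linarith [Real.add_one_le_exp E]
      calc (2 * (8 * k) : ℝ) = 16 * k := by ring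
        _ ≤ Real.exp 3 * (Real.exp l * Real.exp E) := by
          have : (k : ℝ) ≤ Real.exp l * Real.exp E := by
            refine hkr.trans ?_
            rw [← hrexp]; gcongr
          gcongr
        _ = Real.exp (3 + (l + E)) := by rw [← Real.exp_add, ← Real.exp_add]
        _ ≤ _ := Real.exp_le_exp.2 (by linarith)
    have h3 : (4 : ℝ) ^ (2 * d * p) ≤ Real.exp (64 * (E * d * l)) := by
      have h41 : (4 : ℝ) ≤ Real.exp 2 := by
        have : Real.exp 2 = Real.exp 1 ^ 2 := by rw [← Real.exp_nat_mul]; norm_num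
        rw [this]
        nlinarith [Real.exp_one_gt_d9]
      calc (4 : ℝ) ^ (2 * d * p) ≤ Real.exp 2 ^ (2 * d * p) := by gcongr
        _ = Real.exp (4 * d * p) := by rw [← Real.exp_nat_mul]; push_cast; ring_nf
        _ ≤ _ := by
          refine Real.exp_le_exp.2 ?_
          calc (4 * d * p : ℝ) ≤ 4 * d * (16 * E) := by gcongr
            _ = 64 * d * E := by ring
            _ ≤ 64 * d * (E * l) := by gcongr
            _ = _ := by ring
    calc 2 * Q = (8 * ((r : ℝ) ^ p * (1 + 1 / r) ^ k)) ^ (2 * d) * (2 * (8 * k)) * 4 ^ (2 * d * p) := by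
          rw [hQ]; ring
      _ ≤ Real.exp (40 * (E * d * l)) * Real.exp (5 * (E * d * l)) * Real.exp (64 * (E * d * l)) := by
        gcongr
      _ = Real.exp (109 * (E * d * l)) := by rw [← Real.exp_add, ← Real.exp_add]; ring_nf
      _ ≤ _ := Real.exp_le_exp.2 (by linarith)
  · push Not at h4
    refine ⟨(2 * r) ^ (r * k), up_large r (r - d) k _ (by omega) (by omega) hk le_rfl, ?_⟩
    have h4' : (r : ℝ) ≤ 4 * d := by exact_mod_cast h4.le
    push_cast
    have h2r : 2 * (r : ℝ) ≤ Real.exp (2 * l) := by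
      have : Real.exp (2 * l) = r ^ 2 := by
        rw [hrexp, ← Real.exp_nat_mul]; norm_num
      rw [this]; nlinarith
    calc (2 * (r : ℝ)) ^ (r * k) ≤ (Real.exp (2 * l)) ^ (r * k) := by gcongr
      _ = Real.exp (2 * (r * k) * l) := by rw [← Real.exp_nat_mul]; push_cast; ring_nf
      _ ≤ _ := by
        refine Real.exp_le_exp.2 ?_
        have hd0 : (0 : ℝ) < d := by linarith
        have hk4 : (k : ℝ) ≤ 4 * E := by
          have : (d : ℝ) * k ≤ d * (4 * E) := by rw [← hrk]; nlinarith
          exact le_of_mul_le_mul_left this hd0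
        have : (r * k : ℝ) ≤ (4 * d) * (4 * E) := by gcongr
        have h0 : 0 ≤ E * d * l := by positivity
        calc 2 * (r * k : ℝ) * l ≤ 2 * ((4 * d) * (4 * E)) * l := by gcongr
          _ = 32 * (E * d * l) := by ring
          _ ≤ _ := by linarith

theorem lower_tool {r s k n N : ℕ} (hN : HasSetColouringRamsey r s k N)
    (hn : ¬ HasSetColouringRamsey r s k n) : n + 1 ≤ setRamsey r s k := by
  have h1 : HasSetColouringRamsey r s k (setRamsey r s k) :=
    Nat.sInf_mem (s := {n | HasSetColouringRamsey r s k n}) ⟨N, hN⟩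
  by_contra h
  exact hn (has_mono (by omega) h1)

theorem lower_trivial (r s k : ℕ) (hsr : s ≤ r) (hk : 1 ≤ k) :
    ¬ HasSetColouringRamsey r s k (k - 1) := by
  intro h
  obtain ⟨C, hC⟩ := Finset.exists_subset_card_eq (s := (Finset.univ : Finset (Fin r))) (n := s) (by simpa using hsr)
  obtain ⟨S, i, hS, -⟩ := h (fun _ _ => C) (fun _ _ => rfl) (fun _ _ _ => hC.2)
  have := Finset.card_le_univ S
  simp at this
  omega

theorem lower_of_miss (r d k n : ℕ) (hdr : d ≤ r) (M : Fin n → Fin n → Finset (Fin r))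
    (hs : ∀ u v, M u v = M v u) (hc : ∀ u v, u ≠ v → (M u v).card ≤ d)
    (hno : ∀ i, ∀ S : Finset (Fin n), S.card = k → ∃ u ∈ S, ∃ v ∈ S, u ≠ v ∧ i ∈ M u v) :
    ¬ HasSetColouringRamsey r (r - d) k n := by
  have hpad : ∀ C : Finset (Fin r), ∃ C', C ⊆ C' ∧ (C.card ≤ d → C'.card = d) := by
    intro C
    by_cases h : C.card ≤ d
    · obtain ⟨C', h1, h2⟩ := Finset.exists_superset_card_eq h (by simpa using hdr)
      exact ⟨C', h1, fun _ => h2⟩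
    · exact ⟨C, subset_rfl, fun h' => absurd h' h⟩
  choose g hg1 hg2 using hpad
  intro H
  obtain ⟨S, i, hS, hm⟩ := H (fun u v => (g (M u v))ᶜ) (fun u v => by simp only [hs u v])
    (fun u v huv => by rw [Finset.card_compl, hg2 _ (hc u v huv), Fintype.card_fin])
  obtain ⟨u, hu, v, hv, huv, hi⟩ := hno i S hS
  have := hm u hu v hv huv
  exact (Finset.mem_compl.1 this) (hg1 _ hi)

theorem sum_prod_univ {ι κ : Type*} [Fintype ι] [DecidableEq ι] [Fintype κ] (f : ι → κ → ℝ) :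
    ∑ w : ι → κ, ∏ i, f i (w i) = ∏ i, ∑ a, f i a := by
  rw [Finset.prod_univ_sum, Fintype.piFinset_univ]

theorem gv_ball (r t d : ℕ) (δ : ℝ) (hδ : 0 < δ) (w' : Fin r → Fin t) :
    ((Finset.univ.filter (fun w : Fin r → Fin t =>
        d ≤ (Finset.univ.filter (fun i => w i = w' i)).card)).card : ℝ) * (1 + δ) ^ d
      ≤ (t + δ) ^ r := by
  have h1 : ∑ w : Fin r → Fin t, ∏ i, (if w i = w' i then 1 + δ else 1) = (t + δ) ^ r := by
    rw [sum_prod_univ (fun i a => if a = w' i then 1 + δ else (1 : ℝ))]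
    have : ∀ i : Fin r, ∑ a : Fin t, (if a = w' i then 1 + δ else (1 : ℝ)) = t + δ := by
      intro i
      have : ∀ a : Fin t, (if a = w' i then 1 + δ else (1 : ℝ)) = 1 + (if a = w' i then δ else 0) := by
        intro a; split_ifs <;> simp
      simp [this, Finset.sum_add_distrib]
    simp [this]
  rw [← h1, ← nsmul_eq_mul]
  refine le_trans ?_ (Finset.sum_le_sum_of_subset_of_nonneg (Finset.filter_subset
    (fun w : Fin r → Fin t => d ≤ (Finset.univ.filter (fun i => w i = w' i)).card) _)
    (fun w _ _ => Finset.prod_nonneg (fun i _ => by split_ifs <;> positivity)))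
  refine Finset.card_nsmul_le_sum _ _ _ ?_
  intro w hw
  have hw' := (Finset.mem_filter.1 hw).2
  rw [Finset.prod_ite]
  simp only [Finset.prod_const, one_pow, mul_one]
  exact pow_le_pow_right₀ (by linarith) hw'

theorem gv_code (r t d : ℕ) (hdr : d ≤ r) (δ : ℝ) (hδ : 0 < δ) :
    ∃ n : ℕ, ¬ HasSetColouringRamsey r (r - d) (t + 1) n ∧
      (t : ℝ) ^ r * (1 + δ) ^ d ≤ n * (t + δ) ^ r := by
  classical
  let agree : (Fin r → Fin t) → (Fin r → Fin t) → Finset (Fin r) :=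
    fun w w' => Finset.univ.filter (fun i => w i = w' i)
  have hag : ∀ w w', agree w w' = agree w' w := by
    intro w w'; ext i; simp [agree, eq_comm]
  let good : Finset (Fin r → Fin t) → Prop := fun C => ∀ x ∈ C, ∀ y ∈ C, x ≠ y → (agree x y).card ≤ d
  obtain ⟨C, hC, hmax⟩ := Finset.exists_max_image
    ((Finset.univ : Finset (Finset (Fin r → Fin t))).filter good) Finset.card ⟨∅, by simp [good]⟩
  have hCg : good C := (Finset.mem_filter.1 hC).2
  refine ⟨C.card, ?_, ?_⟩
  · let e := C.equivFin.symm
    refine lower_of_miss r d (t + 1) C.card hdr (fun u v => agree (e u).1 (e v).1)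
      (fun u v => hag _ _) ?_ ?_
    · intro u v huv
      refine hCg _ (e u).2 _ (e v).2 ?_
      intro h
      exact huv (e.injective (Subtype.ext h))
    · intro i S hS
      obtain ⟨u, hu, v, hv, huv, h⟩ := Finset.exists_ne_map_eq_of_card_lt_of_maps_to
        (s := S) (t := (Finset.univ : Finset (Fin t))) (by simp [hS]) (f := fun u => (e u).1 i)
        (fun _ _ => by simp)
      exact ⟨u, hu, v, hv, huv, by simpa [agree] using h⟩
  · have hcov : (Finset.univ : Finset (Fin r → Fin t)) ⊆
        C.biUnion (fun w' => Finset.univ.filter (fun w => d ≤ (agree w w').card)) := by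
      intro w _
      by_contra hw
      simp only [Finset.mem_biUnion, Finset.mem_filter, Finset.mem_univ, true_and, not_exists,
        not_and, not_le] at hw
      have hwC : w ∉ C := by
        intro h
        have := hw w h
        simp [agree] at this
        omega
      have hg : good (insert w C) := by
        intro x hx y hy hxy
        rcases Finset.mem_insert.1 hx with hx1 | hx1
        · rcases Finset.mem_insert.1 hy with hy1 | hy1
          · exact absurd (hx1.trans hy1.symm) hxy
          · rw [hx1]; exact (hw y hy1).le
        · rcases Finset.mem_insert.1 hy with hy1 | hy1
          · rw [hy1, hag]; exact (hw x hx1).le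
          · exact hCg x hx1 y hy1 hxy
      have := hmax (insert w C) (by simp [hg])
      rw [Finset.card_insert_of_notMem hwC] at this
      omega
    have h1 := (Finset.card_le_card hcov).trans Finset.card_biUnion_le
    have h2 : (t : ℝ) ^ r ≤ ∑ w' ∈ C,
        ((Finset.univ.filter (fun w => d ≤ (agree w w').card)).card : ℝ) := by
      have : (Finset.univ : Finset (Fin r → Fin t)).card = t ^ r := by simp
      rw [this] at h1
      exact_mod_cast h1
    calc (t : ℝ) ^ r * (1 + δ) ^ d ≤ (∑ w' ∈ C,
        ((Finset.univ.filter (fun w => d ≤ (agree w w').card)).card : ℝ)) * (1 + δ) ^ d := by gcongr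
      _ = ∑ w' ∈ C, ((Finset.univ.filter (fun w => d ≤ (agree w w').card)).card : ℝ) * (1 + δ) ^ d := by
        rw [Finset.sum_mul]
      _ ≤ ∑ w' ∈ C, (t + δ) ^ r := Finset.sum_le_sum (fun w' _ => gv_ball r t d δ hδ w')
      _ = _ := by simp

theorem regimeC (r t d : ℕ) (hdr : d ≤ r) (hd : 1 ≤ d) (δ : ℝ) (hδ : 0 < δ)
    (ht : (1 + δ) * r ≤ t * d) :
    ∃ n : ℕ, ¬ HasSetColouringRamsey r (r - d) (t + 1) n ∧
      Real.exp ((Real.log (1 + δ) - δ / (1 + δ)) * d) ≤ n := by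
  obtain ⟨n, h1, h2⟩ := gv_code r t d hdr δ hδ
  refine ⟨n, h1, ?_⟩
  have hr0 : (0 : ℝ) < r := by exact_mod_cast (show 0 < r by omega)
  have hd0 : (0 : ℝ) < d := by exact_mod_cast hd
  have ht0 : (0 : ℝ) < t := by
    have : 0 < (t : ℝ) * d := lt_of_lt_of_le (by positivity) ht
    exact pos_of_mul_pos_left this hd0.le
  have h3 : ((t : ℝ) + δ) ^ r ≤ t ^ r * Real.exp (δ / (1 + δ) * d) := by
    have : (t : ℝ) + δ ≤ t * Real.exp (δ / t) := by
      have := Real.add_one_le_exp (δ / t)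
      calc (t : ℝ) + δ = t * (δ / t + 1) := by field_simp; ring
        _ ≤ _ := by gcongr
    calc ((t : ℝ) + δ) ^ r ≤ (t * Real.exp (δ / t)) ^ r := by gcongr
      _ = t ^ r * Real.exp (r * (δ / t)) := by rw [mul_pow, ← Real.exp_nat_mul]
      _ ≤ _ := by
        refine mul_le_mul_of_nonneg_left (Real.exp_le_exp.2 ?_) (by positivity)
        rw [← mul_div_assoc, div_mul_eq_mul_div, div_le_div_iff₀ ht0 (by linarith)]
        nlinarith
  have h4 : (1 + δ) ^ d = Real.exp (Real.log (1 + δ) * d) := by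
    rw [mul_comm, Real.exp_nat_mul, Real.exp_log (by linarith)]
  rw [sub_mul, Real.exp_sub, div_le_iff₀ (Real.exp_pos _), ← h4]
  have h5 : (t : ℝ) ^ r * (1 + δ) ^ d ≤ t ^ r * (n * Real.exp (δ / (1 + δ) * d)) := by
    calc _ ≤ n * ((t : ℝ) + δ) ^ r := h2
      _ ≤ n * (t ^ r * Real.exp (δ / (1 + δ) * d)) := by gcongr
      _ = _ := by ring
  exact le_of_mul_le_mul_left h5 (by positivity)

theorem cδ_pos (δ : ℝ) (hδ : 0 < δ) : 0 < Real.log (1 + δ) - δ / (1 + δ) := by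
  have h := Real.log_lt_sub_one_of_pos (x := (1 + δ)⁻¹) (by positivity) (by
    intro h
    have : 1 + δ = 1 := inv_eq_one.1 h
    linarith)
  rw [Real.log_inv] at h
  have : δ / (1 + δ) = 1 - (1 + δ)⁻¹ := by field_simp; ring
  linarith

theorem card_restrict {ι κ : Type*} [Fintype ι] [DecidableEq ι] [Fintype κ] [DecidableEq κ]
    (T : Finset ι) (B : Finset κ) [DecidablePred fun ω : ι → κ => ∀ i ∈ T, ω i ∈ B] :
    ((Finset.univ.filter (fun ω : ι → κ => ∀ i ∈ T, ω i ∈ B)).card : ℝ) * (Fintype.card κ : ℝ) ^ T.card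
      = (Fintype.card (ι → κ) : ℝ) * (B.card : ℝ) ^ T.card := by
  have h1 : Finset.univ.filter (fun ω : ι → κ => ∀ i ∈ T, ω i ∈ B)
      = Fintype.piFinset (fun i => if i ∈ T then B else Finset.univ) := by
    ext ω
    simp only [Finset.mem_filter, Finset.mem_univ, true_and, Fintype.mem_piFinset]
    refine forall_congr' fun i => ?_
    by_cases h : i ∈ T <;> simp [h]
  have h2 : (Fintype.piFinset (fun i => if i ∈ T then B else (Finset.univ : Finset κ))).card
      = B.card ^ T.card * (Fintype.card κ) ^ (Tᶜ).card := by
    rw [Fintype.card_piFinset, ← Finset.prod_mul_prod_compl T]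
    congr 1
    · rw [Finset.prod_congr rfl (g := fun _ => B.card)]
      · simp
      · intro i hi; simp [hi]
    · rw [Finset.prod_congr rfl (g := fun _ => Fintype.card κ)]
      · simp
      · intro i hi
        have := Finset.mem_compl.1 hi
        simp [this]
  rw [h1, h2, Fintype.card_fun, ← Finset.card_compl_add_card T]
  push_cast
  ring

theorem union_card {Ω β : Type*} [Fintype Ω] [DecidableEq Ω] (Bs : Finset β) (bad : β → Ω → Prop)
    [∀ b, DecidablePred (bad b)] [DecidablePred fun ω => ∃ b ∈ Bs, bad b ω] (x : ℝ)
    (h : ∀ b ∈ Bs, ((Finset.univ.filter (bad b)).card : ℝ) ≤ x) :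
    ((Finset.univ.filter (fun ω => ∃ b ∈ Bs, bad b ω)).card : ℝ) ≤ Bs.card * x := by
  have h1 : Finset.univ.filter (fun ω => ∃ b ∈ Bs, bad b ω) ⊆
      Bs.biUnion (fun b => Finset.univ.filter (bad b)) := by
    intro ω hω
    simpa using hω
  have h2 := (Finset.card_le_card h1).trans Finset.card_biUnion_le
  calc ((Finset.univ.filter (fun ω => ∃ b ∈ Bs, bad b ω)).card : ℝ)
      ≤ ∑ b ∈ Bs, ((Finset.univ.filter (bad b)).card : ℝ) := by exact_mod_cast h2
    _ ≤ ∑ b ∈ Bs, x := Finset.sum_le_sum h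
    _ = _ := by simp

theorem exists_avoid {Ω : Type*} [Fintype Ω] (P Q : Ω → Prop) [DecidablePred P] [DecidablePred Q]
    (h : ((Finset.univ.filter P).card : ℝ) + ((Finset.univ.filter Q).card : ℝ) < Fintype.card Ω) :
    ∃ ω, ¬ P ω ∧ ¬ Q ω := by
  classical
  by_contra hcon
  push Not at hcon
  have h1 : (Finset.univ : Finset Ω) ⊆ Finset.univ.filter P ∪ Finset.univ.filter Q := by
    intro ω _
    by_cases hp : P ω
    · simp [hp]
    · simp [hcon ω hp]
  have h2 := (Finset.card_le_card h1).trans (Finset.card_union_le _ _)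
  have h3 : (Fintype.card Ω : ℝ) ≤ ((Finset.univ.filter P).card : ℝ) + ((Finset.univ.filter Q).card : ℝ) := by
    exact_mod_cast h2
  linarith

theorem exists_avoid1 {Ω β : Type*} [Fintype Ω] [DecidableEq Ω] (Bs : Finset β) (bad : β → Ω → Prop)
    (x : ℝ) (h : ∀ b ∈ Bs, ∀ _ : DecidablePred (bad b), ((Finset.univ.filter (bad b)).card : ℝ) ≤ x)
    (hx : (Bs.card : ℝ) * x < Fintype.card Ω) :
    ∃ ω, ∀ b ∈ Bs, ¬ bad b ω := by
  classical
  have hu := union_card Bs bad x (fun b hb => h b hb _)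
  obtain ⟨ω, hω, -⟩ := exists_avoid (fun ω => ∃ b ∈ Bs, bad b ω) (fun _ => False) (by
    simp only [Finset.filter_false, Finset.card_empty, Nat.cast_zero, add_zero]
    exact lt_of_le_of_lt hu hx)
  exact ⟨ω, fun b hb hbad => hω ⟨b, hb, hbad⟩⟩

/-- The set of (unordered) pairs in a finset. -/
def prs {α : Type*} [DecidableEq α] (S : Finset α) : Finset (Sym2 α) := S.offDiag.image Sym2.mk.uncurry

theorem card_prs {α : Type*} [DecidableEq α] (S : Finset α) : (prs S).card = S.card.choose 2 := by
  simpa [prs] using Sym2.card_image_offDiag S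

theorem mem_prs {α : Type*} [DecidableEq α] (S : Finset α) (e : Sym2 α) :
    e ∈ prs S ↔ ∃ u ∈ S, ∃ v ∈ S, u ≠ v ∧ s(u, v) = e := by
  simp only [prs, Finset.mem_image, Finset.mem_offDiag, Prod.exists]
  constructor
  · rintro ⟨a, b, ⟨ha, hb, hab⟩, h⟩; exact ⟨a, ha, b, hb, hab, h⟩
  · rintro ⟨a, ha, b, hb, hab, h⟩; exact ⟨a, b, ⟨ha, hb, hab⟩, h⟩

theorem choose_two_real (m : ℕ) : ((m.choose 2 : ℕ) : ℝ) = (m : ℝ) * (m - 1) / 2 :=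
  Nat.cast_choose_two ℝ m

theorem one_sub_pow_le (x : ℝ) (hx : x ≤ 1) (N : ℕ) : (1 - x) ^ N ≤ Real.exp (-(N * x)) := by
  have := Real.add_one_le_exp (-x)
  calc (1 - x) ^ N ≤ (Real.exp (-x)) ^ N := pow_le_pow_left₀ (by linarith) (by linarith) N
    _ = _ := by rw [← Real.exp_nat_mul]; ring_nf

theorem regimeB_num (n q k : ℕ) (E W : ℝ) (hW : 0 < W) (hE1 : 32 ≤ E) (hq0 : (0 : ℝ) < q) (hk2 : (2 : ℝ) ≤ k)
    (hqE : (q : ℝ) * E ≤ 2 * k) (hnle : (n : ℝ) ≤ Real.exp (E / 16)) :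
    ((n.choose k : ℕ) : ℝ) * q * (W * Real.exp (-((k.choose 2 : ℕ) * (1 / (q : ℝ))))) < W := by
  have hch : ((n.choose k : ℕ) : ℝ) ≤ Real.exp (k * E / 16) := by
    calc ((n.choose k : ℕ) : ℝ) ≤ (n : ℝ) ^ k := by exact_mod_cast Nat.choose_le_pow n k
      _ ≤ (Real.exp (E / 16)) ^ k := by gcongr
      _ = _ := by rw [← Real.exp_nat_mul]; ring_nf
  have hqexp : (q : ℝ) < Real.exp (k * E / 16) := by
    have h1 := Real.add_one_le_exp (k * E / 16)
    nlinarith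
  have hN : (k * E / 8 : ℝ) ≤ (k.choose 2 : ℕ) * (1 / (q : ℝ)) := by
    rw [choose_two_real, mul_one_div, le_div_iff₀ hq0]
    nlinarith
  have h1 : ((n.choose k : ℕ) : ℝ) * q < Real.exp (k * E / 16) * Real.exp (k * E / 16) :=
    lt_of_le_of_lt (mul_le_mul_of_nonneg_right hch hq0.le)
      (mul_lt_mul_of_pos_left hqexp (Real.exp_pos _))
  have h2 : Real.exp (-((k.choose 2 : ℕ) * (1 / (q : ℝ)))) ≤ Real.exp (-(k * E / 8)) :=
    Real.exp_le_exp.2 (by linarith)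
  calc ((n.choose k : ℕ) : ℝ) * q * (W * Real.exp (-((k.choose 2 : ℕ) * (1 / (q : ℝ)))))
      < Real.exp (k * E / 16) * Real.exp (k * E / 16) * (W * Real.exp (-((k.choose 2 : ℕ) * (1 / (q : ℝ))))) :=
        mul_lt_mul_of_pos_right h1 (by positivity)
    _ ≤ Real.exp (k * E / 16) * Real.exp (k * E / 16) * (W * Real.exp (-(k * E / 8))) := by gcongr
    _ = W * Real.exp (k * E / 16 + k * E / 16 + -(k * E / 8)) := by
      rw [Real.exp_add, Real.exp_add]; ring
    _ = _ := by
      rw [show (k : ℝ) * E / 16 + k * E / 16 + -(k * E / 8) = 0 by ring]; simp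

theorem regimeB (r d k : ℕ) (hd : 1 ≤ d) (hdr : d < r) (hk : 2 ≤ k)
    (E : ℝ) (hE : E = (d : ℝ) / r * k) (hE1 : 32 ≤ E) :
    ∃ n : ℕ, ¬ HasSetColouringRamsey r (r - d) k n ∧ Real.exp (E / 16) ≤ n + 1 := by
  classical
  have hr0 : (0 : ℝ) < r := by exact_mod_cast (show 0 < r by omega)
  have hd0 : (0 : ℝ) < d := by exact_mod_cast hd
  have hd1 : (1 : ℝ) ≤ d := by exact_mod_cast hd
  have hk2 : (2 : ℝ) ≤ k := by exact_mod_cast hk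
  set q := (r - 1) / d + 1 with hq
  have hqr : (q : ℝ) * d ≤ 2 * r := by
    have : q * d ≤ 2 * r := by
      have := Nat.div_mul_le_self (r - 1) d
      rw [hq, add_mul]; omega
    exact_mod_cast this
  have hq0 : (0 : ℝ) < q := by rw [hq]; positivity
  have hq1 : (1 : ℝ) ≤ q := by rw [hq]; push_cast; linarith [Nat.cast_nonneg (α := ℝ) ((r - 1) / d)]
  have hqE : (q : ℝ) * E ≤ 2 * k := by
    rw [hE]
    have : (q : ℝ) * (d / r * k) = (q * d) * k / r := by ring
    rw [this, div_le_iff₀ hr0]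
    nlinarith
  set n := ⌊Real.exp (E / 16)⌋₊ with hn
  refine ⟨n, ?_, (Nat.lt_floor_add_one _).le⟩
  have hnle : (n : ℝ) ≤ Real.exp (E / 16) := Nat.floor_le (Real.exp_pos _).le
  have hq1n : 1 ≤ q := Nat.le_add_left 1 _
  have hql : ∀ i : Fin r, (i : ℕ) / d < q := by
    intro i
    have : (i : ℕ) / d ≤ (r - 1) / d := Nat.div_le_div_right (by omega)
    omega
  clear_value q n
  -- choose colouring
  have hex := exists_avoid1 (Ω := Sym2 (Fin n) → Fin q)
    ((Finset.univ.powersetCard k : Finset (Finset (Fin n))) ×ˢ (Finset.univ : Finset (Fin q)))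
    (fun b ω => ∀ e ∈ prs b.1, ω e ∈ (Finset.univ.erase b.2))
    (Fintype.card (Sym2 (Fin n) → Fin q) * Real.exp (-((k.choose 2 : ℕ) * (1 / (q : ℝ)))))
    (by
      intro b hb inst
      have hS := (Finset.mem_powersetCard.1 (Finset.mem_product.1 hb).1).2
      have h1 := card_restrict (prs b.1) (Finset.univ.erase b.2)
      rw [card_prs, hS, Finset.card_erase_of_mem (Finset.mem_univ _), Finset.card_univ, Fintype.card_fin] at h1
      have hq1' : ((q - 1 : ℕ) : ℝ) = q * (1 - 1 / q) := by
        rw [Nat.cast_sub hq1n]; field_simp; push_cast; ring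
      rw [hq1', mul_pow, mul_comm ((q : ℝ) ^ _), ← mul_assoc] at h1
      have h2 := mul_right_cancel₀ (by positivity) h1
      rw [h2]
      refine mul_le_mul_of_nonneg_left ?_ (Nat.cast_nonneg _)
      exact one_sub_pow_le _ (by rw [div_le_one hq0]; exact hq1) _)
    (by
      rw [Finset.card_product, Finset.card_powersetCard, Finset.card_univ, Finset.card_univ, Fintype.card_fin, Fintype.card_fin]
      have hΩ : (0 : ℝ) < Fintype.card (Sym2 (Fin n) → Fin q) := by
        rw [Fintype.card_fun, Fintype.card_fin]; push_cast; positivity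
      have := regimeB_num n q k E _ hΩ hE1 hq0 hk2 hqE hnle
      rw [Nat.cast_mul]
      exact this)
  obtain ⟨ω, hω⟩ := hex
  refine lower_of_miss r d k n hdr.le (fun u v => Finset.univ.filter (fun i : Fin r => (i : ℕ) / d = (ω s(u, v) : ℕ))) ?_ ?_ ?_
  · intro u v; rw [Sym2.eq_swap]
  · intro u v _
    have : (Finset.univ.filter (fun i : Fin r => (i : ℕ) / d = (ω s(u, v) : ℕ))).card ≤ (Finset.range d).card := by
      refine Finset.card_le_card_of_injOn (fun i => (i : ℕ) % d) ?_ ?_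
      · intro i _
        simpa using Nat.mod_lt _ (by omega)
      · intro i hi j hj hij
        simp only [Finset.coe_filter, Finset.mem_univ, true_and, Set.mem_ofPred_eq] at hi hj
        simp only at hij
        ext
        rw [← Nat.div_add_mod (i : ℕ) d, ← Nat.div_add_mod (j : ℕ) d, hi, hj, hij]
    simpa using this
  · intro i S hS
    have hiq := hql i
    have := hω (S, ⟨(i : ℕ) / d, hiq⟩) (by simp [hS])
    push Not at this
    obtain ⟨e, he, h⟩ := this
    obtain ⟨u, hu, v, hv, huv, rfl⟩ := (mem_prs S e).1 he
    refine ⟨u, hu, v, hv, huv, ?_⟩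
    simp only [Finset.mem_erase, Finset.mem_univ, and_true, not_not] at h
    simp [h]

/-- `j` collides, under the map `φ i`, with an earlier vertex of `S`. -/
def Collides {r n n' : ℕ} (φ : Fin r → Fin n → Fin n') (S : Finset (Fin n)) (i : Fin r) (j : Fin n) : Prop :=
  ∃ j' ∈ S, j' < j ∧ φ i j' = φ i j

open Classical in
theorem first_inj {r n n' : ℕ} (φ : Fin r → Fin n → Fin n') (S : Finset (Fin n)) (i : Fin r)
    (a b : Fin n) (ha : a ∈ S) (hb : b ∈ S) (hca : ¬ Collides φ S i a) (hcb : ¬ Collides φ S i b)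
    (h : φ i a = φ i b) : a = b := by
  rcases lt_trichotomy a b with hab | hab | hab
  · exact absurd ⟨a, ha, hab, h⟩ hcb
  · exact hab
  · exact absurd ⟨b, hb, hab, h.symm⟩ hca

open Classical in
theorem regimeA_det (r d k n n' m e0 d' : ℕ) (hdr : d ≤ r) (hd : 1 ≤ d)
    (φ : Fin r → Fin n → Fin n') (Zr : Fin r → Sym2 (Fin n') → Prop)
    (hm : 4 * m ≤ 3 * k) (hd' : 2 * d' ≤ d + 2)
    (h0 : ∀ x y, x ≠ y → (Finset.univ.filter (fun i => φ i x = φ i y)).card ≤ d)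
    (h0' : ∀ S : Finset (Fin n), S.card = k →
      16 * (((Finset.univ : Finset (Fin r)) ×ˢ S).filter (fun z => Collides φ S z.1 z.2)).card ≤ d * k)
    (h1 : ∀ i, ∀ M : Finset (Fin n'), M.card = m → e0 ≤ ((prs M).filter (fun e => Zr i e)).card)
    (h2 : ∀ S : Finset (Fin n), S.card = k → ∀ F ⊆ prs S, F.card = e0 →
      ∀ Z ⊆ (Finset.univ : Finset (Fin r)) ×ˢ F, Z.card = d' * e0 →
      Set.InjOn (fun z : Fin r × Sym2 (Fin n) => (z.1, z.2.map (φ z.1))) (Z : Set (Fin r × Sym2 (Fin n))) →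
      ¬ ∀ z ∈ Z, Zr z.1 (z.2.map (φ z.1))) :
    ¬ HasSetColouringRamsey r (r - d) k n := by
  let EA : Sym2 (Fin n) → Finset (Fin r) := fun f =>
    Finset.univ.filter (fun i => (f.map (φ i)).IsDiag ∨ Zr i (f.map (φ i)))
  let M : Fin n → Fin n → Finset (Fin r) := fun x y =>
    if (EA s(x, y)).card ≤ d then EA s(x, y) else Finset.univ.filter (fun i => φ i x = φ i y)
  have hMsymm : ∀ u v, M u v = M v u := by
    intro u v
    simp only [M]
    rw [Sym2.eq_swap]
    congr 1
    ext i; simp [eq_comm]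
  refine lower_of_miss r d k n hdr M hMsymm ?_ ?_
  · intro u v huv
    simp only [M]
    split_ifs with h
    · exact h
    · exact h0 u v huv
  intro i0 S hS
  by_contra hcon
  push Not at hcon
  have hinj : ∀ u ∈ S, ∀ v ∈ S, φ i0 u = φ i0 v → u = v := by
    intro u hu v hv huv
    by_contra hne
    apply hcon u hu v hv hne
    simp only [M]
    split_ifs with h
    · simp [EA, huv]
    · simp [huv]
  -- few collisions
  let cc : Fin n → Finset (Fin r) := fun j => Finset.univ.filter (fun i => Collides φ S i j)
  let Sb := S.filter (fun j => d < 4 * (cc j).card)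
  let Sg := S.filter (fun j => ¬ d < 4 * (cc j).card)
  have hsplit : Sb.card + Sg.card = k := by
    rw [← hS]; exact Finset.card_filter_add_card_filter_not _
  have hsum : (((Finset.univ : Finset (Fin r)) ×ˢ S).filter (fun z => Collides φ S z.1 z.2)).card
      = ∑ j ∈ S, (cc j).card := by
    rw [Finset.card_filter, Finset.sum_product_right]
    refine Finset.sum_congr rfl fun j _ => ?_
    rw [Finset.card_filter]
  have hSb : Sb.card * d ≤ 4 * ∑ j ∈ S, (cc j).card := by
    calc Sb.card * d ≤ ∑ j ∈ Sb, 4 * (cc j).card := by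
          rw [← smul_eq_mul]
          exact Finset.card_nsmul_le_sum _ _ _ (fun j hj => (Finset.mem_filter.1 hj).2.le)
      _ ≤ ∑ j ∈ S, 4 * (cc j).card := Finset.sum_le_sum_of_subset (Finset.filter_subset _ _)
      _ = _ := by rw [Finset.mul_sum]
  have hSb4 : 4 * Sb.card ≤ k := by
    have := h0' S hS
    rw [hsum] at this
    have h3 : d * (4 * Sb.card) ≤ d * k := by nlinarith
    exact Nat.le_of_mul_le_mul_left h3 (by omega)
  obtain ⟨S2, hS2, hS2c⟩ := Finset.exists_subset_card_eq (s := Sg) (n := m) (by omega)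
  have hS2S : S2 ⊆ S := hS2.trans (Finset.filter_subset _ _)
  -- zero pairs
  let F0 := (prs S2).filter (fun f => Zr i0 (f.map (φ i0)))
  have hF0 : e0 ≤ F0.card := by
    have hMc : (S2.image (φ i0)).card = m := by
      rw [Finset.card_image_of_injOn, hS2c]
      intro u hu v hv huv
      exact hinj u (hS2S hu) v (hS2S hv) huv
    refine (h1 i0 _ hMc).trans ?_
    have hsub : (prs (S2.image (φ i0))).filter (fun e => Zr i0 e) ⊆ F0.image (fun f => f.map (φ i0)) := by
      intro e he
      obtain ⟨he1, he2⟩ := Finset.mem_filter.1 he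
      obtain ⟨u', hu', v', hv', huv', rfl⟩ := (mem_prs _ _).1 he1
      obtain ⟨u, hu, rfl⟩ := Finset.mem_image.1 hu'
      obtain ⟨v, hv, rfl⟩ := Finset.mem_image.1 hv'
      refine Finset.mem_image.2 ⟨s(u, v), ?_, by simp⟩
      refine Finset.mem_filter.2 ⟨(mem_prs _ _).2 ⟨u, hu, v, hv, ?_, rfl⟩, by simpa using he2⟩
      rintro rfl; exact huv' rfl
    exact (Finset.card_le_card hsub).trans Finset.card_image_le
  obtain ⟨F, hF, hFc⟩ := Finset.exists_subset_card_eq (s := F0) (n := e0) hF0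
  let B : Sym2 (Fin n) → Finset (Fin r) := fun f =>
    Finset.univ.filter (fun i => Zr i (f.map (φ i)) ∧ ∀ u ∈ f, ¬ Collides φ S i u)
  have hB : ∀ f ∈ F, d' ≤ (B f).card := by
    intro f hf
    obtain ⟨hf1, hf2⟩ := Finset.mem_filter.1 (hF hf)
    obtain ⟨u, hu, v, hv, huv, rfl⟩ := (mem_prs _ _).1 hf1
    have hbig : d < (EA s(u, v)).card := by
      by_contra hle
      push Not at hle
      apply hcon u (hS2S hu) v (hS2S hv) huv
      simp only [M, if_pos hle]
      simp only [EA, Finset.mem_filter, Finset.mem_univ, true_and]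
      exact Or.inr hf2
    have hsub : EA s(u, v) ⊆ B s(u, v) ∪ (cc u ∪ cc v) := by
      intro i hi
      by_cases hcu : Collides φ S i u
      · simp [cc, hcu]
      by_cases hcv : Collides φ S i v
      · simp [cc, hcv]
      refine Finset.mem_union_left _ ?_
      simp only [EA, Finset.mem_filter, Finset.mem_univ, true_and] at hi
      rcases hi with hi | hi
      · exfalso
        have : φ i u = φ i v := by simpa using hi
        exact huv (first_inj φ S i u v (hS2S hu) (hS2S hv) hcu hcv this)
      · simp only [B, Finset.mem_filter, Finset.mem_univ, true_and]
        refine ⟨hi, ?_⟩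
        intro w hw
        rcases Sym2.mem_iff.1 hw with rfl | rfl
        · exact hcu
        · exact hcv
    have h3 := (Finset.card_le_card hsub).trans ((Finset.card_union_le _ _).trans
      (Nat.add_le_add_left (Finset.card_union_le _ _) _))
    have h4 := (Finset.mem_filter.1 (hS2 hu)).2
    have h5 := (Finset.mem_filter.1 (hS2 hv)).2
    omega
  have hB' : ∀ f, ∃ C, C ⊆ B f ∧ (f ∈ F → C.card = d') := by
    intro f
    by_cases hf : f ∈ F
    · obtain ⟨C, hC1, hC2⟩ := Finset.exists_subset_card_eq (hB f hf)
      exact ⟨C, hC1, fun _ => hC2⟩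
    · exact ⟨∅, by simp, fun h => absurd h hf⟩
  choose C hC1 hC2 using hB'
  let Z : Finset (Fin r × Sym2 (Fin n)) := ((Finset.univ : Finset (Fin r)) ×ˢ F).filter (fun z => z.1 ∈ C z.2)
  have hZmem : ∀ z ∈ Z, z.2 ∈ F ∧ z.1 ∈ B z.2 := by
    intro z hz
    obtain ⟨h3, h4⟩ := Finset.mem_filter.1 hz
    exact ⟨(Finset.mem_product.1 h3).2, hC1 _ h4⟩
  have hZc : Z.card = d' * e0 := by
    rw [Finset.card_filter, Finset.sum_product_right]
    rw [Finset.sum_congr rfl (g := fun _ => d')]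
    · simp [hFc, mul_comm]
    · intro f hf
      rw [← Finset.card_filter]
      rw [← hC2 f hf]
      congr 1
      ext i; simp
  have hFS : F ⊆ prs S := by
    intro f hf
    obtain ⟨u, hu, v, hv, huv, rfl⟩ := (mem_prs _ _).1 (Finset.mem_filter.1 (hF hf)).1
    exact (mem_prs _ _).2 ⟨u, hS2S hu, v, hS2S hv, huv, rfl⟩
  refine h2 S hS F hFS hFc Z (Finset.filter_subset _ _) hZc ?_ ?_
  · rintro ⟨i, f⟩ hz ⟨i', f'⟩ hz' heq
    obtain ⟨hf, hi⟩ := hZmem _ hz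
    obtain ⟨hf', hi'⟩ := hZmem _ hz'
    simp only [Prod.mk.injEq] at heq hf hi hf' hi'
    obtain ⟨rfl, heq⟩ := heq
    obtain ⟨u, hu, v, hv, huv, rfl⟩ := (mem_prs _ _).1 (hFS hf)
    obtain ⟨u', hu', v', hv', huv', rfl⟩ := (mem_prs _ _).1 (hFS hf')
    simp only [B, Finset.mem_filter, Finset.mem_univ, true_and] at hi hi'
    have cu := hi.2 u (by simp)
    have cv := hi.2 v (by simp)
    have cu' := hi'.2 u' (by simp)
    have cv' := hi'.2 v' (by simp)
    simp only [Sym2.map_mk, Sym2.eq_iff] at heq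
    have key : s(u, v) = s(u', v') := by
      rw [Sym2.eq_iff]
      rcases heq with ⟨e1, e2⟩ | ⟨e1, e2⟩
      · exact Or.inl ⟨first_inj φ S i u u' hu hu' cu cu' e1, first_inj φ S i v v' hv hv' cv cv' e2⟩
      · exact Or.inr ⟨first_inj φ S i u v' hu hv' cu cv' e1, first_inj φ S i v u' hv hu' cv cu' e2⟩
    rw [key]
  · intro z hz
    have := (hZmem z hz).2
    simp only [B, Finset.mem_filter, Finset.mem_univ, true_and] at this
    exact this.1

open Classical in
theorem card_collide {ι κ : Type*} [Fintype ι] [DecidableEq ι] [Fintype κ] [Nonempty κ]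
    (P : Finset (ι × ι)) (hinj : Set.InjOn Prod.fst (P : Set (ι × ι)))
    (hout : ∀ p ∈ P, p.2 ∉ P.image Prod.fst)
    [DecidablePred fun φ : ι → κ => ∀ p ∈ P, φ p.1 = φ p.2] :
    ((Finset.univ.filter (fun φ : ι → κ => ∀ p ∈ P, φ p.1 = φ p.2)).card : ℝ)
      ≤ Fintype.card (ι → κ) * (1 / (Fintype.card κ : ℝ)) ^ P.card := by
  have h1 : (Finset.univ.filter (fun φ : ι → κ => ∀ p ∈ P, φ p.1 = φ p.2)).card
      ≤ Fintype.card ({z // z ∉ P.image Prod.fst} → κ) := by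
    rw [← Finset.card_univ]
    refine Finset.card_le_card_of_injOn (fun φ z => φ z.1) (fun _ _ => by simp) ?_
    intro φ hφ ψ hψ h
    simp only [Finset.coe_filter, Finset.mem_univ, true_and, Set.mem_ofPred_eq] at hφ hψ
    have h' : ∀ z, z ∉ P.image Prod.fst → φ z = ψ z := fun z hz => congrFun h ⟨z, hz⟩
    funext z
    by_cases hz : z ∈ P.image Prod.fst
    · obtain ⟨p, hp, rfl⟩ := Finset.mem_image.1 hz
      rw [hφ p hp, hψ p hp]
      exact h' _ (hout p hp)
    · exact h' z hz
  have h2 : Fintype.card {z // z ∉ P.image Prod.fst} + P.card = Fintype.card ι := by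
    rw [Fintype.card_subtype_compl, Fintype.card_coe, Finset.card_image_of_injOn hinj]
    have : P.card ≤ Fintype.card ι := by
      rw [← Finset.card_image_of_injOn hinj]; exact Finset.card_le_univ _
    omega
  have hκ : (0 : ℝ) < Fintype.card κ := by exact_mod_cast Fintype.card_pos
  calc _ ≤ ((Fintype.card ({z // z ∉ P.image Prod.fst} → κ) : ℕ) : ℝ) := by exact_mod_cast h1
    _ = _ := by
      rw [Fintype.card_fun, Fintype.card_fun, ← h2, one_div, inv_pow]
      push_cast
      rw [pow_add]
      field_simp

theorem choose_mul_pow_le (a c : ℕ) (x : ℝ) (hx : 0 ≤ x) :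
    ((a.choose c : ℕ) : ℝ) * x ^ c ≤ (a * x) ^ c := by
  rw [mul_pow]
  gcongr
  exact_mod_cast Nat.choose_le_pow a c

open Classical in
theorem card_agree (r n n' : ℕ) [NeZero n'] (x y : Fin n) (hne : x ≠ y) (T : Finset (Fin r)) :
    ((Finset.univ.filter (fun φ : Fin r × Fin n → Fin n' => ∀ i ∈ T, φ (i, x) = φ (i, y))).card : ℝ)
      ≤ Fintype.card (Fin r × Fin n → Fin n') * (1 / (n' : ℝ)) ^ T.card := by
  have h := card_collide (κ := Fin n') (T.image (fun i => ((i, x), (i, y))))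
    (by
      intro p hp p' hp' h
      simp only [Finset.coe_image, Set.mem_image, Finset.mem_coe] at hp hp'
      obtain ⟨i, hi, rfl⟩ := hp
      obtain ⟨j, hj, rfl⟩ := hp'
      have : i = j := (Prod.mk.inj h).1
      rw [this])
    (by
      intro p hp hp'
      simp only [Finset.mem_image] at hp hp'
      obtain ⟨i, hi, rfl⟩ := hp
      obtain ⟨p', ⟨j, hj, rfl⟩, h⟩ := hp'
      exact hne (Prod.mk.inj h).2)
  rw [Finset.card_image_of_injective _ (by intro i j h; exact (Prod.mk.inj (Prod.mk.inj h).1).1), Fintype.card_fin] at h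
  refine le_trans (Nat.cast_le.2 (Finset.card_le_card ?_)) h
  intro φ hφ
  simp only [Finset.mem_filter, Finset.mem_univ, true_and] at hφ ⊢
  intro p hp
  obtain ⟨i, hi, rfl⟩ := Finset.mem_image.1 hp
  exact hφ i hi

theorem filter_card_le {Ω : Type*} [Fintype Ω] (p q : Ω → Prop) [DecidablePred p] [DecidablePred q]
    (g : Prop) (x : ℝ) (hx : 0 ≤ x) (hpg : ∀ ω, p ω → g) (hpq : ∀ ω, p ω → q ω)
    (h : g → ((Finset.univ.filter q).card : ℝ) ≤ x) : ((Finset.univ.filter p).card : ℝ) ≤ x := by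
  by_cases hg : g
  · refine le_trans (Nat.cast_le.2 (Finset.card_le_card ?_)) (h hg)
    intro ω hω
    exact Finset.mem_filter.2 ⟨Finset.mem_univ _, hpq ω (Finset.mem_filter.1 hω).2⟩
  · have : Finset.univ.filter p = ∅ := by
      apply Finset.filter_eq_empty_iff.2
      intro ω _ hω
      exact hg (hpg ω hω)
    rw [this]; simpa using hx

open Classical in
theorem collide_extract {r n n' : ℕ} (φ : Fin r × Fin n → Fin n') (S : Finset (Fin n)) (c : ℕ)
    (hcle : c ≤ (((Finset.univ : Finset (Fin r)) ×ˢ S).filter (fun z => Collides (fun i j => φ (i, j)) S z.1 z.2)).card) :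
    ∃ P ∈ (((Finset.univ : Finset (Fin r)) ×ˢ S) ×ˢ ((Finset.univ : Finset (Fin r)) ×ˢ S)).powersetCard c,
      Set.InjOn Prod.fst (P : Set ((Fin r × Fin n) × (Fin r × Fin n))) ∧
      (∀ p ∈ P, p.2 ∉ P.image Prod.fst) ∧ ∀ p ∈ P, φ p.1 = φ p.2 := by
  obtain ⟨Z, hZ, hZc⟩ := Finset.exists_subset_card_eq hcle
  have hfirst : ∀ z : Fin r × Fin n, ∃ j0, z ∈ Z → j0 ∈ S ∧ ¬ Collides (fun i j => φ (i, j)) S z.1 j0 ∧ φ z = φ (z.1, j0) := by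
    intro z
    by_cases hz : z ∈ Z
    · obtain ⟨hz1, hz2⟩ := Finset.mem_filter.1 (hZ hz)
      obtain ⟨j', hj', hlt', he⟩ := hz2
      obtain ⟨j0, hj0, hmin⟩ := Finset.exists_min_image (S.filter (fun j => φ (z.1, j) = φ z)) id
        ⟨j', by simpa [hj'] using he⟩
      obtain ⟨h3, h4⟩ := Finset.mem_filter.1 hj0
      refine ⟨j0, fun _ => ⟨h3, ?_, h4.symm⟩⟩
      rintro ⟨j1, hj1, hl, he1⟩
      have := hmin j1 (Finset.mem_filter.2 ⟨hj1, he1.trans h4⟩)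
      exact absurd hl (not_lt.2 this)
    · exact ⟨z.2, fun h => absurd h hz⟩
  choose g hg using hfirst
  let P : Finset ((Fin r × Fin n) × (Fin r × Fin n)) := Z.image (fun z => (z, (z.1, g z)))
  have hPfst : P.image Prod.fst = Z := by
    rw [Finset.image_image]
    exact Finset.image_id
  refine ⟨P, ?_, ?_, ?_, ?_⟩
  · refine Finset.mem_powersetCard.2 ⟨?_, ?_⟩
    · intro p hp
      obtain ⟨z, hz, rfl⟩ := Finset.mem_image.1 hp
      have h3 := (Finset.mem_product.1 (Finset.mem_filter.1 (hZ hz)).1).2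
      simp [h3, (hg z hz).1]
    · rw [Finset.card_image_of_injective _ (by intro a b h; simpa using (Prod.mk.inj h).1), hZc]
  · intro p hp p' hp' h
    obtain ⟨z, hz, rfl⟩ := Finset.mem_image.1 hp
    obtain ⟨z', hz', rfl⟩ := Finset.mem_image.1 hp'
    simp only at h
    rw [h]
  · intro p hp
    rw [hPfst]
    obtain ⟨z, hz, rfl⟩ := Finset.mem_image.1 hp
    intro hmem
    exact (hg z hz).2.1 (Finset.mem_filter.1 (hZ hmem)).2
  · intro p hp
    obtain ⟨z, hz, rfl⟩ := Finset.mem_image.1 hp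
    exact (hg z hz).2.2

open Classical in
theorem step1_cnt1 (r d n n' : ℕ) [NeZero n'] :
    ((Finset.univ.filter (fun φ : Fin r × Fin n → Fin n' =>
      ∃ b ∈ (Finset.univ : Finset (Fin n × Fin n)) ×ˢ ((Finset.univ : Finset (Fin r)).powersetCard (d + 1)),
        b.1.1 ≠ b.1.2 ∧ ∀ i ∈ b.2, φ (i, b.1.1) = φ (i, b.1.2))).card : ℝ)
      ≤ Fintype.card (Fin r × Fin n → Fin n') * ((n : ℝ) ^ 2 * (r * (1 / n')) ^ (d + 1)) := by
  generalize hW : (Fintype.card (Fin r × Fin n → Fin n') : ℝ) = W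
  have hW0 : 0 ≤ W := by rw [← hW]; exact Nat.cast_nonneg _
  refine le_trans (union_card _ _ (W * (1 / (n' : ℝ)) ^ (d + 1)) ?_) ?_
  · intro b hb
    have hT : b.2.card = d + 1 := (Finset.mem_powersetCard.1 (Finset.mem_product.1 hb).2).2
    refine filter_card_le _ (fun φ : Fin r × Fin n → Fin n' => ∀ i ∈ b.2, φ (i, b.1.1) = φ (i, b.1.2)) (b.1.1 ≠ b.1.2) _ (by positivity)
      (fun φ h => h.1) (fun φ h => h.2) (fun hne => ?_)
    rw [← hT, ← hW]
    exact card_agree r n n' _ _ hne _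
  · simp only [Finset.card_product, Finset.card_univ, Fintype.card_prod, Fintype.card_fin,
      Finset.card_powersetCard]
    push_cast
    have := choose_mul_pow_le r (d + 1) (1 / (n' : ℝ)) (by positivity)
    calc (n : ℝ) * n * ((r.choose (d + 1) : ℕ) : ℝ) * (W * (1 / (n' : ℝ)) ^ (d + 1))
        = W * ((n : ℝ) ^ 2 * (((r.choose (d + 1) : ℕ) : ℝ) * (1 / (n' : ℝ)) ^ (d + 1))) := by ring
      _ ≤ _ := by gcongr

open Classical in
theorem step1_cnt2 (r k n n' c : ℕ) [NeZero n'] :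
    ((Finset.univ.filter (fun φ : Fin r × Fin n → Fin n' =>
      ∃ b ∈ ((Finset.univ : Finset (Fin n)).powersetCard k).sigma (fun S =>
        ((((Finset.univ : Finset (Fin r)) ×ˢ S) ×ˢ ((Finset.univ : Finset (Fin r)) ×ˢ S)).powersetCard c)),
        (Set.InjOn Prod.fst (b.2 : Set ((Fin r × Fin n) × (Fin r × Fin n))) ∧ ∀ p ∈ b.2, p.2 ∉ b.2.image Prod.fst) ∧
      ∀ p ∈ b.2, φ p.1 = φ p.2)).card : ℝ)
      ≤ Fintype.card (Fin r × Fin n → Fin n') * ((n : ℝ) ^ k * ((r * k) ^ 2 * (1 / n')) ^ c) := by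
  generalize hW : (Fintype.card (Fin r × Fin n → Fin n') : ℝ) = W
  have hW0 : 0 ≤ W := by rw [← hW]; exact Nat.cast_nonneg _
  refine le_trans (union_card _ _ (W * (1 / (n' : ℝ)) ^ c) ?_) ?_
  · intro b hb
    have hP : b.2.card = c := (Finset.mem_powersetCard.1 (Finset.mem_sigma.1 hb).2).2
    refine filter_card_le _ (fun φ : Fin r × Fin n → Fin n' => ∀ p ∈ b.2, φ p.1 = φ p.2)
      (Set.InjOn Prod.fst (b.2 : Set ((Fin r × Fin n) × (Fin r × Fin n))) ∧ ∀ p ∈ b.2, p.2 ∉ b.2.image Prod.fst) _ (by positivity)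
      (fun φ h => h.1) (fun φ h => h.2) (fun hg => ?_)
    refine le_trans (card_collide (κ := Fin n') b.2 hg.1 hg.2) ?_
    rw [hP, Fintype.card_fin, hW]
  · have : (((Finset.univ : Finset (Fin n)).powersetCard k).sigma (fun S =>
        ((((Finset.univ : Finset (Fin r)) ×ˢ S) ×ˢ ((Finset.univ : Finset (Fin r)) ×ˢ S)).powersetCard c))).card
        = n.choose k * ((r * k) ^ 2).choose c := by
      rw [Finset.card_sigma]
      rw [Finset.sum_congr rfl (g := fun _ => ((r * k) ^ 2).choose c)]
      · simp
      · intro S hS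
        have hS := (Finset.mem_powersetCard.1 hS).2
        simp [hS, pow_two]
    rw [this, Nat.cast_mul]
    have h1 := choose_mul_pow_le ((r * k) ^ 2) c (1 / (n' : ℝ)) (by positivity)
    push_cast at h1
    have h2 : ((n.choose k : ℕ) : ℝ) ≤ (n : ℝ) ^ k := by exact_mod_cast Nat.choose_le_pow n k
    calc ((n.choose k : ℕ) : ℝ) * ((((r * k) ^ 2).choose c : ℕ) : ℝ) * (W * (1 / (n' : ℝ)) ^ c)
        = W * (((n.choose k : ℕ) : ℝ) * (((((r * k) ^ 2).choose c : ℕ) : ℝ) * (1 / (n' : ℝ)) ^ c)) := by ring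
      _ ≤ _ := by gcongr

open Classical in
theorem regimeA_step1 (r d k n n' c : ℕ) (hn' : 1 ≤ n') (hc : 16 * c ≤ d * k + 16)
    (hnum : (n : ℝ) ^ 2 * (r * (1 / n')) ^ (d + 1) + (n : ℝ) ^ k * ((r * k) ^ 2 * (1 / n')) ^ c < 1) :
    ∃ φ : Fin r → Fin n → Fin n',
      (∀ x y, x ≠ y → (Finset.univ.filter (fun i => φ i x = φ i y)).card ≤ d) ∧
      (∀ S : Finset (Fin n), S.card = k →
      16 * (((Finset.univ : Finset (Fin r)) ×ˢ S).filter (fun z => Collides φ S z.1 z.2)).card ≤ d * k) := by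
  have : NeZero n' := ⟨by omega⟩
  have hu1 := step1_cnt1 r d n n'
  have hu2 := step1_cnt2 r k n n' c
  have hΩ : (0 : ℝ) < Fintype.card (Fin r × Fin n → Fin n') := by exact_mod_cast Fintype.card_pos
  obtain ⟨φ, hφ1, hφ2⟩ := exists_avoid _ _ (lt_of_le_of_lt (add_le_add hu1 hu2) (by
    rw [← mul_add]
    calc _ < (Fintype.card (Fin r × Fin n → Fin n') : ℝ) * 1 := mul_lt_mul_of_pos_left hnum hΩ
      _ = _ := mul_one _))
  refine ⟨fun i j => φ (i, j), ?_, ?_⟩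
  · intro x y hxy
    by_contra hlt
    push Not at hlt
    obtain ⟨T, hT, hTc⟩ := Finset.exists_subset_card_eq (Nat.succ_le_of_lt hlt)
    apply hφ1
    refine ⟨((x, y), T), Finset.mem_product.2 ⟨Finset.mem_univ _, Finset.mem_powersetCard.2 ⟨Finset.subset_univ _, hTc⟩⟩, hxy, ?_⟩
    intro i hi
    exact (Finset.mem_filter.1 (hT hi)).2
  · intro S hS
    by_contra hlt
    push Not at hlt
    obtain ⟨P, hP, h1, h2, h3⟩ := collide_extract φ S c (by omega)
    apply hφ2
    exact ⟨⟨S, P⟩, Finset.mem_sigma.2 ⟨Finset.mem_powersetCard.2 ⟨Finset.subset_univ _, hS⟩, hP⟩, ⟨h1, h2⟩, h3⟩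

theorem exp_moment {ι : Type*} [Fintype ι] [DecidableEq ι] (q : ℕ) [NeZero q] (T : Finset ι) (e0 : ℕ)
    [DecidablePred fun ω : ι → Fin q => (T.filter (fun t => ω t = 0)).card < e0] :
    ((Finset.univ.filter (fun ω : ι → Fin q => (T.filter (fun t => ω t = 0)).card < e0)).card : ℝ)
      ≤ Fintype.card (ι → Fin q) * Real.exp (e0 - T.card * (1 / (2 * q))) := by
  have hq1 : (1 : ℝ) ≤ q := by exact_mod_cast NeZero.one_le
  have hsum : ∑ ω : ι → Fin q, ∏ t, (if t ∈ T ∧ ω t = 0 then (1 / 2 : ℝ) else 1)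
      = Fintype.card (ι → Fin q) * (1 - 1 / (2 * q)) ^ T.card := by
    rw [sum_prod_univ (fun t a => if t ∈ T ∧ a = 0 then (1 / 2 : ℝ) else 1)]
    have h1 : ∀ t, ∑ a : Fin q, (if t ∈ T ∧ a = 0 then (1 / 2 : ℝ) else 1)
        = (q : ℝ) * (if t ∈ T then (1 - 1 / (2 * (q : ℝ))) else (1 : ℝ)) := by
      intro t
      by_cases ht : t ∈ T
      · have : ∀ a : Fin q, (if t ∈ T ∧ a = 0 then (1 / 2 : ℝ) else 1) = 1 - (if a = 0 then (1 / 2 : ℝ) else 0) := by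
          intro a
          by_cases ha : a = 0
          · simp [ht, ha]; norm_num
          · simp [ha]
        simp only [this, Finset.sum_sub_distrib, if_pos ht]
        simp
        field_simp
      · simp [ht]
    simp only [h1]
    rw [Finset.prod_mul_distrib, Finset.prod_const, Finset.card_univ, Fintype.card_fun, Fintype.card_fin]
    push_cast
    congr 1
    rw [Finset.prod_ite]
    simp
  have h2 : ((Finset.univ.filter (fun ω : ι → Fin q => (T.filter (fun t => ω t = 0)).card < e0)).card : ℝ)
      * Real.exp (-e0) ≤ Fintype.card (ι → Fin q) * (1 - 1 / (2 * q)) ^ T.card := by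
    rw [← hsum, ← nsmul_eq_mul]
    refine le_trans ?_ (Finset.sum_le_sum_of_subset_of_nonneg (Finset.filter_subset
      (fun ω : ι → Fin q => (T.filter (fun t => ω t = 0)).card < e0) _)
      (fun w _ _ => Finset.prod_nonneg (fun i _ => by split_ifs <;> positivity)))
    refine Finset.card_nsmul_le_sum _ _ _ ?_
    intro ω hω
    have hω' := (Finset.mem_filter.1 hω).2
    rw [Finset.prod_ite]
    simp only [Finset.prod_const, one_pow, mul_one]
    have hT : (Finset.univ.filter (fun t => t ∈ T ∧ ω t = 0)) = T.filter (fun t => ω t = 0) := by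
      ext t; simp
    rw [hT]
    have he : Real.exp (-1) ≤ 1 / 2 := by
      rw [Real.exp_neg, inv_eq_one_div]
      exact one_div_le_one_div_of_le (by norm_num) (by linarith [Real.exp_one_gt_d9])
    calc Real.exp (-e0) = (Real.exp (-1)) ^ e0 := by rw [← Real.exp_nat_mul]; ring_nf
      _ ≤ (1 / 2 : ℝ) ^ e0 := by gcongr
      _ ≤ _ := pow_le_pow_of_le_one (by norm_num) (by norm_num) hω'.le
  rw [Real.exp_neg, ← div_eq_mul_inv, div_le_iff₀ (Real.exp_pos _)] at h2
  refine h2.trans ?_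
  have h3 := one_sub_pow_le (1 / (2 * (q : ℝ))) (by
    rw [div_le_one (by positivity)]; linarith) T.card
  calc _ ≤ (Fintype.card (ι → Fin q) : ℝ) * Real.exp (-(T.card * (1 / (2 * (q : ℝ))))) * Real.exp e0 := by gcongr
    _ = _ := by rw [mul_assoc, ← Real.exp_add]; ring_nf

open Classical in
theorem step2_cnt1 (r m n' q e0 : ℕ) [NeZero q] :
    ((Finset.univ.filter (fun ω : Fin r × Sym2 (Fin n') → Fin q =>
      ∃ b ∈ (Finset.univ : Finset (Fin r)) ×ˢ ((Finset.univ : Finset (Fin n')).powersetCard m),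
        ((prs b.2).filter (fun e => ω (b.1, e) = 0)).card < e0)).card : ℝ)
      ≤ Fintype.card (Fin r × Sym2 (Fin n') → Fin q) *
        (r * (n' : ℝ) ^ m * Real.exp (e0 - (m.choose 2 : ℕ) * (1 / (2 * q)))) := by
  generalize hW : (Fintype.card (Fin r × Sym2 (Fin n') → Fin q) : ℝ) = W
  have hW0 : 0 ≤ W := by rw [← hW]; exact Nat.cast_nonneg _
  refine le_trans (union_card _ _ (W * Real.exp (e0 - (m.choose 2 : ℕ) * (1 / (2 * q)))) ?_) ?_
  · intro b hb
    have hT : b.2.card = m := (Finset.mem_powersetCard.1 (Finset.mem_product.1 hb).2).2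
    have h := exp_moment q ((prs b.2).image (fun e => (b.1, e))) e0
    rw [Finset.card_image_of_injective _ (fun a b h => (Prod.mk.inj h).2), card_prs, hT, hW] at h
    refine le_trans (Nat.cast_le.2 (Finset.card_le_card ?_)) h
    intro ω hω
    simp only [Finset.mem_filter, Finset.mem_univ, true_and] at hω ⊢
    refine lt_of_le_of_lt ?_ hω
    rw [Finset.filter_image]
    exact Finset.card_image_le
  · simp only [Finset.card_product, Finset.card_univ, Fintype.card_fin, Finset.card_powersetCard]
    push_cast
    have h2 : ((n'.choose m : ℕ) : ℝ) ≤ (n' : ℝ) ^ m := by exact_mod_cast Nat.choose_le_pow n' m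
    calc (r : ℝ) * ((n'.choose m : ℕ) : ℝ) * (W * Real.exp (e0 - (m.choose 2 : ℕ) * (1 / (2 * q))))
        = W * (r * ((n'.choose m : ℕ) : ℝ) * Real.exp (e0 - (m.choose 2 : ℕ) * (1 / (2 * q)))) := by ring
      _ ≤ _ := by gcongr

open Classical in
theorem step2_cnt2 (r k n n' q e0 d' : ℕ) [NeZero q] (φ : Fin r → Fin n → Fin n') :
    ((Finset.univ.filter (fun ω : Fin r × Sym2 (Fin n') → Fin q =>
      ∃ b ∈ ((Finset.univ : Finset (Fin n)).powersetCard k).sigma (fun S =>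
          ((prs S).powersetCard e0).sigma (fun F =>
            ((Finset.univ : Finset (Fin r)) ×ˢ F).powersetCard (d' * e0))),
        Set.InjOn (fun z : Fin r × Sym2 (Fin n) => (z.1, z.2.map (φ z.1))) (b.2.2 : Set (Fin r × Sym2 (Fin n))) ∧
        ∀ z ∈ b.2.2, ω (z.1, z.2.map (φ z.1)) = 0)).card : ℝ)
      ≤ Fintype.card (Fin r × Sym2 (Fin n') → Fin q) *
        ((n : ℝ) ^ k * (((k.choose 2).choose e0 : ℕ) : ℝ) * ((((r * e0).choose (d' * e0) : ℕ) : ℝ) * (1 / q) ^ (d' * e0))) := by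
  have hq0 : (0 : ℝ) < q := by exact_mod_cast NeZero.pos q
  generalize hW : (Fintype.card (Fin r × Sym2 (Fin n') → Fin q) : ℝ) = W
  have hW0 : 0 ≤ W := by rw [← hW]; exact Nat.cast_nonneg _
  refine le_trans (union_card _ _ (W * (1 / (q : ℝ)) ^ (d' * e0)) ?_) ?_
  · intro b hb
    have hZ : b.2.2.card = d' * e0 :=
      (Finset.mem_powersetCard.1 (Finset.mem_sigma.1 (Finset.mem_sigma.1 hb).2).2).2
    refine filter_card_le _ (fun ω : Fin r × Sym2 (Fin n') → Fin q =>
        ∀ t ∈ b.2.2.image (fun z : Fin r × Sym2 (Fin n) => (z.1, z.2.map (φ z.1))), ω t ∈ ({0} : Finset (Fin q)))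
      (Set.InjOn (fun z : Fin r × Sym2 (Fin n) => (z.1, z.2.map (φ z.1))) (b.2.2 : Set (Fin r × Sym2 (Fin n))))
      _ (by positivity) (fun ω h => h.1) (fun ω h => ?_) (fun hg => ?_)
    · intro t ht
      obtain ⟨z, hz, rfl⟩ := Finset.mem_image.1 ht
      simpa using h.2 z hz
    · have h := card_restrict (b.2.2.image (fun z : Fin r × Sym2 (Fin n) => (z.1, z.2.map (φ z.1)))) ({0} : Finset (Fin q))
      rw [Finset.card_image_of_injOn hg, hZ, hW, Finset.card_singleton, Fintype.card_fin, Nat.cast_one, one_pow, mul_one] at h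
      rw [← h, one_div, inv_pow, mul_assoc, mul_inv_cancel₀ (by positivity), mul_one]
  · have : ((((Finset.univ : Finset (Fin n)).powersetCard k).sigma (fun S =>
          ((prs S).powersetCard e0).sigma (fun F =>
            ((Finset.univ : Finset (Fin r)) ×ˢ F).powersetCard (d' * e0))))).card
        = n.choose k * ((k.choose 2).choose e0 * (r * e0).choose (d' * e0)) := by
      rw [Finset.card_sigma]
      rw [Finset.sum_congr rfl (g := fun _ => ((k.choose 2).choose e0 * (r * e0).choose (d' * e0)))]
      · simp
      · intro S hS
        have hS := (Finset.mem_powersetCard.1 hS).2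
        rw [Finset.card_sigma, Finset.sum_congr rfl (g := fun _ => (r * e0).choose (d' * e0))]
        · simp [card_prs, hS]
        · intro F hF
          have hF := (Finset.mem_powersetCard.1 hF).2
          simp [hF]
    rw [this, Nat.cast_mul, Nat.cast_mul]
    have h2 : ((n.choose k : ℕ) : ℝ) ≤ (n : ℝ) ^ k := by exact_mod_cast Nat.choose_le_pow n k
    calc ((n.choose k : ℕ) : ℝ) * ((((k.choose 2).choose e0 : ℕ) : ℝ) * (((r * e0).choose (d' * e0) : ℕ) : ℝ)) * (W * (1 / (q : ℝ)) ^ (d' * e0))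
        = W * (((n.choose k : ℕ) : ℝ) * (((k.choose 2).choose e0 : ℕ) : ℝ) * ((((r * e0).choose (d' * e0) : ℕ) : ℝ) * (1 / q) ^ (d' * e0))) := by ring
      _ ≤ _ := by gcongr

/-- Combination of the two random steps with the deterministic argument. -/
theorem regimeA_comb (r d k n n' m e0 d' q c : ℕ) (hdr : d ≤ r) (hd : 1 ≤ d) (hq : 1 ≤ q) (hn' : 1 ≤ n')
    (hm : 4 * m ≤ 3 * k) (hd' : 2 * d' ≤ d + 2) (hc : 16 * c ≤ d * k + 16)
    (hnum1 : (n : ℝ) ^ 2 * (r * (1 / n')) ^ (d + 1) + (n : ℝ) ^ k * ((r * k) ^ 2 * (1 / n')) ^ c < 1)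
    (hnum2 : r * (n' : ℝ) ^ m * Real.exp (e0 - (m.choose 2 : ℕ) * (1 / (2 * q))) +
      (n : ℝ) ^ k * (((k.choose 2).choose e0 : ℕ) : ℝ) *
        ((((r * e0).choose (d' * e0) : ℕ) : ℝ) * (1 / q) ^ (d' * e0)) < 1) :
    ¬ HasSetColouringRamsey r (r - d) k n := by
  classical
  have : NeZero q := ⟨by omega⟩
  obtain ⟨φ, h0, h0'⟩ := regimeA_step1 r d k n n' c hn' hc hnum1
  have hu1 := step2_cnt1 r m n' q e0
  have hu2 := step2_cnt2 r k n n' q e0 d' φ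
  have hΩ : (0 : ℝ) < Fintype.card (Fin r × Sym2 (Fin n') → Fin q) := by exact_mod_cast Fintype.card_pos
  obtain ⟨ω, hω1, hω2⟩ := exists_avoid _ _ (lt_of_le_of_lt (add_le_add hu1 hu2) (by
    rw [← mul_add]
    calc _ < (Fintype.card (Fin r × Sym2 (Fin n') → Fin q) : ℝ) * 1 := mul_lt_mul_of_pos_left hnum2 hΩ
      _ = _ := mul_one _))
  refine regimeA_det r d k n n' m e0 d' hdr hd φ (fun i e => ω (i, e) = 0) hm hd' ?_ ?_ ?_ ?_
  · intro x y hxy; convert h0 x y hxy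
  · intro S hS; convert h0' S hS
  · intro i M hM
    by_contra hlt
    push Not at hlt
    apply hω1
    refine ⟨(i, M), Finset.mem_product.2 ⟨Finset.mem_univ _, Finset.mem_powersetCard.2 ⟨Finset.subset_univ _, hM⟩⟩, ?_⟩
    exact lt_of_le_of_lt (le_of_eq (by congr)) hlt
  · intro S hS F hF hFc Z hZ hZc hinj hz
    apply hω2
    exact ⟨⟨S, ⟨F, Z⟩⟩, Finset.mem_sigma.2 ⟨Finset.mem_powersetCard.2 ⟨Finset.subset_univ _, hS⟩,
      Finset.mem_sigma.2 ⟨Finset.mem_powersetCard.2 ⟨hF, hFc⟩, Finset.mem_powersetCard.2 ⟨hZ, hZc⟩⟩⟩, hinj, hz⟩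

theorem choose_le_exp (a b : ℕ) : ((a.choose b : ℕ) : ℝ) ≤ (Real.exp 1 * a / b) ^ b := by
  rcases Nat.eq_zero_or_pos b with rfl | hb
  · simp
  have hb' : (0 : ℝ) < b := by exact_mod_cast hb
  have h1 : ((a.choose b : ℕ) : ℝ) ≤ (a : ℝ) ^ b / (b.factorial : ℝ) := Nat.choose_le_pow_div b a
  have h2 := Real.pow_div_factorial_le_exp (b : ℝ) hb'.le b
  have h3 : Real.exp (b : ℝ) = Real.exp 1 ^ b := by rw [← Real.exp_nat_mul, mul_one]
  rw [h3] at h2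
  have hf : (0 : ℝ) < (b.factorial : ℝ) := by exact_mod_cast Nat.factorial_pos b
  refine h1.trans ?_
  rw [div_pow, mul_pow, le_div_iff₀ (by positivity)]
  calc (a : ℝ) ^ b / (b.factorial : ℝ) * (b : ℝ) ^ b = ((b : ℝ) ^ b / (b.factorial : ℝ)) * (a : ℝ) ^ b := by ring
    _ ≤ _ := by gcongr

theorem exp_lt_half {x : ℝ} (hx : x ≤ -1) : Real.exp x < 1 / 2 := by
  refine lt_of_le_of_lt (Real.exp_le_exp.2 hx) ?_
  rw [Real.exp_neg, inv_eq_one_div]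
  exact one_div_lt_one_div_of_lt (by norm_num) (by linarith [Real.exp_one_gt_d9])

theorem numA_n' (E ℓ r k : ℝ) (n' : ℕ) (hℓ : 1 ≤ ℓ) (hE : 10 ^ 7 * ℓ ≤ E) (hr : r = Real.exp ℓ)
    (hk1 : 1 ≤ k) (hk : k ≤ r * E) (hn' : n' = ⌊Real.exp (E / 12544)⌋₊) :
    1 ≤ n' ∧ (n' : ℝ) ≤ Real.exp (E / 12544) ∧ (r * k) ^ 2 * (1 / n') ≤ Real.exp (-(E / 50176)) := by
  have h0 : (n' : ℝ) ≤ Real.exp (E / 12544) := by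
    rw [hn']; exact Nat.floor_le (Real.exp_pos _).le
  have h1 : Real.exp (E / 12544) < n' + 1 := by rw [hn']; exact Nat.lt_floor_add_one _
  have hr1 : 0 < r := hr ▸ Real.exp_pos _
  have hE0 : 0 < E := by linarith
  have h2 : Real.exp (E / 25088) ≤ n' := by
    have ha : E / 25088 + 1 ≤ Real.exp (E / 25088) := Real.add_one_le_exp _
    have hb : Real.exp (E / 12544) = Real.exp (E / 25088) * Real.exp (E / 25088) := by
      rw [← Real.exp_add]; ring_nf
    rw [hb] at h1
    nlinarith
  have hn1 : 1 ≤ n' := by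
    have : (0 : ℝ) < n' := lt_of_lt_of_le (Real.exp_pos _) h2
    exact_mod_cast this
  refine ⟨hn1, h0, ?_⟩
  have hEE : E ≤ Real.exp (E / 401408 + 13) := by
    have ha : E / 401408 + 1 ≤ Real.exp (E / 401408) := Real.add_one_le_exp _
    have hb : (401408 : ℝ) ≤ Real.exp 13 := by
      have : Real.exp 13 = Real.exp 1 ^ 13 := by rw [← Real.exp_nat_mul]; norm_num
      rw [this]
      calc (401408 : ℝ) ≤ (2.718 : ℝ) ^ 13 := by norm_num
        _ ≤ _ := by gcongr; linarith [Real.exp_one_gt_d9]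
    rw [Real.exp_add]
    have hc : 0 < Real.exp (E / 401408) := Real.exp_pos _
    nlinarith
  have hrk : r * k ≤ Real.exp (2 * ℓ + (E / 401408 + 13)) := by
    calc r * k ≤ r * (r * E) := by gcongr
      _ = Real.exp (2 * ℓ) * E := by rw [two_mul, Real.exp_add, hr]; ring
      _ ≤ Real.exp (2 * ℓ) * Real.exp (E / 401408 + 13) := by gcongr
      _ = _ := by rw [← Real.exp_add]
  have hrk2 : (r * k) ^ 2 ≤ Real.exp (E / 50176) := by
    calc (r * k) ^ 2 ≤ (Real.exp (2 * ℓ + (E / 401408 + 13))) ^ 2 := by gcongr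
      _ = Real.exp (2 * (2 * ℓ + (E / 401408 + 13))) := by rw [← Real.exp_nat_mul]; norm_num
      _ ≤ _ := Real.exp_le_exp.2 (by linarith)
  calc (r * k) ^ 2 * (1 / n') ≤ Real.exp (E / 50176) * (1 / Real.exp (E / 25088)) := by gcongr
    _ = _ := by rw [one_div, ← Real.exp_neg, ← Real.exp_add]; ring_nf

theorem numA_1 (E r d : ℝ) (D n n' k c : ℕ) (hD : (D : ℝ) = d) (hd : 1 ≤ d) (hE : 10 ^ 7 ≤ E) (hr : 1 ≤ r) (hk : 1 ≤ (k : ℝ))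
    (hn' : (r * k) ^ 2 * (1 / n') ≤ Real.exp (-(E / 50176)))
    (hn : (n : ℝ) ≤ Real.exp (E * d / 1605632)) (hc : d * k / 16 ≤ (c : ℝ)) :
    (n : ℝ) ^ 2 * (r * (1 / n')) ^ (D + 1) + (n : ℝ) ^ k * ((r * k) ^ 2 * (1 / n')) ^ c < 1 := by
  have hrn : r * (1 / (n' : ℝ)) ≤ Real.exp (-(E / 50176)) := by
    refine le_trans ?_ hn'
    gcongr
    nlinarith [mul_le_mul hr hk zero_le_one (by linarith : 0 ≤ r)]
  have h1 : (n : ℝ) ^ 2 * (r * (1 / n')) ^ (D + 1) < 1 / 2 := by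
    calc (n : ℝ) ^ 2 * (r * (1 / n')) ^ (D + 1)
        ≤ (Real.exp (E * d / 1605632)) ^ 2 * (Real.exp (-(E / 50176))) ^ (D + 1) := by gcongr
      _ = Real.exp (2 * (E * d / 1605632) + (d + 1) * (-(E / 50176))) := by
          rw [← Real.exp_nat_mul, ← Real.exp_nat_mul, ← Real.exp_add]; push_cast; rw [hD]
      _ < 1 / 2 := exp_lt_half (by nlinarith [mul_le_mul hE hd zero_le_one (by linarith : 0 ≤ E)])
  have h2 : (n : ℝ) ^ k * ((r * k) ^ 2 * (1 / n')) ^ c < 1 / 2 := by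
    calc (n : ℝ) ^ k * ((r * k) ^ 2 * (1 / n')) ^ c
        ≤ (Real.exp (E * d / 1605632)) ^ k * (Real.exp (-(E / 50176))) ^ c := by gcongr
      _ = Real.exp (k * (E * d / 1605632) + c * (-(E / 50176))) := by
          rw [← Real.exp_nat_mul, ← Real.exp_nat_mul, ← Real.exp_add]
      _ < 1 / 2 := exp_lt_half (by
          have hdk : 1 ≤ d * k := by nlinarith
          have := mul_le_mul_of_nonneg_right hc (by linarith : 0 ≤ E)
          have := mul_le_mul hE hdk zero_le_one (by linarith : 0 ≤ E)
          nlinarith)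
  linarith

theorem numA_2a (E r ℓ m X : ℝ) (M n' e0 : ℕ) (N q : ℝ) (hM : (M : ℝ) = m) (hm : 1 ≤ m) (hℓ : 1 ≤ ℓ) (hE : 10 ^ 7 * ℓ ≤ E)
    (hr : r = Real.exp ℓ) (hn' : (n' : ℝ) ≤ Real.exp (E / 12544)) (hX : N * (1 / (2 * q)) = 2 * X)
    (he0 : (e0 : ℝ) ≤ X) (hXm : m * E / 1568 ≤ X) :
    r * (n' : ℝ) ^ M * Real.exp (e0 - N * (1 / (2 * q))) < 1 / 2 := by
  have hr0 : 0 < r := hr ▸ Real.exp_pos _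
  calc r * (n' : ℝ) ^ M * Real.exp (e0 - N * (1 / (2 * q)))
      ≤ r * (Real.exp (E / 12544)) ^ M * Real.exp (e0 - N * (1 / (2 * q))) := by gcongr
    _ = Real.exp (ℓ + m * (E / 12544) + (e0 - 2 * X)) := by
        rw [← Real.exp_nat_mul, hr, ← Real.exp_add, ← Real.exp_add, hX, hM]
    _ < 1 / 2 := exp_lt_half (by
        have : E ≤ m * E := by nlinarith
        nlinarith)

theorem numA_2b (E r ℓ d q X : ℝ) (n k e0 d' R Q : ℕ) (hR : (R : ℝ) = r) (hQ : (Q : ℝ) = q)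
    (hℓ : 1 ≤ ℓ) (hE : 10 ^ 7 * ℓ ≤ E) (hr : r = Real.exp ℓ) (hd : 22 * ℓ ≤ d) (hk : 1 ≤ (k : ℝ))
    (hn : (n : ℝ) ≤ Real.exp (E * d / 1605632))
    (hd' : d ≤ 2 * (d' : ℝ)) (he0 : X / 2 ≤ e0) (hX : k * E / 3136 ≤ X) (hXk : (k : ℝ) ^ 2 ≤ 64 * q * X)
    (hq1 : q ≤ 49 * r) (hq2 : 48 * r ≤ q * d) :
    (n : ℝ) ^ k * (((k.choose 2).choose e0 : ℕ) : ℝ) *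
        ((((R * e0).choose (d' * e0) : ℕ) : ℝ) * (1 / Q) ^ (d' * e0)) < 1 / 2 := by
  have hr0 : 0 < r := hr ▸ Real.exp_pos _
  have hd0 : 0 < d := by linarith
  have hkE : 10 ^ 7 ≤ k * E := by nlinarith
  have hX0 : 0 < X := by nlinarith
  have he : (0 : ℝ) < e0 := by linarith
  have hd'0 : (0 : ℝ) < d' := by linarith
  have hq0 : 0 < q := by
    by_contra h
    push Not at h
    nlinarith
  have hA : (((k.choose 2).choose e0 : ℕ) : ℝ) ≤ Real.exp (e0 * (10 + ℓ)) := by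
    refine (choose_le_exp _ _).trans ?_
    rw [Real.exp_nat_mul]
    refine pow_le_pow_left₀ (by positivity) ?_ _
    have h1 : ((k.choose 2 : ℕ) : ℝ) / e0 ≤ 64 * q := by
      rw [choose_two_real, div_le_iff₀ he]
      have : 64 * q * (X / 2) ≤ 64 * q * e0 := by gcongr
      nlinarith
    have h2 : (3136 : ℝ) ≤ Real.exp 9 := by
      have : Real.exp 9 = Real.exp 1 ^ 9 := by rw [← Real.exp_nat_mul]; norm_num
      rw [this]
      calc (3136 : ℝ) ≤ (2.718 : ℝ) ^ 9 := by norm_num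
        _ ≤ _ := by gcongr; linarith [Real.exp_one_gt_d9]
    calc Real.exp 1 * ((k.choose 2 : ℕ) : ℝ) / e0 = Real.exp 1 * (((k.choose 2 : ℕ) : ℝ) / e0) := by ring
      _ ≤ Real.exp 1 * (3136 * r) := by gcongr; linarith
      _ ≤ Real.exp 1 * (Real.exp 9 * r) := by gcongr
      _ = Real.exp (10 + ℓ) := by rw [hr, ← Real.exp_add, ← Real.exp_add]; ring_nf
  have hB : (((R * e0).choose (d' * e0) : ℕ) : ℝ) * (1 / Q) ^ (d' * e0) ≤ Real.exp (-(d * e0)) := by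
    have h1 := choose_le_exp (R * e0) (d' * e0)
    calc (((R * e0).choose (d' * e0) : ℕ) : ℝ) * (1 / Q) ^ (d' * e0)
        ≤ (Real.exp 1 * ((R * e0 : ℕ) : ℝ) / ((d' * e0 : ℕ) : ℝ)) ^ (d' * e0) * (1 / Q) ^ (d' * e0) := by gcongr
      _ = (Real.exp 1 * (r / (d' * q))) ^ (d' * e0) := by
          rw [← mul_pow, hQ]; push_cast; rw [hR]; congr 1; field_simp
      _ ≤ (Real.exp (-2)) ^ (d' * e0) := by
          refine pow_le_pow_left₀ (by positivity) ?_ _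
          have h3 : r / (d' * q) ≤ 1 / 24 := by
            rw [div_le_div_iff₀ (by positivity) (by norm_num)]
            nlinarith
          have h4 : Real.exp 1 * (1 / 24) ≤ Real.exp (-2) := by
            rw [Real.exp_neg, ← one_div, le_div_iff₀ (Real.exp_pos _)]
            have : Real.exp 2 = Real.exp 1 ^ 2 := by rw [← Real.exp_nat_mul]; norm_num
            rw [this]
            have h5 : Real.exp 1 ^ 3 ≤ (2.72 : ℝ) ^ 3 := by
              gcongr; linarith [Real.exp_one_lt_d9]
            nlinarith
          exact (mul_le_mul_of_nonneg_left h3 (Real.exp_pos _).le).trans h4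
      _ = Real.exp (-(2 * d' * e0)) := by rw [← Real.exp_nat_mul]; push_cast; ring_nf
      _ ≤ _ := Real.exp_le_exp.2 (by nlinarith)
  calc (n : ℝ) ^ k * (((k.choose 2).choose e0 : ℕ) : ℝ) *
        ((((R * e0).choose (d' * e0) : ℕ) : ℝ) * (1 / Q) ^ (d' * e0))
      ≤ (Real.exp (E * d / 1605632)) ^ k * Real.exp (e0 * (10 + ℓ)) * Real.exp (-(d * e0)) := by gcongr
    _ = Real.exp (k * (E * d / 1605632) + e0 * (10 + ℓ) + -(d * e0)) := by
        rw [← Real.exp_nat_mul, ← Real.exp_add, ← Real.exp_add]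
    _ < 1 / 2 := exp_lt_half (by
        have h1 : (e0 : ℝ) * (10 + ℓ) ≤ e0 * (d / 2) := by gcongr; linarith
        have h2 : k * E / 6272 * (d / 2) ≤ e0 * (d / 2) := by gcongr; linarith
        have h3 : 10 ^ 7 * 22 ≤ k * E * d := by
          apply mul_le_mul hkE (by linarith) (by norm_num) (by linarith)
        nlinarith)

theorem regimeA (r d k : ℕ) (hd : 1 ≤ d) (hdr : d < r) (hr : 3 ≤ r) (E : ℝ) (hE : E = (d : ℝ) / r * k)
    (hE1 : 10 ^ 7 * Real.log r ≤ E) (hd1 : 22 * Real.log r ≤ d) :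
    ∃ n, ¬ HasSetColouringRamsey r (r - d) k n ∧ Real.exp (E * d / 1605632) ≤ n + 1 := by
  have hℓ := one_le_log_nat r hr
  have hr0 : (0 : ℝ) < r := by positivity
  have hrexp : (r : ℝ) = Real.exp (Real.log r) := (Real.exp_log hr0).symm
  generalize Real.log r = ℓ at *
  have hd0 : (1 : ℝ) ≤ d := by exact_mod_cast hd
  have hdr' : (d : ℝ) ≤ r := by exact_mod_cast hdr.le
  have hEr : E * r = d * k := by rw [hE]; field_simp
  have hE7 : 10 ^ 7 ≤ E := by linarith
  have hkE : E ≤ k := by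
    have : E * r ≤ k * r := by rw [hEr, mul_comm]; gcongr
    exact le_of_mul_le_mul_right this hr0
  have hkr : (k : ℝ) ≤ r * E := by
    have : (k : ℝ) * 1 ≤ k * d := by gcongr
    linarith
  have hk7 : (10 : ℝ) ^ 7 ≤ k := by linarith
  have hk1 : (1 : ℝ) ≤ k := by linarith
  obtain ⟨hn'1, hn'2, hn'3⟩ := numA_n' E ℓ r k _ hℓ hE1 hrexp hk1 hkr rfl
  generalize ⌊Real.exp (E / 12544)⌋₊ = n' at *
  obtain ⟨n, hn⟩ : ∃ n, n = ⌊Real.exp (E * d / 1605632)⌋₊ := ⟨_, rfl⟩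
  have hn1 : (n : ℝ) ≤ Real.exp (E * d / 1605632) := by
    rw [hn]; exact Nat.floor_le (Real.exp_pos _).le
  have hn2 : Real.exp (E * d / 1605632) ≤ n + 1 := by rw [hn]; exact (Nat.lt_floor_add_one _).le
  refine ⟨n, ?_, hn2⟩
  -- parameters
  obtain ⟨q, hq⟩ : ∃ q, q = ⌈48 * (r : ℝ) / d⌉₊ := ⟨_, rfl⟩
  have hqa : 48 * (r : ℝ) ≤ q * d := by
    have : 48 * (r : ℝ) / d ≤ q := by rw [hq]; exact Nat.le_ceil _
    rwa [div_le_iff₀ (by linarith)] at this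
  have hqb : (q : ℝ) * d ≤ 49 * r := by
    have : (q : ℝ) < 48 * (r : ℝ) / d + 1 := by
      rw [hq]; exact Nat.ceil_lt_add_one (by positivity)
    have h2 : (q : ℝ) * d ≤ (48 * (r : ℝ) / d + 1) * d := by gcongr
    have h3 : (48 * (r : ℝ) / d + 1) * d = 48 * r + d := by field_simp
    linarith
  have hq0 : (0 : ℝ) < q := by
    by_contra h
    push Not at h
    nlinarith
  have hqc : (q : ℝ) ≤ 49 * r := by nlinarith
  obtain ⟨m, hm⟩ : ∃ m, m = (k + 1) / 2 := ⟨_, rfl⟩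
  have hk4 : 10 ^ 7 ≤ k := by exact_mod_cast hk7
  have hma : (k : ℝ) ≤ 2 * m := by
    have : k ≤ 2 * m := by omega
    exact_mod_cast this
  have hmb : (k : ℝ) ≤ 4 * ((m : ℝ) - 1) := by linarith
  have hN := choose_two_real m
  have hNk : (k : ℝ) ^ 2 / 16 ≤ (m.choose 2 : ℕ) := by
    rw [hN]
    have : (k : ℝ) * k ≤ (2 * m) * (4 * ((m : ℝ) - 1)) := mul_le_mul hma hmb (by linarith) (by linarith)
    nlinarith
  obtain ⟨X, hX⟩ : ∃ X : ℝ, X = (m.choose 2 : ℕ) / (4 * q) := ⟨_, rfl⟩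
  have hXN : ((m.choose 2 : ℕ) : ℝ) = 4 * q * X := by rw [hX]; field_simp
  have hXm : m * E / 1568 ≤ X := by
    have h1 : (m : ℝ) * k / 8 ≤ 4 * q * X := by
      rw [← hXN, hN]
      have : (m : ℝ) * k ≤ m * (4 * ((m : ℝ) - 1)) := by gcongr
      linarith
    have hd00 : (0 : ℝ) < d := by linarith
    have hX0 : 0 ≤ X := by rw [hX]; positivity
    have h2 : (m : ℝ) * k / 8 * d ≤ 4 * (49 * r) * X := by
      calc (m : ℝ) * k / 8 * d ≤ 4 * q * X * d := by gcongr
        _ = 4 * (q * d) * X := by ring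
        _ ≤ _ := by gcongr
    have h3 : (m * E / 1568) * r ≤ X * r := by
      have : (m * E / 1568) * r = m * (d * k) / 1568 := by rw [← hEr]; ring
      rw [this]
      linarith
    exact le_of_mul_le_mul_right h3 hr0
  have hXk : k * E / 3136 ≤ X := by
    have : (k : ℝ) * E ≤ 2 * m * E := by gcongr
    linarith
  have hX1 : 1 ≤ X := by nlinarith
  obtain ⟨e0, he⟩ : ∃ e0, e0 = ⌊X⌋₊ := ⟨_, rfl⟩
  have he1 : (e0 : ℝ) ≤ X := by rw [he]; exact Nat.floor_le (by linarith)
  have he2 : X / 2 ≤ e0 := by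
    have h1 : X < e0 + 1 := by rw [he]; exact Nat.lt_floor_add_one _
    have h2 : (1 : ℝ) ≤ e0 := by
      have : 1 ≤ e0 := by rw [he]; exact Nat.le_floor (by simpa using hX1)
      exact_mod_cast this
    linarith
  have hd'a : (d : ℝ) ≤ 2 * (((d + 1) / 2 : ℕ) : ℝ) := by
    have : d ≤ 2 * ((d + 1) / 2) := by omega
    exact_mod_cast this
  have hca : (d : ℝ) * k / 16 ≤ ((d * k / 16 + 1 : ℕ) : ℝ) := by
    have : d * k ≤ 16 * (d * k / 16 + 1) := by omega
    have h2 : (d : ℝ) * k ≤ 16 * ((d * k / 16 + 1 : ℕ) : ℝ) := by exact_mod_cast this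
    linarith
  have hm1 : (1 : ℝ) ≤ m := by linarith
  refine regimeA_comb r d k n n' m e0 ((d + 1) / 2) q (d * k / 16 + 1) hdr.le hd
    (by exact_mod_cast hq0) hn'1 (by omega) (by omega) (by omega) ?_ ?_
  · exact numA_1 E r d d n n' k _ rfl hd0 hE7 (by linarith) hk1 hn'3 hn1 hca
  · have hA := numA_2a E r ℓ m X m n' e0 ((m.choose 2 : ℕ) : ℝ) q rfl hm1 hℓ hE1 hrexp hn'2
      (by rw [hXN]; field_simp; norm_num) he1 hXm
    have hB := numA_2b E r ℓ d q X n k e0 ((d + 1) / 2) r q rfl rfl hℓ hE1 hrexp hd1 hk1 hn1 hd'a he2 hXk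
      (by rw [hXN] at hNk; linarith) hqc hqa
    linarith

theorem lower_final (δ : ℝ) (hδ : 0 < δ) (a : ℝ) (ha : 0 < a)
    (ha1 : a * 10 ^ 7 ≤ Real.log (1 + δ) - δ / (1 + δ)) (ha2 : a * 1605632 ≤ 1)
    (r d k : ℕ) (hd : 1 ≤ d) (hdr : d < r) (hr : 3 ≤ r) (hk2 : 2 ≤ k)
    (E : ℝ) (hE : E = (d : ℝ) / r * k) (hE1 : 1 ≤ E) (ht : (1 + δ) * r ≤ ((k - 1 : ℕ) : ℝ) * d)
    (N : ℕ) (hN : HasSetColouringRamsey r (r - d) k N) :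
    Real.exp (a * (E * d) / Real.log r) ≤ (setRamsey r (r - d) k : ℝ) := by
  have hℓ := one_le_log_nat r hr
  have hd0 : (1 : ℝ) ≤ d := by exact_mod_cast hd
  have key : ∀ n : ℕ, ¬ HasSetColouringRamsey r (r - d) k n → (n : ℝ) + 1 ≤ (setRamsey r (r - d) k : ℝ) := by
    intro n hn
    exact_mod_cast lower_tool hN hn
  have hbound : ∀ y : ℝ, a * (E * d) ≤ y * Real.log r → a * (E * d) / Real.log r ≤ y := by
    intro y hy
    rwa [div_le_iff₀ (by linarith)]
  by_cases hC : E ≤ 10 ^ 7 * Real.log r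
  · obtain ⟨n, hn, hne⟩ := regimeC r (k - 1) d hdr.le hd δ hδ ht
    rw [Nat.sub_add_cancel (by omega)] at hn
    have h2 := key n hn
    refine le_trans (Real.exp_le_exp.2 (hbound ((Real.log (1 + δ) - δ / (1 + δ)) * d) ?_)) (by linarith)
    calc a * (E * d) ≤ a * ((10 ^ 7 * Real.log r) * d) := by gcongr
      _ = (a * 10 ^ 7) * d * Real.log r := by ring
      _ ≤ _ := by gcongr
  push Not at hC
  by_cases hB : (d : ℝ) ≤ 22 * Real.log r
  · obtain ⟨n, hn, hne⟩ := regimeB r d k hd hdr hk2 E hE (by linarith)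
    have h2 := key n hn
    refine le_trans (Real.exp_le_exp.2 (hbound (E / 16) ?_)) (by linarith)
    calc a * (E * d) ≤ a * (E * (22 * Real.log r)) := by gcongr
      _ = (a * 22) * (E * Real.log r) := by ring
      _ ≤ (1 / 16) * (E * Real.log r) := by gcongr; linarith
      _ = _ := by ring
  push Not at hB
  obtain ⟨n, hn, hne⟩ := regimeA r d k hd hdr hr E hE hC.le hB.le
  have h2 := key n hn
  refine le_trans (Real.exp_le_exp.2 (hbound (E * d / 1605632) ?_)) (by linarith)
  have hEd : 0 ≤ E * d := by positivity
  calc a * (E * d) ≤ 1 / 1605632 * (E * d) := by gcongr; linarith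
    _ ≤ 1 / 1605632 * (E * d) * Real.log r := le_mul_of_one_le_right (by positivity) hℓ
    _ = _ := by ring

theorem setRamsey_up_to_polylog (δ : ℝ) (hδ : 0 < δ) :
    ∃ a > (0 : ℝ), ∃ A > (0 : ℝ), ∀ r s k : ℕ, s < r → 1 ≤ s → 3 ≤ r →
      (k : ℝ) ≥ (1 + δ) / (((r : ℝ) - s) / r) + 1 →
      Real.exp (a * (((r : ℝ) - s) / r) ^ 2 * r * k / Real.log r)
          ≤ (setRamsey r s k : ℝ) ∧
        (setRamsey r s k : ℝ)
          ≤ Real.exp (A * (((r : ℝ) - s) / r) ^ 2 * r * k * Real.log r) := by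
  have hc := cδ_pos δ hδ
  refine ⟨min ((Real.log (1 + δ) - δ / (1 + δ)) / 10 ^ 7) (1 / 1605632), by positivity, 110, by norm_num, ?_⟩
  intro r s k hsr hs hr hk
  obtain ⟨d, hd⟩ : ∃ d, d = r - s := ⟨_, rfl⟩
  have hd1 : 1 ≤ d := by omega
  have hdr : d < r := by omega
  have hs' : s = r - d := by omega
  have hcast : (r : ℝ) - s = d := by rw [hd, Nat.cast_sub hsr.le]
  rw [hcast] at hk ⊢
  have hr0 : (0 : ℝ) < r := by positivity
  have hd0 : (0 : ℝ) < d := by positivity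
  obtain ⟨E, hE⟩ : ∃ E : ℝ, E = (d : ℝ) / r * k := ⟨_, rfl⟩
  have hk1 : (1 + δ) * r / d + 1 ≤ k := by
    have : (1 + δ) / ((d : ℝ) / r) = (1 + δ) * r / d := by field_simp
    rw [← this]; exact hk
  have hkd : (1 + δ) * r + d ≤ k * d := by
    have h2 : ((1 + δ) * r / d + 1) * d ≤ k * d := by gcongr
    have h3 : ((1 + δ) * r / d + 1) * d = (1 + δ) * r + d := by field_simp
    linarith
  have hkgt : (1 : ℝ) < k := by
    have : 0 < (1 + δ) * r / d := by positivity
    linarith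
  have hk2 : 2 ≤ k := by
    have : 1 < k := by exact_mod_cast hkgt
    omega
  have hE1 : 1 ≤ E := by
    rw [hE, div_mul_eq_mul_div, le_div_iff₀ hr0]
    nlinarith
  have ht : (1 + δ) * r ≤ ((k - 1 : ℕ) : ℝ) * d := by
    rw [Nat.cast_sub (by omega)]; push_cast; linarith
  obtain ⟨N, hN, hNe⟩ := upper_exists r d k hd1 hdr hr (by omega) E hE hE1
  have hEd : ((d : ℝ) / r) ^ 2 * r * k = E * d := by rw [hE]; field_simp
  rw [hs']
  constructor
  · have := lower_final δ hδ (min ((Real.log (1 + δ) - δ / (1 + δ)) / 10 ^ 7) (1 / 1605632)) (by positivity)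
      (by
        have := min_le_left ((Real.log (1 + δ) - δ / (1 + δ)) / 10 ^ 7) (1 / 1605632 : ℝ)
        linarith)
      (by
        have := min_le_right ((Real.log (1 + δ) - δ / (1 + δ)) / 10 ^ 7) (1 / 1605632 : ℝ)
        linarith) r d k hd1 hdr hr hk2 E hE hE1 ht N hN
    rw [← hEd] at this
    convert this using 3
    ring
  · refine le_trans ?_ (hNe.trans (le_of_eq ?_))
    · exact_mod_cast Nat.sInf_le hN
    · congr 1
      rw [← hEd]; ring
end

section
/- For all integers r > s ≥ 1 and every integer k ≥ 2, setting ε = (r − s)/r, one has R_{r,s}(k) ≥ (ε·(k − 1)/e)^{ε·r/2}, where e is Euler's number. -/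
theorem ramsey_aux {r : ℕ} (hr : 0 < r) (t : ℕ) : ∀ κ : Fin r → ℕ, ∑ i, κ i = t →
    ∃ N : ℕ, ∀ (V : Type) [DecidableEq V] (P : Fin r → V → V → Prop),
      (∀ i u v, P i u v → P i v u) → (∀ u v, u ≠ v → ∃ i, P i u v) →
      ∀ A : Finset V, N ≤ A.card → ∃ i, ∃ S ⊆ A, S.card = κ i ∧
        ∀ u ∈ S, ∀ v ∈ S, u ≠ v → P i u v := by
  induction t with
  | zero =>
    intro κ h
    refine ⟨0, fun V _ P _ _ A _ => ⟨⟨0, hr⟩, ∅, by simp, ?_, by simp⟩⟩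
    simp at h
    simp [h]
  | succ t ih =>
    intro κ h
    by_cases h0 : ∃ i, κ i = 0
    · obtain ⟨i, hi⟩ := h0
      exact ⟨0, fun V _ P _ _ A _ => ⟨i, ∅, by simp, by simp [hi], by simp⟩⟩
    push Not at h0
    have hs : ∀ i, ∑ j, Function.update κ i (κ i - 1) j = t := by
      intro i
      rw [Finset.sum_update_of_mem (Finset.mem_univ i)]
      have := Finset.add_sum_erase Finset.univ κ (Finset.mem_univ i)
      rw [Finset.sdiff_singleton_eq_erase]
      have := h0 i
      omega
    choose N hN using fun i => ih _ (hs i)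
    refine ⟨1 + ∑ i, N i, fun V _ P hsym hP A hA => ?_⟩
    classical
    have hne : A.Nonempty := by
      rw [← Finset.card_pos]; omega
    obtain ⟨v, hv⟩ := hne
    have hcov : A.erase v ⊆ Finset.univ.biUnion
        (fun i => (A.erase v).filter (fun u => P i v u)) := by
      intro u hu
      obtain ⟨i, hi⟩ := hP v u (Finset.ne_of_mem_erase hu).symm
      simp only [Finset.mem_biUnion, Finset.mem_filter, Finset.mem_univ, true_and]
      exact ⟨i, hu, hi⟩
    have hle := (Finset.card_le_card hcov).trans Finset.card_biUnion_le
    rw [Finset.card_erase_of_mem hv] at hle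
    have : Nonempty (Fin r) := ⟨⟨0, hr⟩⟩
    obtain ⟨i, -, hi⟩ := Finset.exists_le_of_sum_le (s := Finset.univ) (f := N)
      (g := fun i => ((A.erase v).filter (fun u => P i v u)).card)
      Finset.univ_nonempty (by omega)
    obtain ⟨j, S, hSA, hc, hS⟩ := hN i V P hsym hP _ hi
    by_cases hj : j = i
    · subst hj
      have hvS : v ∉ S := fun hvS => by simpa using hSA hvS
      refine ⟨j, insert v S, ?_, ?_, ?_⟩
      · refine Finset.insert_subset hv fun x hx => ?_
        exact Finset.mem_of_mem_erase (Finset.mem_filter.1 (hSA hx)).1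
      · rw [Finset.card_insert_of_notMem hvS, hc]
        have := h0 j
        simp; omega
      · intro a ha b hb hab
        rcases Finset.mem_insert.1 ha with rfl | haS
        · rcases Finset.mem_insert.1 hb with rfl | hb
          · exact absurd rfl hab
          · exact (Finset.mem_filter.1 (hSA hb)).2
        · rcases Finset.mem_insert.1 hb with rfl | hb
          · exact hsym _ _ _ (Finset.mem_filter.1 (hSA haS)).2
          · exact hS a haS b hb hab
    · refine ⟨j, S, fun x hx => ?_, by simpa [hj] using hc, hS⟩
      exact Finset.mem_of_mem_erase (Finset.mem_filter.1 (hSA hx)).1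

theorem ramsey_nonempty (r s k : ℕ) (hsr : s < r) (hs : 1 ≤ s) :
    {n | HasSetColouringRamsey r s k n}.Nonempty := by
  obtain ⟨N, hN⟩ := ramsey_aux (r := r) (by omega) _ (fun _ => k) rfl
  refine ⟨N, fun χ hsym hχ => ?_⟩
  obtain ⟨i, S, -, hc, hS⟩ := hN (Fin N) (fun i u v => i ∈ χ u v)
    (fun i u v h => by rwa [hsym v u])
    (fun u v huv => by
      have : (χ u v).Nonempty := by rw [← Finset.card_pos, hχ u v huv]; omega
      exact this) Finset.univ (by simp)
  exact ⟨S, i, hc, hS⟩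

theorem ball_card (r d m : ℕ) (c : Fin r → Fin m) :
    (Finset.univ.filter (fun w : Fin r → Fin m =>
      d ≤ (Finset.univ.filter (fun i => w i = c i)).card)).card ≤ r.choose d * m ^ (r - d) := by
  classical
  have hsub : (Finset.univ.filter (fun w : Fin r → Fin m =>
      d ≤ (Finset.univ.filter (fun i => w i = c i)).card)) ⊆
      (Finset.powersetCard d (Finset.univ : Finset (Fin r))).biUnion (fun T =>
        Fintype.piFinset (fun i => if i ∈ T then {c i} else Finset.univ)) := by
    intro w hw
    obtain ⟨T, hT, hTc⟩ := Finset.exists_subset_card_eq (Finset.mem_filter.1 hw).2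
    refine Finset.mem_biUnion.2 ⟨T, by simp [Finset.mem_powersetCard, hTc], ?_⟩
    rw [Fintype.mem_piFinset]
    intro i
    split_ifs with h
    · simpa using hT h
    · simp
  refine (Finset.card_le_card hsub).trans ?_
  refine (Finset.card_biUnion_le_card_mul _ _ (m ^ (r - d)) ?_).trans ?_
  · intro T hT
    have hT := (Finset.mem_powersetCard.1 hT).2
    rw [Fintype.card_piFinset]
    have : ∀ i, (if i ∈ T then {c i} else (Finset.univ : Finset (Fin m))).card
        = if i ∈ T then 1 else m := by
      intro i; split_ifs <;> simp
    simp only [this]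
    rw [Finset.prod_ite]
    simp only [Finset.prod_const, one_pow, one_mul]
    have h2 : (Finset.univ.filter (fun i => i ∉ T)) = Tᶜ := by ext; simp
    rw [h2, Finset.card_compl, hT, Fintype.card_fin]
  · simp

theorem code_exists (r d m n : ℕ) (hm : 0 < m) (hd : d ≤ r)
    (h : n * (r.choose d * m ^ (r - d)) ≤ m ^ r) :
    ∃ f : Fin n → Fin r → Fin m, ∀ u v, u ≠ v →
      (Finset.univ.filter (fun i => f u i = f v i)).card < d := by
  induction n with
  | zero => exact ⟨fun u => u.elim0, fun u => u.elim0⟩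
  | succ n ih =>
    have hpos : 0 < r.choose d * m ^ (r - d) :=
      Nat.mul_pos (Nat.choose_pos hd) (pow_pos hm _)
    rw [add_mul, one_mul] at h
    obtain ⟨f, hf⟩ := ih (by omega)
    have : ∃ w : Fin r → Fin m, ∀ u, (Finset.univ.filter (fun i => w i = f u i)).card < d := by
      by_contra hcon
      push Not at hcon
      have hsub : (Finset.univ : Finset (Fin r → Fin m)) ⊆ (Finset.univ : Finset (Fin n)).biUnion
          (fun u => Finset.univ.filter (fun w : Fin r → Fin m =>
            d ≤ (Finset.univ.filter (fun i => w i = f u i)).card)) := by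
        intro w _
        obtain ⟨u, hu⟩ := hcon w
        exact Finset.mem_biUnion.2 ⟨u, by simp, by simpa using hu⟩
      have h1 := (Finset.card_le_card hsub).trans
        (Finset.card_biUnion_le_card_mul _ _ _ (fun u _ => ball_card r d m (f u)))
      simp at h1
      omega
    obtain ⟨w, hw⟩ := this
    refine ⟨Fin.cons w f, fun u v => ?_⟩
    refine Fin.cases ?_ (fun u => ?_) u <;> refine Fin.cases ?_ (fun v => ?_) v
    · intro h; exact absurd rfl h
    · intro _; simpa using hw v
    · intro _; simpa [eq_comm] using hw u
    · intro h
      simpa using hf u v (fun e => h (by rw [e]))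

theorem not_ramsey (r s k n : ℕ) (hsr : s < r) (hk : 2 ≤ k)
    (h : n * (r.choose (r - s) * (k - 1) ^ (r - (r - s))) ≤ (k - 1) ^ r) :
    ¬ HasSetColouringRamsey r s k n := by
  classical
  obtain ⟨f, hf⟩ := code_exists r (r - s) (k - 1) n (by omega) (by omega) h
  have hg : ∀ A : Finset (Fin r), ∃ B ⊆ A, s ≤ A.card → B.card = s := by
    intro A
    by_cases hA : s ≤ A.card
    · obtain ⟨B, hB, hc⟩ := Finset.exists_subset_card_eq hA
      exact ⟨B, hB, fun _ => hc⟩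
    · exact ⟨∅, by simp, fun h => absurd h hA⟩
  choose g hg1 hg2 using hg
  intro H
  obtain ⟨S, i, hc, hS⟩ := H (fun u v => g (Finset.univ.filter (fun i => f u i ≠ f v i)))
    (fun u v => by simp only [ne_comm]) (fun u v huv => by
      apply hg2
      have h1 := hf u v huv
      have h2 := Finset.card_filter_add_card_filter_not (s := (Finset.univ : Finset (Fin r)))
        (fun i => f u i = f v i)
      simp only [Finset.card_univ, Fintype.card_fin] at h2
      simp only [ne_eq]
      omega)
  have hinj : Set.InjOn (fun u => f u i) (S : Set (Fin n)) := by
    intro u hu v hv huv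
    by_contra hne
    have := hg1 _ (hS u hu v hv hne)
    exact (Finset.mem_filter.1 this).2 huv
  have := Finset.card_le_card_of_injOn (t := Finset.univ) (fun u => f u i) (by simp) hinj
  simp at this
  omega

theorem choose_bound (r d : ℕ) (hd : 0 < d) :
    (r.choose d : ℝ) * ((d : ℝ) / (r * Real.exp 1)) ^ d ≤ 1 := by
  rcases Nat.eq_zero_or_pos r with rfl | hr
  · simp [hd.ne']
  have h1 := Nat.choose_le_pow_div (α := ℝ) d r
  have h2 := Real.pow_div_factorial_le_exp (d : ℝ) (by positivity) d
  have h3 : Real.exp d = Real.exp 1 ^ d := by rw [← Real.exp_nat_mul]; simp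
  have hr' : (0 : ℝ) < r := by exact_mod_cast hr
  calc (r.choose d : ℝ) * ((d : ℝ) / (r * Real.exp 1)) ^ d
      ≤ ((r : ℝ) ^ d / d.factorial) * ((d : ℝ) / (r * Real.exp 1)) ^ d := by gcongr
    _ = ((d : ℝ) ^ d / d.factorial) / Real.exp 1 ^ d := by
        rw [div_pow, mul_pow]; field_simp
    _ ≤ 1 := by
        rw [div_le_one (by positivity), ← h3]; exact h2

theorem setRamsey_simple_lower_bound (r s k : ℕ) (hsr : s < r) (hs : 1 ≤ s)
    (hk : 2 ≤ k) :
    (setRamsey r s k : ℝ) ≥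
      ((((r : ℝ) - s) / r) * ((k : ℝ) - 1) / Real.exp 1) ^
        ((((r : ℝ) - s) / r) * r / 2) := by
  rw [ge_iff_le]
  have hmem : HasSetColouringRamsey r s k (setRamsey r s k) :=
    Nat.sInf_mem (ramsey_nonempty r s k hsr hs)
  set n := setRamsey r s k with hn
  have hr0 : (0 : ℝ) < r := by exact_mod_cast (by omega : 0 < r)
  obtain ⟨d, hd⟩ : ∃ d, d = r - s := ⟨_, rfl⟩
  have hd0 : 0 < d := by omega
  have hdr : (r : ℝ) - s = d := by rw [hd, Nat.cast_sub hsr.le]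
  have hm : (k : ℝ) - 1 = ((k - 1 : ℕ) : ℝ) := by rw [Nat.cast_sub (by omega)]; simp
  rw [hdr, hm]
  obtain ⟨m, hmk⟩ : ∃ m, m = k - 1 := ⟨_, rfl⟩
  rw [← hmk]
  have hB0 : 0 ≤ (d : ℝ) / r * m / Real.exp 1 := by positivity
  have hexp : (d : ℝ) / r * r / 2 = d / 2 := by field_simp
  rw [hexp]
  by_cases hB : (d : ℝ) / r * m / Real.exp 1 ≤ 1
  · refine (Real.rpow_le_one hB0 hB (by positivity)).trans ?_
    have : 1 ≤ n := by
      rcases Nat.eq_zero_or_pos n with h0 | h0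
      · rw [h0] at hmem
        obtain ⟨S, i, hc, -⟩ := hmem (fun _ _ => ∅) (fun _ _ => rfl) (fun u => u.elim0)
        have := Finset.card_le_univ S
        simp at this
        simp [this] at hc
        omega
      · exact h0
    exact_mod_cast this
  · push Not at hB
    by_contra hcon
    push Not at hcon
    refine not_ramsey r s k n hsr hk ?_ hmem
    have h1 : (n : ℝ) ≤ ((d : ℝ) / r * m / Real.exp 1) ^ d := by
      rw [← Real.rpow_natCast]
      refine hcon.le.trans (Real.rpow_le_rpow_of_exponent_le hB.le ?_)
      have : (0 : ℝ) ≤ d := by positivity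
      linarith
    have h2 := choose_bound r d hd0
    have h3 : (n : ℝ) * r.choose d ≤ (m : ℝ) ^ d := by
      calc (n : ℝ) * r.choose d ≤ ((d : ℝ) / r * m / Real.exp 1) ^ d * r.choose d := by gcongr
        _ = (r.choose d * ((d : ℝ) / (r * Real.exp 1)) ^ d) * (m : ℝ) ^ d := by
            rw [show (d : ℝ) / r * m / Real.exp 1 = (d : ℝ) / (r * Real.exp 1) * m by
              field_simp, mul_pow]
            ring
        _ ≤ 1 * (m : ℝ) ^ d := by gcongr
        _ = _ := one_mul _
    have h4 : n * r.choose d ≤ m ^ d := by exact_mod_cast h3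
    rw [← hd, ← hmk, ← mul_assoc]
    calc n * r.choose d * m ^ (r - d) ≤ m ^ d * m ^ (r - d) := Nat.mul_le_mul_right _ h4
      _ = m ^ r := by rw [← pow_add]; congr 1; omega
end
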